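/- arXiv:math/0603636 — 4 statements merged into one kernel-verified Lean document; each statement's English description precedes it below -/
import Mathlib

section
/- Let α ∈ (0,1) and 0 < s < t < r. Then α ∫_t^r (r-u)^{α-1} u^{-α} (u-s)^{-α-1} du ≤ t^{-α} (t-s)^{-α} (r-s)^{-1} (r-t)^{α}. -/
open MeasureTheory Real Set

/-!
The substitution `x = (r - u) / (u - s)` turns `(r - u) ^ (α - 1) * (u - s) ^ (-α - 1) du` into
`-x ^ (α - 1) / (r - s) dx`, so this part of the kernel has an explicit primitive and its integral
is known exactly. The remaining factor is decreasing in `u`, hence at most its value at `t`.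
-/

section PowerKernel

variable {α s t r u : ℝ}

/-- For `α ≠ 0`, the primitive of `u ↦ (r - u) ^ (α - 1) * (u - s) ^ (-α - 1)` on `(s, r)` given by
the substitution `x = (r - u) / (u - s)`, with the constant chosen to make it vanish at `r`. -/
noncomputable def kernelPrimitive (α s r u : ℝ) : ℝ :=
  -((r - u) / (u - s)) ^ α / (α * (r - s))

lemma hasDerivAt_sub_div_sub (r : ℝ) (hu : u - s ≠ 0) :
    HasDerivAt (fun x ↦ (r - x) / (x - s)) (-(r - s) / (u - s) ^ 2) u := by
  refine (((hasDerivAt_id' u).const_sub r).div ((hasDerivAt_id' u).sub_const s) hu).congr_deriv ?_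
  ring

lemma hasDerivAt_kernelPrimitive (hα : α ≠ 0) (hsu : s < u) (hur : u < r) :
    HasDerivAt (kernelPrimitive α s r) ((r - u) ^ (α - 1) * (u - s) ^ (-α - 1)) u := by
  have hsu' : 0 < u - s := sub_pos.2 hsu
  have hur' : 0 < r - u := sub_pos.2 hur
  have hrs : r - s ≠ 0 := (sub_pos.2 (hsu.trans hur)).ne'
  have hderiv := (((hasDerivAt_sub_div_sub r hsu'.ne').rpow_const (p := α)
    (Or.inl (div_pos hur' hsu').ne')).neg).div_const (α * (r - s))
  refine hderiv.congr_deriv ?_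
  have hpow : (u - s) ^ (-α - 1) = ((u - s) ^ (α - 1))⁻¹ / (u - s) ^ 2 := by
    rw [← rpow_neg hsu'.le, ← rpow_sub_natCast hsu'.ne']
    congr 1
    push_cast
    ring
  rw [div_rpow hur'.le hsu'.le, hpow]
  field_simp

lemma continuousOn_kernelPrimitive (r : ℝ) (hα : 0 ≤ α) :
    ContinuousOn (kernelPrimitive α s r) (Ioi s) := by
  have hratio : ContinuousOn (fun x ↦ (r - x) / (x - s)) (Ioi s) := fun x hx ↦
    (hasDerivAt_sub_div_sub r (sub_pos.2 hx).ne').continuousAt.continuousWithinAt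
  exact (hratio.rpow_const fun _ _ ↦ Or.inr hα).neg.div_const _

lemma kernelPrimitive_right (hα : α ≠ 0) : kernelPrimitive α s r r = 0 := by
  simp [kernelPrimitive, zero_rpow hα]

lemma sub_rpow_mul_sub_rpow_nonneg (a b : ℝ) (hsu : s ≤ u) (hur : u ≤ r) :
    0 ≤ (r - u) ^ a * (u - s) ^ b :=
  mul_nonneg (rpow_nonneg (sub_nonneg.2 hur) a) (rpow_nonneg (sub_nonneg.2 hsu) b)

lemma integrableOn_sub_rpow_mul_sub_rpow (hα : 0 < α) (hst : s < t) :
    IntegrableOn (fun u ↦ (r - u) ^ (α - 1) * (u - s) ^ (-α - 1)) (Ioc t r) :=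
  intervalIntegral.integrableOn_deriv_of_nonneg
    ((continuousOn_kernelPrimitive r hα.le).mono fun _ hu ↦ hst.trans_le hu.1)
    (fun _ hu ↦ hasDerivAt_kernelPrimitive hα.ne' (hst.trans hu.1) hu.2)
    (fun _ hu ↦ sub_rpow_mul_sub_rpow_nonneg _ _ (hst.trans hu.1).le hu.2.le)

lemma integral_sub_rpow_mul_sub_rpow (hα : 0 < α) (hst : s < t) (htr : t ≤ r) :
    ∫ u in t..r, (r - u) ^ (α - 1) * (u - s) ^ (-α - 1) =
      ((r - t) / (t - s)) ^ α / (α * (r - s)) := by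
  rw [intervalIntegral.integral_eq_sub_of_hasDerivAt_of_le htr
    ((continuousOn_kernelPrimitive r hα.le).mono fun _ hu ↦ hst.trans_le hu.1)
    (fun _ hu ↦ hasDerivAt_kernelPrimitive hα.ne' (hst.trans hu.1) hu.2)
    ((intervalIntegrable_iff_integrableOn_Ioc_of_le htr).2
      (integrableOn_sub_rpow_mul_sub_rpow hα hst)),
    kernelPrimitive_right hα.ne', kernelPrimitive, zero_sub, neg_div, neg_neg]

end PowerKernel

lemma setIntegral_mul_le_const_mul {X : Type*} [MeasurableSpace X] {μ : Measure X} {S : Set X}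
    {f g : X → ℝ} {C : ℝ} (hS : MeasurableSet S) (hf : ∀ x ∈ S, f x ∈ Icc 0 C)
    (hg : ∀ x ∈ S, 0 ≤ g x) (hgi : IntegrableOn g S μ) :
    ∫ x in S, f x * g x ∂μ ≤ C * ∫ x in S, g x ∂μ := by
  rw [← integral_const_mul]
  refine integral_mono_of_nonneg ?_ (hgi.const_mul C) ?_
  · filter_upwards [ae_restrict_mem hS] with x hx using mul_nonneg (hf x hx).1 (hg x hx)
  · filter_upwards [ae_restrict_mem hS] with x hx
      using mul_le_mul_of_nonneg_right (hf x hx).2 (hg x hx)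

theorem integral_kernel_bound_general {α β s t r : ℝ} (hα : 0 < α) (hβ : 0 ≤ β) (ht : 0 < t)
    (hst : s < t) (htr : t ≤ r) :
    α * ∫ u in Ioo t r, (r - u) ^ (α - 1) * u ^ (-β) * (u - s) ^ (-α - 1) ≤
      t ^ (-β) * (t - s) ^ (-α) * (r - s)⁻¹ * (r - t) ^ α := by
  have hweight : ∀ u ∈ Ioo t r, u ^ (-β) ∈ Icc 0 (t ^ (-β)) := fun u hu ↦
    ⟨rpow_nonneg (ht.trans hu.1).le _,
      rpow_le_rpow_of_nonpos ht hu.1.le (neg_nonpos.2 hβ)⟩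
  calc α * ∫ u in Ioo t r, (r - u) ^ (α - 1) * u ^ (-β) * (u - s) ^ (-α - 1)
      = α * ∫ u in Ioo t r, u ^ (-β) * ((r - u) ^ (α - 1) * (u - s) ^ (-α - 1)) := by
        simp only [mul_assoc, mul_left_comm]
    _ ≤ α * (t ^ (-β) * ∫ u in Ioo t r, (r - u) ^ (α - 1) * (u - s) ^ (-α - 1)) := by
        gcongr
        exact setIntegral_mul_le_const_mul measurableSet_Ioo hweight
          (fun u hu ↦ sub_rpow_mul_sub_rpow_nonneg _ _ (hst.trans hu.1).le hu.2.le)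
          ((integrableOn_sub_rpow_mul_sub_rpow hα hst).mono_set Ioo_subset_Ioc_self)
    _ = α * (t ^ (-β) * (((r - t) / (t - s)) ^ α / (α * (r - s)))) := by
        rw [← integral_Ioc_eq_integral_Ioo, ← intervalIntegral.integral_of_le htr,
          integral_sub_rpow_mul_sub_rpow hα hst htr]
    _ = t ^ (-β) * (t - s) ^ (-α) * (r - s)⁻¹ * (r - t) ^ α := by
        rw [div_rpow (sub_nonneg.2 htr) (sub_pos.2 hst).le, rpow_neg (sub_pos.2 hst).le]
        field_simp

/-- Lemma 2.2: for `α ∈ (0,1)` and `0 < s < t < r`,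
`α ∫_t^r (r-u)^(α-1) u^(-α) (u-s)^(-α-1) du ≤ t^(-α) (t-s)^(-α) (r-s)⁻¹ (r-t)^α`. -/
theorem integral_kernel_bound (α s t r : ℝ) (hα : α ∈ Set.Ioo (0 : ℝ) 1)
    (hs : 0 < s) (hst : s < t) (htr : t < r) :
    α * ∫ u in Set.Ioo t r, (r - u) ^ (α - 1) * u ^ (-α) * (u - s) ^ (-α - 1) ≤
      t ^ (-α) * (t - s) ^ (-α) * (r - s)⁻¹ * (r - t) ^ α :=
  integral_kernel_bound_general hα.1 hα.1.le (hs.trans hst) hst htr.le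
end

section
/- Let α ∈ (0,1/2), p ∈ (2, 1/α), and let f ∈ Λ^α_T with representative φ_f ∈ L^p([0,T]). Then for each t ∈ [0,T] the function f·1_{[0,t]} also belongs to Λ^α_T, and its (unique) representative is given for almost every s ∈ [0,T] by φ_{f1_{[0,t]}}(s) = 1_{[0,t]}(s)·[φ_f(s) + (α s^α / Γ(1-α)) ∫_t^T u^{-α} f(u) (u-s)^{-1-α} du]; in particular the function on the right-hand side belongs to L²([0,T]). -/
open MeasureTheory Real Set

/-- The right-sided fractional integral of order `α` on `[0,T]`:
`I^α_{T-}(f)(x) = (1/Γ(α)) ∫_x^T f(u) (u-x)^(α-1) du`. -/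
noncomputable def fracInt (T α : ℝ) (f : ℝ → ℝ) (x : ℝ) : ℝ :=
  (1 / Real.Gamma α) * ∫ u in Set.Ioo x T, f u * (u - x) ^ (α - 1)

/-- `f ∈ Λ^α_T` with representative `φ`: `φ ∈ L²([0,T])` and
`f(u) = u^α · I^α_{T-}(s ↦ s^(-α) φ(s))(u)` for a.e. `u ∈ [0,T]`. -/
def memLambda (T α : ℝ) (f φ : ℝ → ℝ) : Prop :=
  MemLp φ 2 (volume.restrict (Set.Icc 0 T)) ∧
  ∀ᵐ u ∂(volume.restrict (Set.Icc 0 T)),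
    f u = u ^ α * fracInt T α (fun s => s ^ (-α) * φ s) u

/-!
Writing `f = u ^ α * I^α g` with `g = s ^ (-α) * φ`, truncating `f` at `t` amounts to replacing the
part of `g` living on `(t, T)` by a density on `(-∞, t)` with the same fractional integral at every
point of `(-∞, t)`. This is a sweeping-out (balayage) problem; a Möbius change of variables turns
the integrals involved into Beta integrals, so the swept density is explicit:
`∫_t^T g(v) (v - t)^α (t - s)^(-α) (v - s)^(-1) dv / (Γ(α) Γ(1 - α))`.
By Fubini's theorem and one more Beta integral, it is also
`α / Γ(1 - α) * ∫_t^T (I^α g)(u) (u - s)^(-1-α) du`.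

The sweeping kernel is homogeneous of degree `-1` in the distances of `s` and `v` to `t`, so Schur's
test with the weight `|· - t| ^ (-1/p)` bounds it on `L^p` whenever `α * p < 1`. For `α < 1/2` this
includes `p = 2`, and the weight `(s / v) ^ α ≤ 1` only helps.
-/

open ProbabilityTheory (beta beta_eq_betaIntegralReal)

section BetaIntegrals

variable {a b c d w s : ℝ}

theorem integral_rpow_mul_one_sub_rpow (ha : 0 < a) (hb : 0 < b) :
    ∫ r in Ioo (0 : ℝ) 1, r ^ (a - 1) * (1 - r) ^ (b - 1) = beta a b := by
  have ofReal_integrand : ∀ r ∈ Ioo (0 : ℝ) 1,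
      (r : ℂ) ^ ((a : ℂ) - 1) * (1 - (r : ℂ)) ^ ((b : ℂ) - 1)
        = ((r ^ (a - 1) * (1 - r) ^ (b - 1) : ℝ) : ℂ) := by
    intro r hr
    rw [Complex.ofReal_mul, Complex.ofReal_cpow hr.1.le, Complex.ofReal_cpow (sub_nonneg.2 hr.2.le)]
    push_cast
    rfl
  rw [beta_eq_betaIntegralReal a b ha hb, Complex.betaIntegral,
    intervalIntegral.integral_of_le zero_le_one, integral_Ioc_eq_integral_Ioo,
    setIntegral_congr_fun measurableSet_Ioo ofReal_integrand, integral_complex_ofReal,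
    Complex.ofReal_re]

/-- The cross-ratio of `c`, `d`, `w`, `s`, normalised so that, as a function of `s`, it is the
Möbius map sending `c`, `d`, `w` to `0`, `1`, `∞`. It is used to move Beta integrals from `(0, 1)`
to `(c, d)`. -/
noncomputable def crossRatio (c d w s : ℝ) : ℝ :=
  (w - d) * (s - c) / ((d - c) * (w - s))

theorem one_sub_crossRatio (hcd : c ≠ d) (hsw : s ≠ w) :
    1 - crossRatio c d w s = (w - c) * (d - s) / ((d - c) * (w - s)) := by
  have hdc : d - c ≠ 0 := sub_ne_zero.2 hcd.symm
  have hws : w - s ≠ 0 := sub_ne_zero.2 hsw.symm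
  rw [crossRatio]
  field_simp
  ring

theorem hasDerivAt_crossRatio (hsw : s ≠ w) :
    HasDerivAt (crossRatio c d w) ((w - d) * (w - c) / ((d - c) * (w - s) ^ 2)) s := by
  have hws : w - s ≠ 0 := sub_ne_zero.2 hsw.symm
  have h := ((((hasDerivAt_id s).sub_const c).div ((hasDerivAt_id s).const_sub w) hws).const_mul
    ((w - d) / (d - c)))
  refine (h.congr_deriv ?_).congr_of_eventuallyEq (.of_forall fun x => ?_)
  · simp only [id]
    field_simp
    ring
  · simp only [crossRatio, Pi.div_apply, id]
    exact mul_div_mul_comm _ _ _ _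

theorem bijOn_crossRatio (hcd : c < d) (hdw : d < w) :
    BijOn (crossRatio c d w) (Ioo c d) (Ioo 0 1) := by
  have hdc : 0 < d - c := sub_pos.2 hcd
  have hwd : 0 < w - d := sub_pos.2 hdw
  have hwc : 0 < w - c := sub_pos.2 (hcd.trans hdw)
  refine InvOn.bijOn (f' := fun y => ((w - d) * c + y * (d - c) * w) / ((w - d) + y * (d - c)))
    ⟨fun s hs => ?_, fun y hy => ?_⟩ (fun s hs => ?_) (fun y hy => ?_)
  · have hws : 0 < w - s := by linarith [hs.2]
    have denom : (w - d) + crossRatio c d w s * (d - c) = (w - d) * (w - c) / (w - s) := by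
      rw [crossRatio]
      field_simp
      ring
    simp only [denom]
    rw [crossRatio]
    field_simp
    ring
  · have hy0 := hy.1
    have sub_inv : w - ((w - d) * c + y * (d - c) * w) / ((w - d) + y * (d - c))
        = (w - c) * (w - d) / ((w - d) + y * (d - c)) := by
      field_simp
      ring
    rw [crossRatio, sub_inv]
    field_simp
    ring
  · have hsc : 0 < s - c := sub_pos.2 hs.1
    have hds : 0 < d - s := sub_pos.2 hs.2
    have hws : 0 < w - s := by linarith
    refine ⟨by rw [crossRatio]; positivity, sub_pos.1 ?_⟩
    rw [one_sub_crossRatio hcd.ne (hs.2.trans hdw).ne]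
    positivity
  · have hy0 := hy.1
    have denom : 0 < (w - d) + y * (d - c) := by positivity
    have h1y : 0 < 1 - y := sub_pos.2 hy.2
    constructor
    · rw [lt_div_iff₀ denom]
      linarith [show 0 < y * (d - c) * (w - c) by positivity]
    · rw [div_lt_iff₀ denom]
      linarith [show 0 < (1 - y) * (d - c) * (w - d) by positivity]

theorem integral_rpow_mul_rpow_div_rpow_right (ha : 0 < a) (hb : 0 < b) (hcd : c < d)
    (hdw : d < w) :
    ∫ s in Ioo c d, (s - c) ^ (a - 1) * (d - s) ^ (b - 1) / (w - s) ^ (a + b)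
      = beta a b * (d - c) ^ (a + b - 1) / ((w - d) ^ a * (w - c) ^ b) := by
  have hdc : 0 < d - c := sub_pos.2 hcd
  have hwd : 0 < w - d := sub_pos.2 hdw
  have hwc : 0 < w - c := sub_pos.2 (hcd.trans hdw)
  have change_of_variables := integral_image_eq_integral_abs_deriv_smul measurableSet_Ioo
    (fun s hs => (hasDerivAt_crossRatio (c := c) (d := d)
      (hs.2.trans hdw).ne).hasDerivWithinAt) (bijOn_crossRatio hcd hdw).injOn
    (fun r => r ^ (a - 1) * (1 - r) ^ (b - 1))
  rw [(bijOn_crossRatio hcd hdw).image_eq, integral_rpow_mul_one_sub_rpow ha hb]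
    at change_of_variables
  rw [change_of_variables, mul_div_assoc, ← integral_mul_const]
  refine setIntegral_congr_fun measurableSet_Ioo fun s hs => ?_
  have hsc : 0 < s - c := sub_pos.2 hs.1
  have hds : 0 < d - s := sub_pos.2 hs.2
  have hws : 0 < w - s := by linarith
  simp only [smul_eq_mul]
  rw [abs_of_pos (by positivity), one_sub_crossRatio hcd.ne (hs.2.trans hdw).ne, crossRatio]
  simp only [div_rpow, mul_rpow, mul_nonneg, hdc.le, hwd.le, hwc.le, hsc.le, hds.le, hws.le,
    rpow_sub_one, rpow_add, hdc, hdc.ne', hwd.ne', hwc.ne', hsc.ne', hds.ne', hws, hws.ne', ne_eq,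
    not_false_eq_true]
  field_simp

theorem integral_rpow_mul_rpow_div_rpow_left (ha : 0 < a) (hb : 0 < b) (hwc : w < c)
    (hcd : c < d) :
    ∫ s in Ioo c d, (s - c) ^ (a - 1) * (d - s) ^ (b - 1) / (s - w) ^ (a + b)
      = beta a b * (d - c) ^ (a + b - 1) / ((d - w) ^ a * (c - w) ^ b) := by
  have reflect := intervalIntegral.integral_comp_sub_left (a := c) (b := d)
    (fun s => (s - c) ^ (b - 1) * (d - s) ^ (a - 1) / ((c + d - w) - s) ^ (b + a)) (c + d)
  rw [add_sub_cancel_right, add_sub_cancel_left, intervalIntegral.integral_of_le hcd.le,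
    intervalIntegral.integral_of_le hcd.le, integral_Ioc_eq_integral_Ioo,
    integral_Ioc_eq_integral_Ioo,
    integral_rpow_mul_rpow_div_rpow_right hb ha hcd (by linarith)] at reflect
  convert reflect using 1
  · refine setIntegral_congr_fun measurableSet_Ioo fun s _ => ?_
    ring_nf
  · simp only [beta]
    ring_nf

end BetaIntegrals

section FractionalIntegral

variable {T α a : ℝ} {g : ℝ → ℝ}

theorem integrable_prod_mul_of_nonneg {X Y : Type*} [MeasurableSpace X] [MeasurableSpace Y]
    {μ : Measure X} {ν : Measure Y} [SFinite μ] [SFinite ν] {g : Y → ℝ} {k : X → Y → ℝ}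
    (hg : AEStronglyMeasurable g ν) (hk : AEStronglyMeasurable (Function.uncurry k) (μ.prod ν))
    (hk_nonneg : ∀ᵐ y ∂ν, ∀ᵐ x ∂μ, 0 ≤ k x y) (hk_int : ∀ᵐ y ∂ν, Integrable (fun x => k x y) μ)
    (hgk : Integrable (fun y => g y * ∫ x, k x y ∂μ) ν) :
    Integrable (fun z : X × Y => g z.2 * k z.1 z.2) (μ.prod ν) := by
  refine (integrable_prod_iff' (hg.comp_snd.mul hk)).2 ⟨?_, hgk.norm.congr ?_⟩
  · filter_upwards [hk_int] with y hy using hy.const_mul (g y)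
  · filter_upwards [hk_nonneg] with y hy
    simp only [Pi.mul_apply, Function.uncurry_apply_pair, norm_mul]
    rw [integral_const_mul, Real.norm_of_nonneg (integral_nonneg_of_ae hy)]
    refine congrArg _ (integral_congr_ae ?_)
    filter_upwards [hy] with x hx using (Real.norm_of_nonneg hx).symm

/-- The kernel `(v - u)₊ ^ (α - 1)` of `Γ(α) I^α_{T-}`, extended by zero to the whole plane so that
Fubini's theorem applies on a square. -/
noncomputable def fracKernel (α u v : ℝ) : ℝ :=
  if u < v then (v - u) ^ (α - 1) else 0

theorem fracKernel_nonneg (α u v : ℝ) : 0 ≤ fracKernel α u v := by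
  unfold fracKernel
  split_ifs with huv
  · exact rpow_nonneg (sub_nonneg.2 huv.le) _
  · exact le_rfl

theorem measurable_fracKernel (α : ℝ) : Measurable (Function.uncurry (fracKernel α)) :=
  Measurable.ite (measurableSet_lt measurable_fst measurable_snd) (by fun_prop) measurable_const

theorem mul_fracKernel_eq_indicator (α u : ℝ) (g : ℝ → ℝ) :
    (fun v => g v * fracKernel α u v) = (Ioi u).indicator fun v => g v * (v - u) ^ (α - 1) := by
  ext v
  simp only [fracKernel, indicator_apply, mem_Ioi, mul_ite, mul_zero]

theorem integral_mul_fracKernel {u : ℝ} (hau : a ≤ u) :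
    ∫ v in Ioo a T, g v * fracKernel α u v = ∫ v in Ioo u T, g v * (v - u) ^ (α - 1) := by
  rw [mul_fracKernel_eq_indicator, setIntegral_indicator measurableSet_Ioi, inter_comm,
    Ioi_inter_Ioo, max_eq_left hau]

theorem integral_fracKernel_mul {v : ℝ} (hvT : v ≤ T) (w : ℝ → ℝ) :
    ∫ u in Ioo a T, fracKernel α u v * w u = ∫ u in Ioo a v, (v - u) ^ (α - 1) * w u := by
  have fracKernel_mul : (fun u => fracKernel α u v * w u)
      = (Iio v).indicator fun u => (v - u) ^ (α - 1) * w u := by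
    ext u
    simp only [fracKernel, indicator_apply, mem_Iio, ite_mul, zero_mul]
  rw [fracKernel_mul, setIntegral_indicator measurableSet_Iio, Ioo_inter_Iio, min_eq_right hvT]

theorem integral_fracKernel (hα : 0 < α) {v : ℝ} (hav : a ≤ v) (hvT : v ≤ T) :
    ∫ u in Ioo a T, fracKernel α u v = (v - a) ^ α / α := by
  have h := integral_fracKernel_mul (α := α) (a := a) hvT fun _ => 1
  simp only [mul_one] at h
  rw [h, ← integral_Ioc_eq_integral_Ioo, ← intervalIntegral.integral_of_le hav,
    intervalIntegral.integral_comp_sub_left (fun u => u ^ (α - 1)),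
    integral_rpow (Or.inl (by linarith)), sub_self, sub_add_cancel, zero_rpow hα.ne', sub_zero]

theorem integrable_mul_fracKernel (hα : 0 < α) (hg : IntegrableOn g (Ioo a T)) :
    Integrable (fun z : ℝ × ℝ => g z.2 * fracKernel α z.1 z.2)
      ((volume.restrict (Ioo a T)).prod (volume.restrict (Ioo a T))) := by
  have integral_eq : ∀ v ∈ Ioo a T, ∫ u in Ioo a T, fracKernel α u v = (v - a) ^ α / α :=
    fun v hv => integral_fracKernel hα hv.1.le hv.2.le
  refine integrable_prod_mul_of_nonneg hg.aestronglyMeasurable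
    (measurable_fracKernel α).aestronglyMeasurable
    (.of_forall fun v => .of_forall fun u => fracKernel_nonneg α u v) ?_ ?_
  · filter_upwards [ae_restrict_mem measurableSet_Ioo] with v hv
    refine .of_integral_ne_zero ?_
    rw [integral_eq v hv]
    exact (div_pos (rpow_pos_of_pos (sub_pos.2 hv.1) α) hα).ne'
  · refine IntegrableOn.congr_fun ?_ (fun v hv => by rw [integral_eq v hv]) measurableSet_Ioo
    refine hg.mul_bdd (c := (T - a) ^ α / α) (Measurable.aestronglyMeasurable (by fun_prop)) ?_
    filter_upwards [ae_restrict_mem measurableSet_Ioo] with v hv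
    have hva : 0 ≤ v - a := sub_nonneg.2 hv.1.le
    rw [Real.norm_of_nonneg (by positivity)]
    gcongr
    exact hv.2.le

theorem ae_integrableOn_mul_rpow_sub (hα : 0 < α) (hg : IntegrableOn g (Ioo a T)) :
    ∀ᵐ u ∂volume.restrict (Ioo a T), IntegrableOn (fun v => g v * (v - u) ^ (α - 1)) (Ioo u T) := by
  filter_upwards [(integrable_mul_fracKernel hα hg).prod_right_ae,
    ae_restrict_mem measurableSet_Ioo] with u hu hau
  rw [mul_fracKernel_eq_indicator, integrable_indicator_iff measurableSet_Ioi] at hu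
  rwa [IntegrableOn, Measure.restrict_restrict measurableSet_Ioi, Ioi_inter_Ioo,
    max_eq_left hau.1.le] at hu

theorem integral_fracInt_mul (hα : 0 < α) (hg : IntegrableOn g (Ioo a T)) {w : ℝ → ℝ} {C : ℝ}
    (hw : AEStronglyMeasurable w (volume.restrict (Ioo a T)))
    (hwC : ∀ᵐ u ∂volume.restrict (Ioo a T), ‖w u‖ ≤ C) :
    ∫ u in Ioo a T, fracInt T α g u * w u
      = (1 / Gamma α) * ∫ v in Ioo a T, g v * ∫ u in Ioo a v, (v - u) ^ (α - 1) * w u := by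
  have integrable_prod : Integrable (fun z : ℝ × ℝ => g z.2 * fracKernel α z.1 z.2 * w z.1)
      ((volume.restrict (Ioo a T)).prod (volume.restrict (Ioo a T))) :=
    (integrable_mul_fracKernel hα hg).mul_bdd hw.comp_fst
      (Measure.quasiMeasurePreserving_fst.ae hwC)
  calc ∫ u in Ioo a T, fracInt T α g u * w u
      = (1 / Gamma α) *
          ∫ u in Ioo a T, ∫ v in Ioo a T, g v * fracKernel α u v * w u := by
        rw [← integral_const_mul]
        refine setIntegral_congr_fun measurableSet_Ioo fun u hu => ?_
        simp only [fracInt]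
        rw [integral_mul_const, integral_mul_fracKernel hu.1.le, mul_assoc]
    _ = (1 / Gamma α) *
          ∫ v in Ioo a T, ∫ u in Ioo a T, g v * fracKernel α u v * w u := by
        rw [integral_integral_swap integrable_prod]
    _ = (1 / Gamma α) * ∫ v in Ioo a T, g v * ∫ u in Ioo a v, (v - u) ^ (α - 1) * w u := by
        refine congrArg _ (setIntegral_congr_fun measurableSet_Ioo fun v hv => ?_)
        simp only [mul_assoc]
        rw [integral_const_mul, integral_fracKernel_mul hv.2.le]

theorem fracInt_of_le {x : ℝ} (hTx : T ≤ x) : fracInt T α g x = 0 := by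
  rw [fracInt, Ioo_eq_empty hTx.not_gt, setIntegral_empty, mul_zero]

theorem fracInt_indicator_Icc {t x : ℝ} (hax : a ≤ x) (htT : t ≤ T) :
    fracInt T α ((Icc a t).indicator g) x = fracInt t α g x := by
  have Ioo_inter_Icc : (Ioo x T ∩ Icc a t : Set ℝ) =ᵐ[volume] Ioo x t := by
    filter_upwards [Measure.ae_ne volume t] with u hut
    exact propext ⟨fun hu => ⟨hu.1.1, hu.2.2.lt_of_ne hut⟩,
      fun hu => ⟨⟨hu.1, hu.2.trans_le htT⟩, hax.trans hu.1.le, hu.2.le⟩⟩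
  have indicator_mul : (fun u => (Icc a t).indicator g u * (u - x) ^ (α - 1))
      = (Icc a t).indicator fun u => g u * (u - x) ^ (α - 1) :=
    funext fun _ => (indicator_mul_left (Icc a t) g fun u => (u - x) ^ (α - 1)).symm
  rw [fracInt, fracInt, indicator_mul, setIntegral_indicator measurableSet_Icc,
    setIntegral_congr_set Ioo_inter_Icc]

end FractionalIntegral

section Sweeping

variable {T α t : ℝ} {g : ℝ → ℝ}

/-- The density at `s < t` of the mass sent to `(-∞, t)` by sweeping out a unit mass at `v > t`,
for the potential theory of the kernel `(v - x)₊ ^ (α - 1)`: see `integral_sweepKernel_mul`. -/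
noncomputable def sweepKernel (α t s v : ℝ) : ℝ :=
  (v - t) ^ α * (t - s) ^ (-α) / (v - s) / (Gamma α * Gamma (1 - α))

theorem measurable_sweepKernel (α t : ℝ) : Measurable (Function.uncurry (sweepKernel α t)) := by
  unfold sweepKernel Function.uncurry
  fun_prop

theorem sweepKernel_pos (hα₀ : 0 < α) (hα₁ : α < 1) {s v : ℝ} (hst : s < t) (htv : t < v) :
    0 < sweepKernel α t s v := by
  exact div_pos (div_pos (mul_pos (rpow_pos_of_pos (sub_pos.2 htv) _)
    (rpow_pos_of_pos (sub_pos.2 hst) _)) (sub_pos.2 (hst.trans htv)))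
    (mul_pos (Gamma_pos_of_pos hα₀) (Gamma_pos_of_pos (sub_pos.2 hα₁)))

theorem integral_rpow_mul_rpow_eq_sweepKernel (hα₀ : 0 < α) (hα₁ : α < 1) {s v : ℝ} (hst : s < t)
    (htv : t < v) :
    ∫ u in Ioo t v, (v - u) ^ (α - 1) * (u - s) ^ (-1 - α)
      = Gamma α * Gamma (1 - α) / α * sweepKernel α t s v := by
  have hts : 0 < t - s := sub_pos.2 hst
  have := Gamma_pos_of_pos hα₀
  have := Gamma_pos_of_pos (sub_pos.2 hα₁)
  have beta_one_left : beta 1 α = 1 / α := by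
    rw [beta, Gamma_one, one_mul, add_comm, Gamma_add_one hα₀.ne']
    field_simp
  calc ∫ u in Ioo t v, (v - u) ^ (α - 1) * (u - s) ^ (-1 - α)
      = ∫ u in Ioo t v, (u - t) ^ ((1 : ℝ) - 1) * (v - u) ^ (α - 1) / (u - s) ^ (1 + α) := by
        refine setIntegral_congr_fun measurableSet_Ioo fun u hu => ?_
        rw [sub_self, rpow_zero, one_mul, ← neg_add', rpow_neg (by linarith [hu.1]),
          div_eq_mul_inv]
    _ = 1 / α * (v - t) ^ α / ((v - s) * (t - s) ^ α) := by
        rw [integral_rpow_mul_rpow_div_rpow_left one_pos hα₀ hst htv, beta_one_left, rpow_one,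
          add_sub_cancel_left]
    _ = Gamma α * Gamma (1 - α) / α * sweepKernel α t s v := by
        rw [sweepKernel, rpow_neg hts.le]
        field_simp

theorem integral_sweepKernel_mul (hα₀ : 0 < α) (hα₁ : α < 1) {x v : ℝ} (hxt : x < t)
    (htv : t < v) :
    ∫ s in Ioo x t, sweepKernel α t s v * (s - x) ^ (α - 1) = (v - x) ^ (α - 1) := by
  have hvt : 0 < v - t := sub_pos.2 htv
  have := Gamma_pos_of_pos hα₀
  have := Gamma_pos_of_pos (sub_pos.2 hα₁)
  calc ∫ s in Ioo x t, sweepKernel α t s v * (s - x) ^ (α - 1)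
      = (v - t) ^ α / (Gamma α * Gamma (1 - α)) *
          ∫ s in Ioo x t, (s - x) ^ (α - 1) * (t - s) ^ (1 - α - 1) / (v - s) ^ (α + (1 - α)) := by
        rw [← integral_const_mul]
        refine setIntegral_congr_fun measurableSet_Ioo fun s _ => ?_
        simp only [sweepKernel]
        rw [add_sub_cancel, rpow_one, sub_sub_cancel_left]
        ring
    _ = (v - x) ^ (α - 1) := by
        rw [integral_rpow_mul_rpow_div_rpow_right hα₀ (sub_pos.2 hα₁) hxt htv, beta,
          add_sub_cancel, Gamma_one, sub_self, rpow_zero, ← neg_sub 1 α,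
          rpow_neg (sub_nonneg.2 (hxt.trans htv).le)]
        field_simp

/-- The sweeping-out onto `(-∞, t)` of the measure with density `g` on `(t, T)`. -/
noncomputable def fracSweep (T α t : ℝ) (g : ℝ → ℝ) (s : ℝ) : ℝ :=
  ∫ v in Ioo t T, g v * sweepKernel α t s v

theorem integral_fracInt_mul_rpow_eq_fracSweep (hα₀ : 0 < α) (hα₁ : α < 1)
    (hg : IntegrableOn g (Ioo t T)) {s : ℝ} (hst : s < t) :
    α / Gamma (1 - α) * ∫ u in Ioo t T, fracInt T α g u * (u - s) ^ (-1 - α)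
      = fracSweep T α t g s := by
  have := Gamma_pos_of_pos hα₀
  have := Gamma_pos_of_pos (sub_pos.2 hα₁)
  have rpow_sub_le : ∀ᵐ u ∂volume.restrict (Ioo t T),
      ‖(u - s) ^ (-1 - α)‖ ≤ (t - s) ^ (-1 - α) := by
    filter_upwards [ae_restrict_mem measurableSet_Ioo] with u hu
    rw [Real.norm_of_nonneg (rpow_nonneg (by linarith [hu.1]) _)]
    exact rpow_le_rpow_of_nonpos (sub_pos.2 hst) (by linarith [hu.1]) (by linarith)
  rw [integral_fracInt_mul hα₀ hg (Measurable.aestronglyMeasurable (by fun_prop)) rpow_sub_le,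
    ← integral_const_mul, ← integral_const_mul]
  refine setIntegral_congr_fun measurableSet_Ioo fun v hv => ?_
  rw [integral_rpow_mul_rpow_eq_sweepKernel hα₀ hα₁ hst hv.1]
  field_simp

theorem integrableOn_mul_rpow_sub_of_lt (hα₁ : α < 1) (hg : IntegrableOn g (Ioo t T)) {x : ℝ}
    (hxt : x < t) : IntegrableOn (fun v => g v * (v - x) ^ (α - 1)) (Ioo t T) := by
  refine hg.mul_bdd (c := (t - x) ^ (α - 1)) (Measurable.aestronglyMeasurable (by fun_prop)) ?_
  filter_upwards [ae_restrict_mem measurableSet_Ioo] with v hv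
  rw [Real.norm_of_nonneg (rpow_nonneg (by linarith [hv.1]) _)]
  exact rpow_le_rpow_of_nonpos (sub_pos.2 hxt) (by linarith [hv.1]) (by linarith)

theorem integrable_mul_sweepKernel (hα₀ : 0 < α) (hα₁ : α < 1) (hg : IntegrableOn g (Ioo t T))
    {x : ℝ} (hxt : x < t) :
    Integrable (fun z : ℝ × ℝ => g z.2 * (sweepKernel α t z.1 z.2 * (z.1 - x) ^ (α - 1)))
      ((volume.restrict (Ioo x t)).prod (volume.restrict (Ioo t T))) := by
  refine integrable_prod_mul_of_nonneg (k := fun s v => sweepKernel α t s v * (s - x) ^ (α - 1))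
    hg.aestronglyMeasurable (Measurable.aestronglyMeasurable ?_) ?_ ?_ ?_
  · exact (measurable_sweepKernel α t).mul (by fun_prop)
  · filter_upwards [ae_restrict_mem measurableSet_Ioo] with v hv
    filter_upwards [ae_restrict_mem measurableSet_Ioo] with s hs
    exact mul_nonneg (sweepKernel_pos hα₀ hα₁ hs.2 hv.1).le (rpow_nonneg (sub_nonneg.2 hs.1.le) _)
  · filter_upwards [ae_restrict_mem measurableSet_Ioo] with v hv
    refine .of_integral_ne_zero ?_
    rw [integral_sweepKernel_mul hα₀ hα₁ hxt hv.1]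
    exact (rpow_pos_of_pos (sub_pos.2 (hxt.trans hv.1)) _).ne'
  · refine (integrableOn_mul_rpow_sub_of_lt hα₁ hg hxt).congr_fun (fun v hv => ?_) measurableSet_Ioo
    simp only
    rw [integral_sweepKernel_mul hα₀ hα₁ hxt hv.1]

theorem fracSweep_mul (s c : ℝ) :
    fracSweep T α t g s * c = ∫ v in Ioo t T, g v * (sweepKernel α t s v * c) := by
  simp only [fracSweep, ← integral_mul_const, mul_assoc]

theorem integrableOn_fracSweep_mul_rpow_sub (hα₀ : 0 < α) (hα₁ : α < 1)
    (hg : IntegrableOn g (Ioo t T)) {x : ℝ} (hxt : x < t) :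
    IntegrableOn (fun s => fracSweep T α t g s * (s - x) ^ (α - 1)) (Ioo x t) := by
  simp only [fracSweep_mul]
  exact (integrable_mul_sweepKernel hα₀ hα₁ hg hxt).integral_prod_left

theorem integral_fracSweep_mul_rpow_sub (hα₀ : 0 < α) (hα₁ : α < 1)
    (hg : IntegrableOn g (Ioo t T)) {x : ℝ} (hxt : x < t) :
    ∫ s in Ioo x t, fracSweep T α t g s * (s - x) ^ (α - 1)
      = ∫ v in Ioo t T, g v * (v - x) ^ (α - 1) := by
  simp only [fracSweep_mul]
  rw [integral_integral_swap (integrable_mul_sweepKernel hα₀ hα₁ hg hxt)]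
  refine setIntegral_congr_fun measurableSet_Ioo fun v hv => ?_
  rw [integral_const_mul, integral_sweepKernel_mul hα₀ hα₁ hxt hv.1]

theorem fracInt_add_fracSweep {a : ℝ} (hα₀ : 0 < α) (hα₁ : α < 1) (hg : IntegrableOn g (Ioo a T))
    (hat : a ≤ t) (htT : t ≤ T) :
    ∀ᵐ x ∂volume.restrict (Ioo a t),
      fracInt t α (fun s => g s + fracSweep T α t g s) x = fracInt T α g x := by
  have hg_right : IntegrableOn g (Ioo t T) := hg.mono_set (Ioo_subset_Ioo_left hat)
  filter_upwards [ae_restrict_of_ae_restrict_of_subset (Ioo_subset_Ioo_right htT)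
    (ae_integrableOn_mul_rpow_sub hα₀ hg), ae_restrict_mem measurableSet_Ioo] with x hgx hx
  simp only [fracInt, add_mul]
  rw [integral_add (hgx.mono_set (Ioo_subset_Ioo_right htT))
      (integrableOn_fracSweep_mul_rpow_sub hα₀ hα₁ hg_right hx.2),
    integral_fracSweep_mul_rpow_sub hα₀ hα₁ hg_right hx.2]
  rcases htT.eq_or_lt with rfl | htT
  · rw [Ioo_self, setIntegral_empty, add_zero]
  rw [← Ioc_union_Ioo_eq_Ioo hx.2.le htT] at hgx ⊢
  rw [setIntegral_union (by grind) measurableSet_Ioo hgx.left_of_union hgx.right_of_union,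
    integral_Ioc_eq_integral_Ioo]

end Sweeping

section SchurTest

open scoped ENNReal

variable {X Y : Type*} [MeasurableSpace X] [MeasurableSpace Y] {μ : Measure X} {ν : Measure Y}
  {p : ℝ}

theorem rpow_lintegral_le_mul_lintegral_rpow_div (hp : 1 < p) {f w : Y → ℝ≥0∞}
    (hf : AEMeasurable f ν) (hw : AEMeasurable w ν) (hw_ne_zero : ∀ᵐ y ∂ν, w y ≠ 0)
    (hw_ne_top : ∀ᵐ y ∂ν, w y ≠ ∞) :
    (∫⁻ y, f y ∂ν) ^ p ≤ (∫⁻ y, w y ∂ν) ^ (p - 1) * ∫⁻ y, f y ^ p / w y ^ (p - 1) ∂ν := by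
  have hp₀ : 0 < p := one_pos.trans hp
  have hpq := Real.HolderConjugate.conjExponent hp
  have inv_conj : 1 / p.conjExponent = (p - 1) / p := by
    rw [Real.conjExponent, one_div_div]
  have f_eq : ∀ᵐ y ∂ν, f y
      = (fun y => f y / w y ^ ((p - 1) / p)) y * (fun y => w y ^ ((p - 1) / p)) y := by
    filter_upwards [hw_ne_zero, hw_ne_top] with y h₀ h_top
    exact (ENNReal.div_mul_cancel (by simp [h₀, h_top])
      (ENNReal.rpow_ne_top_of_nonneg (by bound) h_top)).symm
  calc (∫⁻ y, f y ∂ν) ^ p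
      ≤ ((∫⁻ y, (f y / w y ^ ((p - 1) / p)) ^ p ∂ν) ^ (1 / p) *
          (∫⁻ y, (w y ^ ((p - 1) / p)) ^ p.conjExponent ∂ν) ^ (1 / p.conjExponent)) ^ p := by
        gcongr
        rw [lintegral_congr_ae f_eq]
        exact ENNReal.lintegral_mul_le_Lp_mul_Lq ν hpq (hf.div (hw.pow_const _)) (hw.pow_const _)
    _ = (∫⁻ y, w y ∂ν) ^ (p - 1) * ∫⁻ y, f y ^ p / w y ^ (p - 1) ∂ν := by
        rw [ENNReal.mul_rpow_of_nonneg _ _ hp₀.le, inv_conj, ← ENNReal.rpow_mul, ← ENNReal.rpow_mul,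
          one_div_mul_cancel hp₀.ne', ENNReal.rpow_one, div_mul_cancel₀ _ hp₀.ne', mul_comm]
        simp only [ENNReal.div_rpow_of_nonneg _ _ hp₀.le, ← ENNReal.rpow_mul,
          div_mul_cancel₀ _ hp₀.ne', Real.conjExponent, div_mul_div_cancel₀ hp₀.ne',
          div_self (sub_pos.2 hp).ne', ENNReal.rpow_one]

theorem rpow_lintegral_mul_le_mul_lintegral_mul_rpow_div (hp : 1 < p) {k f w : Y → ℝ≥0∞}
    (hk : AEMeasurable k ν) (hf : AEMeasurable f ν) (hw : AEMeasurable w ν)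
    (hw_ne_zero : ∀ᵐ y ∂ν, w y ≠ 0) (hw_ne_top : ∀ᵐ y ∂ν, w y ≠ ∞) :
    (∫⁻ y, k y * f y ∂ν) ^ p
      ≤ (∫⁻ y, k y * w y ∂ν) ^ (p - 1) * ∫⁻ y, k y * (f y ^ p / w y ^ (p - 1)) ∂ν := by
  have hac := withDensity_absolutelyContinuous ν k
  have h := rpow_lintegral_le_mul_lintegral_rpow_div hp (hf.mono_ac hac) (hw.mono_ac hac)
    (hac.ae_le hw_ne_zero) (hac.ae_le hw_ne_top)
  have hfw : AEMeasurable (fun y => f y ^ p / w y ^ (p - 1)) ν :=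
    (hf.pow_const p).div (hw.pow_const (p - 1))
  rwa [lintegral_withDensity_eq_lintegral_mul₀ hk hf, lintegral_withDensity_eq_lintegral_mul₀ hk hw,
    lintegral_withDensity_eq_lintegral_mul₀ hk hfw] at h

theorem lintegral_rpow_le_of_schur_test [SFinite μ] [SFinite ν] (hp : 1 < p) {K : X → Y → ℝ≥0∞}
    {u : X → ℝ≥0∞} {f w : Y → ℝ≥0∞} {A B : ℝ≥0∞} (hK : Measurable (Function.uncurry K))
    (hu : AEMeasurable u μ) (hf : AEMeasurable f ν) (hw : AEMeasurable w ν)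
    (hw_ne_zero : ∀ᵐ y ∂ν, w y ≠ 0) (hw_ne_top : ∀ᵐ y ∂ν, w y ≠ ∞)
    (hKw : ∀ᵐ x ∂μ, ∫⁻ y, K x y * w y ∂ν ≤ A * u x)
    (hKu : ∀ᵐ y ∂ν, ∫⁻ x, K x y * u x ^ (p - 1) ∂μ ≤ B * w y ^ (p - 1)) :
    ∫⁻ x, (∫⁻ y, K x y * f y ∂ν) ^ p ∂μ ≤ A ^ (p - 1) * B * ∫⁻ y, f y ^ p ∂ν := by
  have hp₁ : 0 ≤ p - 1 := sub_nonneg.2 hp.le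
  have hfw : AEMeasurable (fun y => f y ^ p / w y ^ (p - 1)) ν :=
    (hf.pow_const p).div (hw.pow_const (p - 1))
  have hKx (x : X) : AEMeasurable (K x) ν := hK.of_uncurry_left.aemeasurable
  have h_prod : AEMeasurable (Function.uncurry fun x y =>
      u x ^ (p - 1) * (K x y * (f y ^ p / w y ^ (p - 1)))) (μ.prod ν) :=
    (hu.comp_fst.pow_const _).mul (hK.aemeasurable.mul hfw.comp_snd)
  calc ∫⁻ x, (∫⁻ y, K x y * f y ∂ν) ^ p ∂μ
      ≤ ∫⁻ x, (A * u x) ^ (p - 1) * ∫⁻ y, K x y * (f y ^ p / w y ^ (p - 1)) ∂ν ∂μ := by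
        refine lintegral_mono_ae ?_
        filter_upwards [hKw] with x hx
        exact (rpow_lintegral_mul_le_mul_lintegral_mul_rpow_div hp (hKx x) hf hw hw_ne_zero
          hw_ne_top).trans (by gcongr)
    _ = A ^ (p - 1) *
          ∫⁻ x, ∫⁻ y, u x ^ (p - 1) * (K x y * (f y ^ p / w y ^ (p - 1))) ∂ν ∂μ := by
        refine .trans (lintegral_congr fun x => ?_)
          (lintegral_const_mul'' _ h_prod.lintegral_prod_right')
        rw [ENNReal.mul_rpow_of_nonneg _ _ hp₁, mul_assoc]
        exact congrArg _ (lintegral_const_mul'' _ ((hKx x).mul hfw)).symm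
    _ = A ^ (p - 1) *
          ∫⁻ y, f y ^ p / w y ^ (p - 1) * ∫⁻ x, K x y * u x ^ (p - 1) ∂μ ∂ν := by
        rw [lintegral_lintegral_swap h_prod]
        refine congrArg _ (lintegral_congr fun y => ?_)
        rw [← lintegral_const_mul'' _ (by fun_prop)]
        exact lintegral_congr fun x => by ring
    _ ≤ A ^ (p - 1) * ∫⁻ y, B * f y ^ p ∂ν := by
        gcongr 1
        refine lintegral_mono_ae ?_
        filter_upwards [hKu, hw_ne_zero, hw_ne_top] with y hy h₀ h_top
        calc f y ^ p / w y ^ (p - 1) * ∫⁻ x, K x y * u x ^ (p - 1) ∂μ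
            ≤ f y ^ p / w y ^ (p - 1) * (B * w y ^ (p - 1)) := by gcongr
          _ = B * f y ^ p := by
            rw [mul_left_comm, ENNReal.div_mul_cancel (by simp [h₀, h_top])
              (ENNReal.rpow_ne_top_of_nonneg hp₁ h_top)]
    _ = A ^ (p - 1) * B * ∫⁻ y, f y ^ p ∂ν := by
        rw [lintegral_const_mul'' _ (hf.pow_const p), mul_assoc]

end SchurTest

section SweepBound

open scoped ENNReal NNReal

variable {T α t p γ : ℝ}

theorem exists_lintegral_rpow_div_add (hγ : γ ∈ Ioo (-1) 0) :
    ∃ C : ℝ≥0, ∀ a : ℝ, 0 < a →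
      ∫⁻ x in Ioi (0 : ℝ), ENNReal.ofReal (x ^ γ / (x + a)) = C * ENNReal.ofReal (a ^ γ) := by
  have hγ' : γ + 1 ∈ Ioo 0 1 := ⟨by linarith [hγ.1], by linarith [hγ.2]⟩
  have C_nonneg : 0 ≤ ∫ x in Ioi 0, rpowIntegrand₀₁ (γ + 1) x 1 :=
    (integral_rpowIntegrand₀₁_one_pos hγ').le
  refine ⟨⟨_, C_nonneg⟩, fun a ha => ?_⟩
  have rpow_div_add : ∀ x ∈ Ioi (0 : ℝ), x ^ γ / (x + a) = a⁻¹ * rpowIntegrand₀₁ (γ + 1) x a := by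
    intro x hx
    rw [rpowIntegrand₀₁_eq_pow_div hγ' (le_of_lt hx) ha.le, add_sub_cancel_right]
    field_simp
  rw [setLIntegral_congr_fun measurableSet_Ioi fun x hx => congrArg _ (rpow_div_add x hx),
    ← ofReal_integral_eq_lintegral_ofReal
      ((integrableOn_rpowIntegrand₀₁_Ioi hγ' ha.le).const_mul a⁻¹), integral_const_mul,
    integral_rpowIntegrand₀₁_eq_rpow_mul_const hγ' ha.le, ← mul_assoc, mul_comm,
    rpow_add_one ha.ne', inv_mul_eq_div, mul_div_cancel_right₀ _ ha.ne',
    ENNReal.ofReal_mul C_nonneg, ENNReal.ofReal_eq_coe_nnreal C_nonneg]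
  · rfl
  · filter_upwards [ae_restrict_mem measurableSet_Ioi] with x hx
    exact mul_nonneg (inv_nonneg.2 ha.le) (rpowIntegrand₀₁_nonneg hγ'.1 (le_of_lt hx) ha.le)

theorem exists_lintegral_sweepKernel_mul_rpow_right (hγ : α + γ ∈ Ioo (-1) 0) :
    ∃ C : ℝ≥0, ∀ s < t, ∫⁻ v in Ioi t, ENNReal.ofReal (sweepKernel α t s v * (v - t) ^ γ)
      = C * ENNReal.ofReal ((t - s) ^ γ) := by
  obtain ⟨C, hC⟩ := exists_lintegral_rpow_div_add hγ
  refine ⟨C * (Gamma α * Gamma (1 - α))⁻¹.toNNReal, fun s hst => ?_⟩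
  have hts : 0 < t - s := sub_pos.2 hst
  have integrand_eq : ∀ v ∈ Ioi t, ENNReal.ofReal (sweepKernel α t s v * (v - t) ^ γ)
      = ENNReal.ofReal ((Gamma α * Gamma (1 - α))⁻¹ * (t - s) ^ (-α)) *
          ENNReal.ofReal ((v - t) ^ (α + γ) / ((v - t) + (t - s))) := by
    intro v hv
    have hvt : 0 < v - t := sub_pos.2 hv
    rw [← ENNReal.ofReal_mul' (by positivity), sub_add_sub_cancel, sweepKernel, rpow_add hvt]
    congr 1
    ring
  have translate := (measurePreserving_sub_right volume t).setLIntegral_comp_preimage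
    (measurableSet_Ioi (a := 0))
    (f := fun x => ENNReal.ofReal (x ^ (α + γ) / (x + (t - s)))) (by fun_prop)
  rw [preimage_sub_const_Ioi, zero_add] at translate
  rw [setLIntegral_congr_fun measurableSet_Ioi integrand_eq,
    lintegral_const_mul' _ _ ENNReal.ofReal_ne_top, translate, hC _ hts, mul_left_comm,
    ← ENNReal.ofReal_mul' (by positivity), mul_assoc, ← rpow_add hts, neg_add_cancel_left,
    ENNReal.ofReal_mul' (by positivity), ← mul_assoc]
  rfl

theorem exists_lintegral_sweepKernel_mul_rpow_left (hγ : γ - α ∈ Ioo (-1) 0) :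
    ∃ C : ℝ≥0, ∀ v > t, ∫⁻ s in Iio t, ENNReal.ofReal (sweepKernel α t s v * (t - s) ^ γ)
      = C * ENNReal.ofReal ((v - t) ^ γ) := by
  obtain ⟨C, hC⟩ := exists_lintegral_rpow_div_add hγ
  refine ⟨C * (Gamma α * Gamma (1 - α))⁻¹.toNNReal, fun v htv => ?_⟩
  have hvt : 0 < v - t := sub_pos.2 htv
  have integrand_eq : ∀ s ∈ Iio t, ENNReal.ofReal (sweepKernel α t s v * (t - s) ^ γ)
      = ENNReal.ofReal ((Gamma α * Gamma (1 - α))⁻¹ * (v - t) ^ α) *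
          ENNReal.ofReal ((t - s) ^ (γ - α) / ((t - s) + (v - t))) := by
    intro s hs
    have hts : 0 < t - s := sub_pos.2 hs
    rw [← ENNReal.ofReal_mul' (by positivity), add_comm (t - s), sub_add_sub_cancel, sweepKernel,
      sub_eq_add_neg γ α, rpow_add hts]
    congr 1
    ring
  have reflect := (Measure.measurePreserving_sub_left volume t).setLIntegral_comp_preimage
    (measurableSet_Ioi (a := 0))
    (f := fun x => ENNReal.ofReal (x ^ (γ - α) / (x + (v - t)))) (by fun_prop)
  rw [preimage_const_sub_Ioi, sub_zero] at reflect
  rw [setLIntegral_congr_fun measurableSet_Iio integrand_eq,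
    lintegral_const_mul' _ _ ENNReal.ofReal_ne_top, reflect, hC _ hvt, mul_left_comm,
    ← ENNReal.ofReal_mul' (by positivity), mul_assoc, ← rpow_add hvt, add_sub_cancel,
    ENNReal.ofReal_mul' (by positivity), ← mul_assoc]
  rfl

theorem exists_lintegral_rpow_lintegral_sweepKernel_mul_le (hα₀ : 0 < α) (hp : 1 < p)
    (hαp : α * p < 1) :
    ∃ C : ℝ≥0, ∀ f : ℝ → ℝ≥0∞, AEMeasurable f (volume.restrict (Ioo t T)) →
      ∫⁻ s in Iio t, (∫⁻ v in Ioo t T, ENNReal.ofReal (sweepKernel α t s v) * f v) ^ p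
        ≤ C * ∫⁻ v in Ioo t T, f v ^ p := by
  have hp₀ : 0 < p := one_pos.trans hp
  have lt_inv : α < 1 / p := (lt_div_iff₀ hp₀).2 hαp
  have inv_lt_one : 1 / p < 1 := (div_lt_one hp₀).2 hp
  have hα₁ : α < 1 := lt_inv.trans inv_lt_one
  have exponent_eq : -(1 / p) * (p - 1) = 1 / p - 1 := by
    field_simp
    ring
  obtain ⟨A, hA⟩ := exists_lintegral_sweepKernel_mul_rpow_right (α := α) (t := t)
    (γ := -(1 / p)) ⟨by linarith, by linarith⟩
  obtain ⟨B, hB⟩ := exists_lintegral_sweepKernel_mul_rpow_left (α := α) (t := t)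
    (γ := 1 / p - 1) ⟨by linarith, by linarith⟩
  refine ⟨A ^ (p - 1) * B, fun f hf => ?_⟩
  rw [ENNReal.coe_mul, ENNReal.coe_rpow_of_nonneg _ (sub_nonneg.2 hp.le)]
  refine lintegral_rpow_le_of_schur_test hp
    (u := fun s => ENNReal.ofReal ((t - s) ^ (-(1 / p))))
    (w := fun v => ENNReal.ofReal ((v - t) ^ (-(1 / p))))
    (measurable_sweepKernel α t).ennreal_ofReal (by fun_prop) hf (by fun_prop) ?_
    (.of_forall fun _ => ENNReal.ofReal_ne_top) ?_ ?_
  · filter_upwards [ae_restrict_mem measurableSet_Ioo] with v hv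
    exact (ENNReal.ofReal_pos.2 (rpow_pos_of_pos (sub_pos.2 hv.1) _)).ne'
  · filter_upwards [ae_restrict_mem measurableSet_Iio] with s hs
    rw [← hA s hs]
    refine (lintegral_mono_set Ioo_subset_Ioi_self).trans_eq
      (setLIntegral_congr_fun measurableSet_Ioi fun v hv => ?_)
    rw [ENNReal.ofReal_mul (sweepKernel_pos hα₀ hα₁ hs hv).le]
  · filter_upwards [ae_restrict_mem measurableSet_Ioo] with v hv
    rw [ENNReal.ofReal_rpow_of_pos (rpow_pos_of_pos (sub_pos.2 hv.1) _),
      ← rpow_mul (sub_nonneg.2 hv.1.le), exponent_eq, ← hB v hv.1]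
    refine (setLIntegral_congr_fun measurableSet_Iio fun s hs => ?_).le
    rw [ENNReal.ofReal_mul (sweepKernel_pos hα₀ hα₁ hs hv.1).le,
      ENNReal.ofReal_rpow_of_pos (rpow_pos_of_pos (sub_pos.2 hs) _),
      ← rpow_mul (sub_nonneg.2 (le_of_lt hs)), exponent_eq]

theorem aestronglyMeasurable_fracSweep {g : ℝ → ℝ} {μ : Measure ℝ}
    (hg : AEStronglyMeasurable g (volume.restrict (Ioo t T))) :
    AEStronglyMeasurable (fracSweep T α t g) μ := by
  have h : AEStronglyMeasurable (fun s => ∫ v in Ioo t T, g v * sweepKernel α t s v) μ :=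
    (hg.comp_snd.mul (measurable_sweepKernel α t).aestronglyMeasurable).integral_prod_right'
  exact h

theorem enorm_rpow_mul_fracSweep_le (hα₀ : 0 < α) (hα₁ : α < 1) (hγ : 0 ≤ γ) {s : ℝ}
    (hs : s ∈ Ioo 0 t) (φ : ℝ → ℝ) :
    ‖s ^ γ * fracSweep T α t (fun v => v ^ (-γ) * φ v) s‖ₑ
      ≤ ∫⁻ v in Ioo t T, ENNReal.ofReal (sweepKernel α t s v) * ‖φ v‖ₑ := by
  rw [fracSweep, ← integral_const_mul]
  refine (enorm_integral_le_lintegral_enorm _).trans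
    (setLIntegral_mono' measurableSet_Ioo fun v hv => ?_)
  have hsv : s < v := hs.2.trans hv.1
  have hv₀ : 0 < v := hs.1.trans hsv
  have hK := (sweepKernel_pos hα₀ hα₁ hs.2 hv.1).le
  have weight_le_one : s ^ γ * v ^ (-γ) ≤ 1 := by
    rw [rpow_neg hv₀.le, ← div_eq_mul_inv]
    exact div_le_one_of_le₀ (rpow_le_rpow hs.1.le hsv.le hγ) (rpow_nonneg hv₀.le _)
  rw [← ofReal_norm, ← ofReal_norm, ← ENNReal.ofReal_mul hK]
  refine ENNReal.ofReal_le_ofReal ?_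
  calc ‖s ^ γ * (v ^ (-γ) * φ v * sweepKernel α t s v)‖
      = s ^ γ * v ^ (-γ) * (sweepKernel α t s v * ‖φ v‖) := by
        rw [norm_mul, norm_mul, norm_mul, Real.norm_of_nonneg (rpow_nonneg hs.1.le _),
          Real.norm_of_nonneg (rpow_nonneg hv₀.le _), Real.norm_of_nonneg hK]
        ring
    _ ≤ sweepKernel α t s v * ‖φ v‖ := mul_le_of_le_one_left (by positivity) weight_le_one

theorem memLp_rpow_mul_fracSweep (hα₀ : 0 < α) (hp : 1 < p) (hαp : α * p < 1) (hγ : 0 ≤ γ)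
    {φ : ℝ → ℝ} (hφ : MemLp φ (ENNReal.ofReal p) (volume.restrict (Ioo t T))) :
    MemLp (fun s => s ^ γ * fracSweep T α t (fun v => v ^ (-γ) * φ v) s) (ENNReal.ofReal p)
      (volume.restrict (Ioo 0 t)) := by
  have hp₀ : 0 < p := one_pos.trans hp
  have hα₁ : α < 1 := by nlinarith
  have ofReal_ne_zero : ENNReal.ofReal p ≠ 0 := (ENNReal.ofReal_pos.2 hp₀).ne'
  have hφ_meas := hφ.aestronglyMeasurable
  have hg : AEStronglyMeasurable (fun v => v ^ (-γ) * φ v) (volume.restrict (Ioo t T)) :=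
    (Measurable.aestronglyMeasurable (by fun_prop)).mul hφ_meas
  have hφ_lintegral := (eLpNorm_lt_top_iff_lintegral_rpow_enorm_lt_top ofReal_ne_zero
    ENNReal.ofReal_ne_top).1 hφ.eLpNorm_lt_top
  obtain ⟨C, hC⟩ := exists_lintegral_rpow_lintegral_sweepKernel_mul_le (t := t) (T := T) hα₀ hp hαp
  refine ⟨(Measurable.aestronglyMeasurable (by fun_prop)).mul (aestronglyMeasurable_fracSweep hg),
    (eLpNorm_lt_top_iff_lintegral_rpow_enorm_lt_top ofReal_ne_zero ENNReal.ofReal_ne_top).2 ?_⟩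
  rw [ENNReal.toReal_ofReal hp₀.le] at hφ_lintegral ⊢
  calc ∫⁻ s in Ioo 0 t, ‖s ^ γ * fracSweep T α t (fun v => v ^ (-γ) * φ v) s‖ₑ ^ p
      ≤ ∫⁻ s in Ioo 0 t, (∫⁻ v in Ioo t T, ENNReal.ofReal (sweepKernel α t s v) * ‖φ v‖ₑ) ^ p :=
        setLIntegral_mono' measurableSet_Ioo fun s hs => by
          gcongr
          exact enorm_rpow_mul_fracSweep_le hα₀ hα₁ hγ hs φ
    _ ≤ ∫⁻ s in Iio t, (∫⁻ v in Ioo t T, ENNReal.ofReal (sweepKernel α t s v) * ‖φ v‖ₑ) ^ p :=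
        lintegral_mono_set Ioo_subset_Iio_self
    _ ≤ C * ∫⁻ v in Ioo t T, ‖φ v‖ₑ ^ p := hC _ hφ_meas.enorm
    _ < ∞ := ENNReal.mul_lt_top ENNReal.coe_lt_top hφ_lintegral

end SweepBound

section MemLambda

variable {T α t : ℝ} {f φ ψ : ℝ → ℝ}

theorem integrableOn_rpow_mul_of_memLp_two (hα : α < 1 / 2)
    (hφ : MemLp φ 2 (volume.restrict (Ioo 0 T))) :
    IntegrableOn (fun s => s ^ (-α) * φ s) (Ioo 0 T) := by
  rcases le_or_gt T 0 with hT | hT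
  · simp only [Ioo_eq_empty hT.not_gt, integrableOn_empty]
  have rpow_memLp : MemLp (fun s : ℝ => s ^ (-α)) 2 (volume.restrict (Ioo 0 T)) := by
    rw [memLp_two_iff_integrable_sq (Measurable.aestronglyMeasurable (by fun_prop))]
    refine ((intervalIntegral.integrableOn_Ioo_rpow_iff (s := -α * 2) hT).2
      (by linarith)).congr_fun (fun s hs => ?_) measurableSet_Ioo
    exact rpow_mul_natCast hs.1.le (-α) 2
  exact rpow_memLp.integrable_mul hφ

theorem memLambda.memLp_Ioo (hfφ : memLambda T α f φ) :
    MemLp φ 2 (volume.restrict (Ioo 0 T)) :=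
  hfφ.1.mono_measure (Measure.restrict_mono_set _ Ioo_subset_Icc_self)

theorem memLambda.integrableOn (hα : α < 1 / 2) (hfφ : memLambda T α f φ) :
    IntegrableOn (fun s => s ^ (-α) * φ s) (Ioo 0 T) :=
  integrableOn_rpow_mul_of_memLp_two hα hfφ.memLp_Ioo

theorem memLambda.congr_ae (hfφ : memLambda T α f φ)
    (hφψ : φ =ᵐ[volume.restrict (Icc 0 T)] ψ) : memLambda T α f ψ := by
  refine ⟨(memLp_congr_ae hφψ).1 hfφ.1, ?_⟩
  have fracInt_congr : ∀ u ∈ Icc 0 T,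
      fracInt T α (fun s => s ^ (-α) * φ s) u = fracInt T α (fun s => s ^ (-α) * ψ s) u := by
    intro u hu
    refine congrArg _ (integral_congr_ae ?_)
    filter_upwards [ae_restrict_of_ae_restrict_of_subset
      (Ioo_subset_Icc_self.trans (Icc_subset_Icc_left hu.1)) hφψ] with s hs
    rw [hs]
  filter_upwards [hfφ.2, ae_restrict_mem measurableSet_Icc] with u hu hu_mem
  rw [hu, fracInt_congr u hu_mem]

theorem memLambda.memLp_indicator_add_fracSweep (hα : α ∈ Ioo 0 (1 / 2))
    (hfφ : memLambda T α f φ) (ht : t ∈ Icc 0 T) :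
    MemLp ((Icc 0 t).indicator fun s =>
      φ s + s ^ α * fracSweep T α t (fun v => v ^ (-α) * φ v) s) 2 (volume.restrict (Icc 0 T)) := by
  have hφ_right : MemLp φ (ENNReal.ofReal 2) (volume.restrict (Ioo t T)) := by
    rw [ENNReal.ofReal_ofNat]
    exact hfφ.memLp_Ioo.mono_measure (Measure.restrict_mono_set _ (Ioo_subset_Ioo_left ht.1))
  have hsweep := memLp_rpow_mul_fracSweep hα.1 one_lt_two (by linarith [hα.2]) hα.1.le hφ_right
  rw [ENNReal.ofReal_ofNat, Measure.restrict_congr_set Ioo_ae_eq_Icc] at hsweep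
  rw [memLp_indicator_iff_restrict measurableSet_Icc,
    Measure.restrict_restrict_of_subset (Icc_subset_Icc_right ht.2)]
  exact (hfφ.1.mono_measure (Measure.restrict_mono_set _ (Icc_subset_Icc_right ht.2))).add hsweep

theorem fracInt_rpow_neg_mul_indicator_add {x : ℝ} (hx : 0 ≤ x) (htT : t ≤ T) (h : ℝ → ℝ) :
    fracInt T α (fun s => s ^ (-α) * (Icc 0 t).indicator (fun s => φ s + s ^ α * h s) s) x
      = fracInt t α (fun s => s ^ (-α) * φ s + h s) x := by
  rw [← fracInt_indicator_Icc (a := 0) hx htT]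
  refine congrArg _ (setIntegral_congr_fun measurableSet_Ioo fun s hs => ?_)
  have hs₀ : 0 < s := hx.trans_lt hs.1
  simp only [indicator_apply]
  split_ifs
  · rw [mul_add, ← mul_assoc, ← rpow_add hs₀, neg_add_cancel, rpow_zero, one_mul]
  · rw [mul_zero]

theorem memLambda.indicator_add_fracSweep (hα : α ∈ Ioo 0 (1 / 2)) (hfφ : memLambda T α f φ)
    (ht : t ∈ Icc 0 T) :
    memLambda T α ((Icc 0 t).indicator f) ((Icc 0 t).indicator fun s =>
      φ s + s ^ α * fracSweep T α t (fun v => v ^ (-α) * φ v) s) := by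
  refine ⟨hfφ.memLp_indicator_add_fracSweep hα ht, ?_⟩
  have hsweep := (ae_restrict_iff' measurableSet_Ioo).1
    (fracInt_add_fracSweep hα.1 (by linarith [hα.2]) (hfφ.integrableOn hα.2) ht.1 ht.2)
  filter_upwards [hfφ.2, ae_restrict_mem measurableSet_Icc, ae_restrict_of_ae hsweep,
    Measure.ae_ne _ 0, Measure.ae_ne _ t] with x hfx hxT hx_sweep hx₀ hxt
  rw [fracInt_rpow_neg_mul_indicator_add hxT.1 ht.2]
  rcases hxt.lt_or_gt with hxt | htx
  · rw [indicator_of_mem (show x ∈ Icc 0 t from ⟨hxT.1, hxt.le⟩), hfx,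
      hx_sweep ⟨hxT.1.lt_of_ne' hx₀, hxt⟩]
  · rw [indicator_of_notMem fun hx => htx.not_ge hx.2, fracInt_of_le htx.le, mul_zero]

theorem memLambda.integral_eq_fracSweep (hα : α ∈ Ioo 0 (1 / 2)) (hfφ : memLambda T α f φ)
    (ht₀ : 0 ≤ t) {s : ℝ} (hst : s < t) :
    α / Gamma (1 - α) * ∫ u in Ioo t T, u ^ (-α) * f u * (u - s) ^ (-1 - α)
      = fracSweep T α t (fun v => v ^ (-α) * φ v) s := by
  have subset_Icc : Ioo t T ⊆ Icc 0 T := Ioo_subset_Icc_self.trans (Icc_subset_Icc_left ht₀)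
  rw [← integral_fracInt_mul_rpow_eq_fracSweep hα.1 (by linarith [hα.2])
    ((hfφ.integrableOn hα.2).mono_set (Ioo_subset_Ioo_left ht₀)) hst]
  refine congrArg _ (integral_congr_ae ?_)
  filter_upwards [ae_restrict_of_ae_restrict_of_subset subset_Icc hfφ.2,
    ae_restrict_mem measurableSet_Ioo] with u hfu hu
  rw [hfu, ← mul_assoc, ← rpow_add (ht₀.trans_lt hu.1), neg_add_cancel, rpow_zero, one_mul]

end MemLambda

theorem indicator_memLambda_general {T α t : ℝ} (hα : α ∈ Ioo 0 (1 / 2)) {f φ : ℝ → ℝ}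
    (hfφ : memLambda T α f φ) (ht : t ∈ Icc 0 T) :
    memLambda T α ((Icc 0 t).indicator f) ((Icc 0 t).indicator fun s =>
      φ s + α * s ^ α / Gamma (1 - α) *
        ∫ u in Ioo t T, u ^ (-α) * f u * (u - s) ^ (-1 - α)) := by
  refine (hfφ.indicator_add_fracSweep hα ht).congr_ae ?_
  filter_upwards [Measure.ae_ne _ t] with s hst
  simp only [indicator_apply]
  split_ifs with hs
  · rw [← hfφ.integral_eq_fracSweep hα ht.1 (hs.2.lt_of_ne hst)]
    ring
  · rfl

/-- Lemma 2.3 (first part): if `f ∈ Λ^α_T` with representative `φ_f ∈ L^p([0,T])`,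
`p ∈ (2, 1/α)`, then for every `t ∈ [0,T]`, `f·1_{[0,t]} ∈ Λ^α_T` with representative
`s ↦ 1_{[0,t]}(s)·[φ_f(s) + (α s^α/Γ(1-α)) ∫_t^T u^{-α} f(u)(u-s)^{-1-α} du]`
(in particular this function is in `L²([0,T])`). -/
theorem indicator_memLambda (T α p : ℝ) (hT : 0 < T) (hα : α ∈ Set.Ioo (0 : ℝ) (1 / 2))
    (hp : p ∈ Set.Ioo 2 (1 / α)) (f φ : ℝ → ℝ) (hfφ : memLambda T α f φ)
    (hφp : MemLp φ (ENNReal.ofReal p) (volume.restrict (Set.Icc 0 T)))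
    (t : ℝ) (ht : t ∈ Set.Icc 0 T) :
    memLambda T α (Set.indicator (Set.Icc 0 t) f)
      (Set.indicator (Set.Icc 0 t) (fun s =>
        φ s + (α * s ^ α / Real.Gamma (1 - α)) *
          ∫ u in Set.Ioo t T, u ^ (-α) * f u * (u - s) ^ (-1 - α))) :=
  indicator_memLambda_general hα hfφ ht
end

section
/- Let α ∈ (0,1/2), p ∈ (2, 1/α) and p' ∈ [2, p). There exists a constant C, depending only on α, p, p' and T, such that for every t ∈ [0,T] and every f ∈ Λ^α_T with representative φ_f ∈ L^p([0,T]), the representative φ_{f1_{[0,t]}} of f·1_{[0,t]} ∈ Λ^α_T satisfies ‖φ_{f1_{[0,t]}}‖_{L^{p'}([0,T])} ≤ C ‖φ_f‖_{L^p([0,T])}. -/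
open MeasureTheory Real Set

/-!
If `∫ (v - u)₊ ^ (α - 1) k(v) dv` agrees, for `u < T`, with the Abel integral of `h` cut off at `t`,
integrate both against `(u - x)₊ ^ (-α)`. On the left the inner integral is the constant
`B(1 - α, α)`. On the right it stops at `t`; for `v > t` the Möbius involution `u ↔ s` of `(x, t)`
with `(v - u) (v - s) = (v - x) (v - t)` turns it into
`∫ s in x..t, (t - s) ^ (-α) (v - t) ^ α (v - s)⁻¹`, whose integrand no longer depends on `x`.
Both sides are now integrals over `(x, ∞)`, so varying `x` yields
`k(s) = 1_{s ≤ t} h(s) + B(1 - α, α)⁻¹ ∫ (t - s)₊ ^ (-α) (v - t)₊ ^ α (v - s)⁻¹ h(v) dv`.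

For `h(v) = v ^ (-α) φ(v)`, Hölder's inequality bounds the correction, after multiplication by
`s ^ α`, by a multiple of `‖φ‖_p (t - s)₊ ^ (-1 / p)`, and this weight lies in `L^{p'}` precisely
because `p' < p`.
-/

theorem setLIntegral_eq_of_subset_of_forall_mem_diff_eq_zero {X : Type*} [MeasurableSpace X]
    {μ : Measure X} {f : X → ENNReal} {s t : Set X} (hs : MeasurableSet s)
    (ht : MeasurableSet t) (hst : s ⊆ t) (hf : ∀ x ∈ t \ s, f x = 0) :
    ∫⁻ x in t, f x ∂μ = ∫⁻ x in s, f x ∂μ := by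
  have hind : EqOn f (s.indicator f) t := fun x hx ↦ by
    by_cases hxs : x ∈ s
    · rw [indicator_of_mem hxs]
    · rw [indicator_of_notMem hxs, hf x ⟨hx, hxs⟩]
  rw [setLIntegral_congr_fun ht hind, setLIntegral_indicator hs, inter_eq_left.2 hst]

theorem integrable_prod_kernel_mul {X Y 𝕜 : Type*} [MeasurableSpace X] [MeasurableSpace Y]
    [NormedDivisionRing 𝕜] {μ : Measure X} {ν : Measure Y} [SFinite μ] [SFinite ν]
    {k : X → Y → 𝕜} {h : Y → 𝕜} {C : ENNReal}
    (hk : AEStronglyMeasurable (Function.uncurry k) (μ.prod ν)) (hC : C ≠ ⊤)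
    (hkC : ∀ᵐ y ∂ν, ∫⁻ x, ‖k x y‖ₑ ∂μ ≤ C) (hh : Integrable h ν) :
    Integrable (fun z : X × Y ↦ k z.1 z.2 * h z.2) (μ.prod ν) := by
  have hkh : AEStronglyMeasurable (fun z : X × Y ↦ k z.1 z.2 * h z.2) (μ.prod ν) :=
    hk.mul hh.aestronglyMeasurable.comp_snd
  refine ⟨hkh, ?_⟩
  calc ∫⁻ z, ‖k z.1 z.2 * h z.2‖ₑ ∂μ.prod ν
      = ∫⁻ y, (∫⁻ x, ‖k x y‖ₑ ∂μ) * ‖h y‖ₑ ∂ν := by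
        rw [lintegral_prod_symm _ hkh.enorm]
        simp only [enorm_mul, lintegral_mul_const' _ _ enorm_ne_top]
    _ ≤ ∫⁻ y, C * ‖h y‖ₑ ∂ν := by
        refine lintegral_mono_ae ?_
        filter_upwards [hkC] with y hy using by gcongr
    _ = C * ∫⁻ y, ‖h y‖ₑ ∂ν := lintegral_const_mul' _ _ hC
    _ < ⊤ := ENNReal.mul_lt_top hC.lt_top hh.2

theorem ae_eq_zero_of_forall_setIntegral_Ioi_eq_zero {E : Type*} [NormedAddCommGroup E]
    [NormedSpace ℝ E] [CompleteSpace E] {f : ℝ → E} (hf : Integrable f)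
    (hf0 : ∀ x, ∫ u in Ioi x, f u = 0) : f =ᵐ[volume] 0 := by
  filter_upwards [LocallyIntegrable.ae_hasDerivAt_integral hf.locallyIntegrable] with x hx
  have hconst : (fun y ↦ ∫ u in (0 : ℝ)..y, f u) = fun _ ↦ 0 := by
    ext y
    rw [← intervalIntegral.integral_Ioi_sub_Ioi' hf.integrableOn hf.integrableOn, hf0, hf0,
      sub_zero]
  exact (hconst ▸ hx 0 : HasDerivAt (fun _ ↦ 0) (f x) x).unique (hasDerivAt_const x 0)

theorem ae_restrict_Ioi_eq_zero_of_forall_setIntegral_Ioi_eq_zero {E : Type*}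
    [NormedAddCommGroup E] [NormedSpace ℝ E] [CompleteSpace E] {f : ℝ → E} {a : ℝ}
    (hf : ∀ x > a, IntegrableOn f (Ioi x)) (hf0 : ∀ x > a, ∫ u in Ioi x, f u = 0) :
    f =ᵐ[volume.restrict (Ioi a)] 0 := by
  have hae (b : ℝ) (hb : a < b) : f =ᵐ[volume.restrict (Ioi b)] 0 := by
    have hzero : (Ioi b).indicator f =ᵐ[volume] 0 := by
      refine ae_eq_zero_of_forall_setIntegral_Ioi_eq_zero
        ((hf b hb).integrable_indicator measurableSet_Ioi) fun x ↦ ?_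
      rw [setIntegral_indicator measurableSet_Ioi, Ioi_inter_Ioi]
      exact hf0 _ (lt_sup_of_lt_right hb)
    exact (indicator_ae_eq_restrict measurableSet_Ioi).symm.trans (ae_restrict_of_ae hzero)
  obtain ⟨b, hanti, hab, hb⟩ := exists_seq_strictAnti_tendsto a
  have hUnion : ⋃ n, Ioi (b n) = Ioi a :=
    (isGLB_of_tendsto_atTop hanti.antitone hb).iUnion_Ioi_eq
  rw [Filter.EventuallyEq, ← hUnion, ae_restrict_iUnion_iff]
  exact fun n ↦ hae (b n) (hab n)

/-- The truncated power `z₊ ^ r`, vanishing for `z ≤ 0`. -/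
noncomputable def truncPow (r z : ℝ) : ℝ := (Ioi 0).indicator (· ^ r) z

theorem truncPow_of_pos {r z : ℝ} (hz : 0 < z) : truncPow r z = z ^ r := indicator_of_mem hz _

theorem truncPow_of_nonpos {r z : ℝ} (hz : z ≤ 0) : truncPow r z = 0 :=
  indicator_of_notMem (not_lt.2 hz) _

theorem truncPow_nonneg (r z : ℝ) : 0 ≤ truncPow r z :=
  indicator_nonneg (fun _ hz ↦ rpow_nonneg (le_of_lt hz) r) z

@[fun_prop]
theorem measurable_truncPow (r : ℝ) : Measurable (truncPow r) :=
  (measurable_id.pow_const r).indicator measurableSet_Ioi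

theorem lintegral_comp_mul_right {f : ℝ → ENNReal} (hf : Measurable f) {a : ℝ} (ha : a ≠ 0) :
    ∫⁻ x, f (x * a) = ENNReal.ofReal |a⁻¹| * ∫⁻ x, f x := by
  rw [← smul_eq_mul, ← lintegral_smul_measure, ← Real.map_volume_mul_right ha,
    lintegral_map hf (measurable_mul_const a)]

theorem truncPow_mul_truncPow_eq_betaPDF {a b x v : ℝ} (ha : 0 < a) (hb : 0 < b) (hxv : x < v)
    (u : ℝ) :
    ENNReal.ofReal (truncPow (a - 1) (u - x) * truncPow (b - 1) (v - u)) =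
      ENNReal.ofReal ((v - x) ^ (a + b - 2) * ProbabilityTheory.beta a b) *
        ProbabilityTheory.betaPDF a b ((u - x) * (v - x)⁻¹) := by
  have hβ := ProbabilityTheory.beta_pos ha hb
  have hl : 0 < v - x := sub_pos.2 hxv
  rcases le_or_gt u x with hux | hxu
  · rw [truncPow_of_nonpos (sub_nonpos.2 hux), ProbabilityTheory.betaPDF_eq_zero_of_nonpos
      (mul_nonpos_of_nonpos_of_nonneg (sub_nonpos.2 hux) (inv_nonneg.2 hl.le))]
    simp
  rcases le_or_gt v u with hvu | huv
  · rw [truncPow_of_nonpos (sub_nonpos.2 hvu), ProbabilityTheory.betaPDF_eq_zero_of_one_le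
      (by rw [← div_eq_mul_inv, one_le_div hl]; linarith)]
    simp
  have hux : 0 < u - x := sub_pos.2 hxu
  have hvu : 0 < v - u := sub_pos.2 huv
  have hsub : 1 - (u - x) * (v - x)⁻¹ = (v - u) * (v - x)⁻¹ := by field_simp; ring
  rw [truncPow_of_pos hux, truncPow_of_pos hvu, ProbabilityTheory.betaPDF_of_pos_lt_one
    (by positivity) (by rw [← div_eq_mul_inv, div_lt_one hl]; linarith), hsub,
    ← ENNReal.ofReal_mul (by positivity), mul_rpow hux.le (by positivity),
    mul_rpow hvu.le (by positivity), inv_rpow hl.le, inv_rpow hl.le,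
    show a + b - 2 = (a - 1) + (b - 1) by ring, rpow_add hl]
  field_simp

theorem lintegral_truncPow_sub_mul_truncPow_sub {a b x v : ℝ} (ha : 0 < a) (hb : 0 < b)
    (hxv : x < v) :
    ∫⁻ u, ENNReal.ofReal (truncPow (a - 1) (u - x) * truncPow (b - 1) (v - u)) =
      ENNReal.ofReal ((v - x) ^ (a + b - 1) * ProbabilityTheory.beta a b) := by
  have hl : 0 < v - x := sub_pos.2 hxv
  have hβ := ProbabilityTheory.beta_pos ha hb
  have hpdf : Measurable (ProbabilityTheory.betaPDF a b) :=
    (ProbabilityTheory.measurable_betaPDFReal a b).ennreal_ofReal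
  simp only [truncPow_mul_truncPow_eq_betaPDF ha hb hxv]
  rw [lintegral_const_mul' _ _ ENNReal.ofReal_ne_top,
    lintegral_sub_right_eq_self (fun u ↦ ProbabilityTheory.betaPDF a b (u * (v - x)⁻¹)) x,
    lintegral_comp_mul_right hpdf (inv_ne_zero hl.ne'),
    ProbabilityTheory.lintegral_betaPDF_eq_one ha hb, mul_one, inv_inv, abs_of_pos hl,
    ← ENNReal.ofReal_mul (by positivity), mul_right_comm, ← rpow_add_one hl.ne']
  ring_nf

/-- The map `s ↦ v - (v - x) (v - t) / (v - s)`, an orientation-reversing involution of the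
interval `(x, t)` when `t < v`; it is characterized by `(v - u) (v - s) = (v - x) (v - t)`. -/
noncomputable def moebiusFlip (x t v s : ℝ) : ℝ := v - (v - x) * (v - t) / (v - s)

theorem moebiusFlip_mem_Ioo {x t v s : ℝ} (htv : t < v) (hs : s ∈ Ioo x t) :
    moebiusFlip x t v s ∈ Ioo x t := by
  have hvs : 0 < v - s := by linarith [hs.2]
  constructor
  · rw [moebiusFlip, lt_sub_comm, div_lt_iff₀ hvs]
    exact mul_lt_mul_of_pos_left (by linarith [hs.2]) (by linarith [hs.1, hs.2])
  · rw [moebiusFlip, sub_lt_comm, lt_div_iff₀ hvs, mul_comm]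
    exact mul_lt_mul_of_pos_right (by linarith [hs.1]) (by linarith)

theorem moebiusFlip_moebiusFlip {x t v s : ℝ} (htv : t < v) (hs : s ∈ Ioo x t) :
    moebiusFlip x t v (moebiusFlip x t v s) = s := by
  have hvt : v - t ≠ 0 := by linarith
  have hvx : v - x ≠ 0 := by linarith [hs.1, hs.2]
  simp only [moebiusFlip, sub_sub_cancel]
  field_simp
  ring

theorem bijOn_moebiusFlip {x t v : ℝ} (htv : t < v) :
    BijOn (moebiusFlip x t v) (Ioo x t) (Ioo x t) :=
  InvOn.bijOn ⟨fun _ ↦ moebiusFlip_moebiusFlip htv, fun _ ↦ moebiusFlip_moebiusFlip htv⟩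
    (fun _ ↦ moebiusFlip_mem_Ioo htv) (fun _ ↦ moebiusFlip_mem_Ioo htv)

theorem hasDerivAt_moebiusFlip {x t v s : ℝ} (hs : s ≠ v) :
    HasDerivAt (moebiusFlip x t v) (-((v - x) * (v - t) / (v - s) ^ 2)) s := by
  have h := (((hasDerivAt_id s).const_sub v).fun_inv (sub_ne_zero.2 hs.symm)).const_mul
    ((v - x) * (v - t)) |>.const_sub v
  exact h.congr_deriv (by simp only [id]; ring)

theorem abs_deriv_mul_moebiusFlip {x t v s : ℝ} (α : ℝ) (htv : t < v) (hs : s ∈ Ioo x t) :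
    |-((v - x) * (v - t) / (v - s) ^ 2)| *
        ((moebiusFlip x t v s - x) ^ (-α) * (v - moebiusFlip x t v s) ^ (α - 1)) =
      (t - s) ^ (-α) * (v - t) ^ α * (v - s) ^ (-1 : ℝ) := by
  have hvt : 0 < v - t := by linarith
  have hts : 0 < t - s := by linarith [hs.2]
  have hvs : 0 < v - s := by linarith
  have hvx : 0 < v - x := by linarith [hs.1]
  have hleft : moebiusFlip x t v s - x = (v - x) * (t - s) / (v - s) := by
    rw [moebiusFlip]; field_simp; ring
  have hright : v - moebiusFlip x t v s = (v - x) * (v - t) / (v - s) := sub_sub_cancel _ _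
  rw [hleft, hright, abs_neg, abs_of_pos (by positivity), rpow_sub_one (by positivity),
    div_rpow (by positivity) hvs.le, div_rpow (by positivity) hvs.le, mul_rpow hvx.le hts.le,
    mul_rpow hvx.le hvt.le, rpow_neg hvx.le, rpow_neg hvs.le, rpow_neg_one]
  have := (rpow_pos_of_pos hvs α).ne'
  have := (rpow_pos_of_pos hvx α).ne'
  field_simp

theorem setLIntegral_Ioo_rpow_sub_mul_rpow_sub {t v : ℝ} (x α : ℝ) (htv : t < v) :
    ∫⁻ u in Ioo x t, ENNReal.ofReal ((u - x) ^ (-α) * (v - u) ^ (α - 1)) =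
      ∫⁻ s in Ioo x t, ENNReal.ofReal ((t - s) ^ (-α) * (v - t) ^ α * (v - s) ^ (-1 : ℝ)) := by
  have hbij := bijOn_moebiusFlip (x := x) htv
  conv_lhs => rw [← hbij.image_eq]
  rw [lintegral_image_eq_lintegral_abs_deriv_mul measurableSet_Ioo
    (fun s hs ↦ (hasDerivAt_moebiusFlip (hs.2.trans htv).ne).hasDerivWithinAt) hbij.injOn]
  refine setLIntegral_congr_fun measurableSet_Ioo fun s hs ↦ ?_
  rw [← ENNReal.ofReal_mul (abs_nonneg _), abs_deriv_mul_moebiusFlip α htv hs]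

/-- The kernel `(u - x)₊ ^ (-α) (v - u)₊ ^ (α - 1)`, which arises on applying the adjoint Abel
integral of order `1 - α` to the Abel integral of order `α`. -/
noncomputable def betaKernel (α x u v : ℝ) : ℝ := truncPow (-α) (u - x) * truncPow (α - 1) (v - u)

/-- The kernel `(t - s)₊ ^ (-α) (v - t)₊ ^ α / (v - s)` which, up to a constant, maps a density to
the term added to it when its Abel integral is cut off at `t`. -/
noncomputable def cutoffKernel (α t s v : ℝ) : ℝ :=
  truncPow (-α) (t - s) * truncPow α (v - t) * truncPow (-1) (v - s)

theorem betaKernel_nonneg (α x u v : ℝ) : 0 ≤ betaKernel α x u v :=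
  mul_nonneg (truncPow_nonneg _ _) (truncPow_nonneg _ _)

theorem cutoffKernel_nonneg (α t s v : ℝ) : 0 ≤ cutoffKernel α t s v :=
  mul_nonneg (mul_nonneg (truncPow_nonneg _ _) (truncPow_nonneg _ _)) (truncPow_nonneg _ _)

theorem measurable_uncurry_betaKernel (α x : ℝ) :
    Measurable (Function.uncurry (betaKernel α x)) := by
  unfold betaKernel Function.uncurry
  fun_prop

theorem measurable_uncurry_cutoffKernel (α t : ℝ) :
    Measurable (Function.uncurry (cutoffKernel α t)) := by
  unfold cutoffKernel Function.uncurry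
  fun_prop

theorem betaKernel_eq_zero_of_left_le {α x u v : ℝ} (h : u ≤ x) : betaKernel α x u v = 0 := by
  rw [betaKernel, truncPow_of_nonpos (sub_nonpos.2 h), zero_mul]

theorem betaKernel_eq_zero_of_le {α x u v : ℝ} (h : v ≤ u) : betaKernel α x u v = 0 := by
  rw [betaKernel, truncPow_of_nonpos (sub_nonpos.2 h), mul_zero]

theorem cutoffKernel_eq_zero_of_le_left {α t s v : ℝ} (h : t ≤ s) : cutoffKernel α t s v = 0 := by
  rw [cutoffKernel, truncPow_of_nonpos (sub_nonpos.2 h), zero_mul, zero_mul]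

theorem cutoffKernel_eq_zero_of_le_right {α t s v : ℝ} (h : v ≤ t) : cutoffKernel α t s v = 0 := by
  rw [cutoffKernel, truncPow_of_nonpos (sub_nonpos.2 h), mul_zero, zero_mul]

theorem cutoffKernel_eq_zero_of_le {α t s v : ℝ} (h : v ≤ s) : cutoffKernel α t s v = 0 := by
  rw [cutoffKernel, truncPow_of_nonpos (sub_nonpos.2 h), mul_zero]

theorem lintegral_betaKernel {α x v : ℝ} (hα : α ∈ Ioo 0 1) (hxv : x < v) :
    ∫⁻ u, ENNReal.ofReal (betaKernel α x u v) =
      ENNReal.ofReal (ProbabilityTheory.beta (1 - α) α) := by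
  simpa [betaKernel] using
    lintegral_truncPow_sub_mul_truncPow_sub (sub_pos.2 hα.2) hα.1 hxv

theorem setLIntegral_Iio_betaKernel_of_lt {t v : ℝ} (α x : ℝ) (htv : t < v) :
    ∫⁻ u in Iio t, ENNReal.ofReal (betaKernel α x u v) =
      ∫⁻ s in Ioi x, ENNReal.ofReal (cutoffKernel α t s v) := by
  calc ∫⁻ u in Iio t, ENNReal.ofReal (betaKernel α x u v)
      = ∫⁻ u in Ioo x t, ENNReal.ofReal (betaKernel α x u v) := by
        refine setLIntegral_eq_of_subset_of_forall_mem_diff_eq_zero measurableSet_Ioo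
          measurableSet_Iio Ioo_subset_Iio_self fun u hu ↦ ?_
        rw [betaKernel_eq_zero_of_left_le (not_lt.1 fun h ↦ hu.2 ⟨h, hu.1⟩), ENNReal.ofReal_zero]
    _ = ∫⁻ u in Ioo x t, ENNReal.ofReal ((u - x) ^ (-α) * (v - u) ^ (α - 1)) := by
        refine setLIntegral_congr_fun measurableSet_Ioo fun u hu ↦ ?_
        rw [betaKernel, truncPow_of_pos (sub_pos.2 hu.1),
          truncPow_of_pos (sub_pos.2 (hu.2.trans htv))]
    _ = ∫⁻ s in Ioo x t,
          ENNReal.ofReal ((t - s) ^ (-α) * (v - t) ^ α * (v - s) ^ (-1 : ℝ)) :=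
        setLIntegral_Ioo_rpow_sub_mul_rpow_sub x α htv
    _ = ∫⁻ s in Ioo x t, ENNReal.ofReal (cutoffKernel α t s v) := by
        refine setLIntegral_congr_fun measurableSet_Ioo fun s hs ↦ ?_
        rw [cutoffKernel, truncPow_of_pos (sub_pos.2 hs.2), truncPow_of_pos (sub_pos.2 htv),
          truncPow_of_pos (sub_pos.2 (hs.2.trans htv))]
    _ = ∫⁻ s in Ioi x, ENNReal.ofReal (cutoffKernel α t s v) := by
        refine (setLIntegral_eq_of_subset_of_forall_mem_diff_eq_zero measurableSet_Ioo
          measurableSet_Ioi Ioo_subset_Ioi_self fun s hs ↦ ?_).symm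
        rw [cutoffKernel_eq_zero_of_le_left (not_lt.1 fun h ↦ hs.2 ⟨hs.1, h⟩),
          ENNReal.ofReal_zero]

theorem setLIntegral_Iio_betaKernel {α x v : ℝ} (hα : α ∈ Ioo 0 1) (t : ℝ) (hxv : x < v) :
    ∫⁻ u in Iio t, ENNReal.ofReal (betaKernel α x u v) =
      (Iic t).indicator (fun _ ↦ ENNReal.ofReal (ProbabilityTheory.beta (1 - α) α)) v +
        ∫⁻ s in Ioi x, ENNReal.ofReal (cutoffKernel α t s v) := by
  rcases le_or_gt v t with hvt | htv
  · have hcut (s : ℝ) : cutoffKernel α t s v = 0 := cutoffKernel_eq_zero_of_le_right hvt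
    simp only [hcut, ENNReal.ofReal_zero, lintegral_zero, add_zero,
      indicator_of_mem (mem_Iic.2 hvt)]
    rw [← lintegral_betaKernel hα hxv]
    refine setLIntegral_eq_of_support_subset (Function.support_subset_iff'.2 fun u hu ↦ ?_)
    rw [betaKernel_eq_zero_of_le (hvt.trans (not_lt.1 hu)), ENNReal.ofReal_zero]
  · rw [indicator_of_notMem (notMem_Iic.2 htv), zero_add, setLIntegral_Iio_betaKernel_of_lt α x htv]

theorem setLIntegral_Iio_betaKernel_le {α x v : ℝ} (hα : α ∈ Ioo 0 1) (t : ℝ) (hxv : x < v) :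
    ∫⁻ u in Iio t, ENNReal.ofReal (betaKernel α x u v) ≤
      ENNReal.ofReal (ProbabilityTheory.beta (1 - α) α) :=
  (setLIntegral_le_lintegral _ _).trans_eq (lintegral_betaKernel hα hxv)

theorem setLIntegral_Ioi_cutoffKernel_le {α x v : ℝ} (hα : α ∈ Ioo 0 1) (t : ℝ) (hxv : x < v) :
    ∫⁻ s in Ioi x, ENNReal.ofReal (cutoffKernel α t s v) ≤
      ENNReal.ofReal (ProbabilityTheory.beta (1 - α) α) :=
  le_add_self.trans ((setLIntegral_Iio_betaKernel hα t hxv).symm.trans_le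
    (setLIntegral_Iio_betaKernel_le hα t hxv))

theorem setIntegral_Iio_betaKernel {α x v : ℝ} (hα : α ∈ Ioo 0 1) (t : ℝ) (hxv : x < v) :
    ∫ u in Iio t, betaKernel α x u v =
      (Iic t).indicator (fun _ ↦ ProbabilityTheory.beta (1 - α) α) v +
        ∫ s in Ioi x, cutoffKernel α t s v := by
  have hβ := (ProbabilityTheory.beta_pos (sub_pos.2 hα.2) hα.1).le
  have hcut : ∫⁻ s in Ioi x, ENNReal.ofReal (cutoffKernel α t s v) ≠ ⊤ :=
    ((setLIntegral_Ioi_cutoffKernel_le hα t hxv).trans_lt ENNReal.ofReal_lt_top).ne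
  rw [integral_eq_lintegral_of_nonneg_ae (ae_of_all _ fun u ↦ betaKernel_nonneg α x u v)
      (measurable_uncurry_betaKernel α x).of_uncurry_right.aestronglyMeasurable,
    integral_eq_lintegral_of_nonneg_ae (ae_of_all _ fun s ↦ cutoffKernel_nonneg α t s v)
      (measurable_uncurry_cutoffKernel α t).of_uncurry_right.aestronglyMeasurable,
    setLIntegral_Iio_betaKernel hα t hxv]
  by_cases hvt : v ∈ Iic t
  · rw [indicator_of_mem hvt, indicator_of_mem hvt, ENNReal.toReal_add ENNReal.ofReal_ne_top hcut,
      ENNReal.toReal_ofReal hβ]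
  · rw [indicator_of_notMem hvt, indicator_of_notMem hvt, zero_add, zero_add]

theorem integrable_betaKernel_mul {α x : ℝ} (hα : α ∈ Ioo 0 1) (t : ℝ) {h : ℝ → ℝ}
    (hh : IntegrableOn h (Ioi x)) :
    Integrable (fun z : ℝ × ℝ ↦ betaKernel α x z.1 z.2 * h z.2)
      ((volume.restrict (Iio t)).prod (volume.restrict (Ioi x))) := by
  refine integrable_prod_kernel_mul (measurable_uncurry_betaKernel α x).aestronglyMeasurable
    (C := ENNReal.ofReal (ProbabilityTheory.beta (1 - α) α)) ENNReal.ofReal_ne_top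
    ((ae_restrict_mem measurableSet_Ioi).mono fun v hv ↦ ?_) hh
  simpa only [Real.enorm_of_nonneg (betaKernel_nonneg _ _ _ _)]
    using setLIntegral_Iio_betaKernel_le hα t hv

theorem integrable_cutoffKernel_mul {α x : ℝ} (hα : α ∈ Ioo 0 1) (t : ℝ) {h : ℝ → ℝ}
    (hh : IntegrableOn h (Ioi x)) :
    Integrable (fun z : ℝ × ℝ ↦ cutoffKernel α t z.1 z.2 * h z.2)
      ((volume.restrict (Ioi x)).prod (volume.restrict (Ioi x))) := by
  refine integrable_prod_kernel_mul (measurable_uncurry_cutoffKernel α t).aestronglyMeasurable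
    (C := ENNReal.ofReal (ProbabilityTheory.beta (1 - α) α)) ENNReal.ofReal_ne_top
    ((ae_restrict_mem measurableSet_Ioi).mono fun v hv ↦ ?_) hh
  simpa only [Real.enorm_of_nonneg (cutoffKernel_nonneg _ _ _ _)]
    using setLIntegral_Ioi_cutoffKernel_le hα t hv

/-- The Abel integral `∫ (v - u)₊ ^ (α - 1) h(v) dv` over the whole line, that is, the right-sided
fractional integral of `h` without the factor `1 / Γ(α)`. -/
noncomputable def abelInt (α : ℝ) (h : ℝ → ℝ) (u : ℝ) : ℝ := ∫ v, truncPow (α - 1) (v - u) * h v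

/-- The integral operator with kernel `cutoffKernel α t`: up to a constant, `cutoffCorrection α t h`
must be added to `h 1_{(-∞, t]}` for its Abel integral to become that of `h` cut off at `t`. -/
noncomputable def cutoffCorrection (α t : ℝ) (h : ℝ → ℝ) (s : ℝ) : ℝ :=
  ∫ v, cutoffKernel α t s v * h v

theorem truncPow_mul_abelInt (α x : ℝ) (h : ℝ → ℝ) (u : ℝ) :
    truncPow (-α) (u - x) * abelInt α h u = ∫ v in Ioi x, betaKernel α x u v * h v := by
  have hsupp (v : ℝ) (hv : v ∉ Ioi x) : betaKernel α x u v * h v = 0 := by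
    rcases le_total u x with hux | hxu
    · rw [betaKernel_eq_zero_of_left_le hux, zero_mul]
    · rw [betaKernel_eq_zero_of_le ((not_lt.1 hv).trans hxu), zero_mul]
  rw [setIntegral_eq_integral_of_forall_compl_eq_zero hsupp, abelInt, ← integral_const_mul]
  simp only [betaKernel, mul_assoc]

theorem cutoffCorrection_eq_setIntegral_Ioi (α t : ℝ) (h : ℝ → ℝ) {x s : ℝ} (hxs : x ≤ s) :
    cutoffCorrection α t h s = ∫ v in Ioi x, cutoffKernel α t s v * h v := by
  refine (setIntegral_eq_integral_of_forall_compl_eq_zero fun v hv ↦ ?_).symm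
  rw [cutoffKernel_eq_zero_of_le ((not_lt.1 hv).trans hxs), zero_mul]

theorem integrableOn_cutoffCorrection {α x : ℝ} (hα : α ∈ Ioo 0 1) (t : ℝ) {h : ℝ → ℝ}
    (hh : IntegrableOn h (Ioi x)) : IntegrableOn (cutoffCorrection α t h) (Ioi x) :=
  IntegrableOn.congr_fun (integrable_cutoffKernel_mul hα t hh).integral_prod_left
    (fun _ hs ↦ (cutoffCorrection_eq_setIntegral_Ioi α t h (le_of_lt hs)).symm) measurableSet_Ioi

theorem setIntegral_Ioi_integral_cutoffKernel_mul {α x : ℝ} (hα : α ∈ Ioo 0 1) (t : ℝ) {h : ℝ → ℝ}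
    (hh : IntegrableOn h (Ioi x)) :
    ∫ v in Ioi x, (∫ s in Ioi x, cutoffKernel α t s v) * h v =
      ∫ s in Ioi x, cutoffCorrection α t h s := by
  simp only [← integral_mul_const]
  rw [← integral_integral_swap (integrable_cutoffKernel_mul hα t hh)]
  exact setIntegral_congr_fun measurableSet_Ioi fun s hs ↦
    (cutoffCorrection_eq_setIntegral_Ioi α t h (le_of_lt hs)).symm

theorem setIntegral_Iio_truncPow_mul_abelInt {α x : ℝ} (hα : α ∈ Ioo 0 1) (t : ℝ) {h : ℝ → ℝ}
    (hh : IntegrableOn h (Ioi x)) :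
    ∫ u in Iio t, truncPow (-α) (u - x) * abelInt α h u =
      ProbabilityTheory.beta (1 - α) α * (∫ v in Ioi x, (Iic t).indicator h v) +
        ∫ s in Ioi x, cutoffCorrection α t h s := by
  have hint : IntegrableOn (fun v ↦ (∫ s in Ioi x, cutoffKernel α t s v) * h v) (Ioi x) := by
    simpa only [IntegrableOn, integral_mul_const] using
      (integrable_cutoffKernel_mul hα t hh).integral_prod_right
  calc ∫ u in Iio t, truncPow (-α) (u - x) * abelInt α h u
      = ∫ u in Iio t, ∫ v in Ioi x, betaKernel α x u v * h v := by
        simp only [truncPow_mul_abelInt]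
    _ = ∫ v in Ioi x, ∫ u in Iio t, betaKernel α x u v * h v :=
        integral_integral_swap (integrable_betaKernel_mul hα t hh)
    _ = ∫ v in Ioi x, (ProbabilityTheory.beta (1 - α) α * (Iic t).indicator h v +
          (∫ s in Ioi x, cutoffKernel α t s v) * h v) := by
        refine setIntegral_congr_fun measurableSet_Ioi fun v hv ↦ ?_
        simp only [integral_mul_const, setIntegral_Iio_betaKernel hα t hv, add_mul, indicator,
          ite_mul, mul_ite, zero_mul, mul_zero]
    _ = ProbabilityTheory.beta (1 - α) α * (∫ v in Ioi x, (Iic t).indicator h v) +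
          ∫ s in Ioi x, cutoffCorrection α t h s := by
        rw [integral_add ((hh.indicator measurableSet_Iic).const_mul _) hint, integral_const_mul,
          setIntegral_Ioi_integral_cutoffKernel_mul hα t hh]

theorem cutoffCorrection_eq_zero {t : ℝ} (α : ℝ) {h : ℝ → ℝ} (hh : ∀ v > t, h v = 0) :
    cutoffCorrection α t h = 0 := by
  ext s
  refine integral_eq_zero_of_ae (ae_of_all _ fun v ↦ ?_)
  rcases le_or_gt v t with hvt | htv
  · simp only [cutoffKernel_eq_zero_of_le_right hvt, zero_mul, Pi.zero_apply]
  · simp only [hh v htv, mul_zero, Pi.zero_apply]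

theorem beta_mul_setIntegral_Ioi_eq_of_abelInt_ae_eq_indicator {α a t T x : ℝ} (hα : α ∈ Ioo 0 1)
    (htT : t ≤ T) (hx : a ≤ x) {h k : ℝ → ℝ} (hh : IntegrableOn h (Ioi x))
    (hk : IntegrableOn k (Ioi x)) (hkT : ∀ v > T, k v = 0)
    (hkh : abelInt α k =ᵐ[volume.restrict (Ioo a T)] (Iio t).indicator (abelInt α h)) :
    ProbabilityTheory.beta (1 - α) α * ∫ v in Ioi x, k v =
      ProbabilityTheory.beta (1 - α) α * (∫ v in Ioi x, (Iic t).indicator h v) +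
        ∫ s in Ioi x, cutoffCorrection α t h s := by
  have hkind : (Iic T).indicator k = k :=
    indicator_eq_self.2 (Function.support_subset_iff'.2 fun v hv ↦ hkT v (not_le.1 hv))
  calc ProbabilityTheory.beta (1 - α) α * ∫ v in Ioi x, k v
      = ∫ u in Iio T, truncPow (-α) (u - x) * abelInt α k u := by
        rw [setIntegral_Iio_truncPow_mul_abelInt hα T hk, hkind, cutoffCorrection_eq_zero α hkT]
        simp only [Pi.zero_apply, integral_zero, add_zero]
    _ = ∫ u in Iio T, (Iio t).indicator (fun u ↦ truncPow (-α) (u - x) * abelInt α h u) u := by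
        refine setIntegral_congr_ae measurableSet_Iio ?_
        filter_upwards [(ae_restrict_iff' measurableSet_Ioo).1 hkh] with u hu huT
        rw [indicator_mul_right]
        rcases le_or_gt u x with hux | hxu
        · rw [truncPow_of_nonpos (sub_nonpos.2 hux), zero_mul, zero_mul]
        · rw [hu ⟨hx.trans_lt hxu, huT⟩]
    _ = ∫ u in Iio t, truncPow (-α) (u - x) * abelInt α h u := by
        rw [setIntegral_indicator measurableSet_Iio, inter_eq_right.2 (Iio_subset_Iio htT)]
    _ = _ := setIntegral_Iio_truncPow_mul_abelInt hα t hh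

theorem ae_eq_of_abelInt_ae_eq_indicator {α a t T : ℝ} (hα : α ∈ Ioo 0 1) (htT : t ≤ T)
    {h k : ℝ → ℝ} (hh : ∀ x > a, IntegrableOn h (Ioi x)) (hk : ∀ x > a, IntegrableOn k (Ioi x))
    (hkT : ∀ v > T, k v = 0)
    (hkh : abelInt α k =ᵐ[volume.restrict (Ioo a T)] (Iio t).indicator (abelInt α h)) :
    k =ᵐ[volume.restrict (Ioi a)] fun s ↦
      (Iic t).indicator h s + (ProbabilityTheory.beta (1 - α) α)⁻¹ * cutoffCorrection α t h s := by
  set c := ProbabilityTheory.beta (1 - α) α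
  have hc : c ≠ 0 := (ProbabilityTheory.beta_pos (sub_pos.2 hα.2) hα.1).ne'
  have hind (x : ℝ) (hx : a < x) : IntegrableOn ((Iic t).indicator h) (Ioi x) :=
    (hh x hx).indicator measurableSet_Iic
  have hcut (x : ℝ) (hx : a < x) : IntegrableOn (fun s ↦ c⁻¹ * cutoffCorrection α t h s) (Ioi x) :=
    (integrableOn_cutoffCorrection hα t (hh x hx)).const_mul _
  have hdiff : k - ((Iic t).indicator h + fun s ↦ c⁻¹ * cutoffCorrection α t h s)
      =ᵐ[volume.restrict (Ioi a)] 0 := by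
    refine ae_restrict_Ioi_eq_zero_of_forall_setIntegral_Ioi_eq_zero
      (fun x hx ↦ (hk x hx).sub ((hind x hx).add (hcut x hx))) fun x hx ↦ ?_
    rw [integral_sub' (hk x hx) ((hind x hx).add (hcut x hx)),
      integral_add' (hind x hx) (hcut x hx), integral_const_mul, sub_eq_zero]
    refine mul_left_cancel₀ hc ?_
    rw [mul_add, mul_inv_cancel_left₀ hc]
    exact beta_mul_setIntegral_Ioi_eq_of_abelInt_ae_eq_indicator hα htT (le_of_lt hx) (hh x hx)
      (hk x hx) hkT hkh
  filter_upwards [hdiff] with s hs using sub_eq_zero.1 hs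

/-- The density `v ^ (-α) φ(v) 1_{(0, T)}(v)`, extended by zero to the line, whose fractional
integral of order `α` appears in `memLambda T α f φ`. -/
noncomputable def lambdaDensity (T α : ℝ) (φ : ℝ → ℝ) : ℝ → ℝ :=
  (Ioo 0 T).indicator fun v ↦ v ^ (-α) * φ v

theorem integrableOn_lambdaDensity {T α x : ℝ} (hα : 0 ≤ α) (hx : 0 < x) {φ : ℝ → ℝ}
    (hφ : IntegrableOn φ (Ioo 0 T)) : IntegrableOn (lambdaDensity T α φ) (Ioi x) := by
  rw [lambdaDensity, IntegrableOn, integrable_indicator_iff measurableSet_Ioo, IntegrableOn,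
    Measure.restrict_restrict measurableSet_Ioo]
  refine Integrable.bdd_mul (c := x ^ (-α)) (hφ.mono_set inter_subset_left)
    (measurable_id.pow_const (-α)).aestronglyMeasurable ?_
  filter_upwards [ae_restrict_mem (measurableSet_Ioo.inter measurableSet_Ioi)] with v hv
  refine (Real.norm_of_nonneg (rpow_nonneg hv.1.1.le _)).trans_le ?_
  exact rpow_le_rpow_of_nonpos hx (le_of_lt hv.2) (neg_nonpos.2 hα)

theorem fracInt_eq_abelInt (T α : ℝ) (φ : ℝ → ℝ) {u : ℝ} (hu : 0 ≤ u) :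
    fracInt T α (fun s ↦ s ^ (-α) * φ s) u =
      (Real.Gamma α)⁻¹ * abelInt α (lambdaDensity T α φ) u := by
  rw [fracInt, abelInt, one_div, ← integral_indicator measurableSet_Ioo]
  congr 2 with v
  rcases le_or_gt v u with hvu | huv
  · rw [truncPow_of_nonpos (sub_nonpos.2 hvu), zero_mul,
      indicator_of_notMem fun h ↦ hvu.not_gt h.1]
  by_cases hvT : v < T
  · rw [indicator_of_mem (mem_Ioo.2 ⟨huv, hvT⟩), lambdaDensity,
      indicator_of_mem (mem_Ioo.2 ⟨hu.trans_lt huv, hvT⟩),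
      truncPow_of_pos (sub_pos.2 huv), mul_comm]
  · rw [indicator_of_notMem fun h ↦ hvT h.2, lambdaDensity, indicator_of_notMem fun h ↦ hvT h.2,
      mul_zero]

namespace memLambda

variable {T α t : ℝ} {f φ ψ : ℝ → ℝ}

theorem integrableOn_rep (hf : memLambda T α f φ) : IntegrableOn φ (Ioo 0 T) :=
  IntegrableOn.mono_set (hf.1.integrable one_le_two) Ioo_subset_Icc_self

theorem abelInt_ae_eq (hα : 0 < α) (hf : memLambda T α f φ) :
    abelInt α (lambdaDensity T α φ) =ᵐ[volume.restrict (Ioo 0 T)]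
      fun u ↦ Real.Gamma α * u ^ (-α) * f u := by
  filter_upwards [ae_restrict_of_ae_restrict_of_subset Ioo_subset_Icc_self hf.2,
    ae_restrict_mem measurableSet_Ioo] with u hu hu0
  have hΓ := (Real.Gamma_pos_of_pos hα).ne'
  have hpow := (rpow_pos_of_pos hu0.1 α).ne'
  rw [hu, fracInt_eq_abelInt T α φ hu0.1.le, rpow_neg hu0.1.le]
  field_simp

theorem indicator_ae_eq (hα : α ∈ Ioo 0 1) (htT : t ≤ T) (hf : memLambda T α f φ)
    (hψ : memLambda T α ((Icc 0 t).indicator f) ψ) :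
    ψ =ᵐ[volume.restrict (Icc 0 T)] fun s ↦ (Iic t).indicator φ s +
      (ProbabilityTheory.beta (1 - α) α)⁻¹ *
        (s ^ α * cutoffCorrection α t (lambdaDensity T α φ) s) := by
  have habel : abelInt α (lambdaDensity T α ψ) =ᵐ[volume.restrict (Ioo 0 T)]
      (Iio t).indicator (abelInt α (lambdaDensity T α φ)) := by
    filter_upwards [hf.abelInt_ae_eq hα.1, hψ.abelInt_ae_eq hα.1,
      ae_restrict_mem measurableSet_Ioo, ae_restrict_of_ae (Measure.ae_ne volume t)]
      with u hfu hψu hu hut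
    rcases hut.lt_or_gt with h | h
    · rw [hψu, indicator_of_mem (mem_Icc.2 ⟨hu.1.le, h.le⟩),
        indicator_of_mem (mem_Iio.2 h), hfu]
    · rw [hψu, indicator_of_notMem fun h' ↦ h.not_ge h'.2, mul_zero,
        indicator_of_notMem (notMem_Iio.2 h.le)]
  have hdens := ae_eq_of_abelInt_ae_eq_indicator hα htT
    (fun x hx ↦ integrableOn_lambdaDensity hα.1.le hx hf.integrableOn_rep)
    (fun x hx ↦ integrableOn_lambdaDensity hα.1.le hx hψ.integrableOn_rep)
    (fun v hv ↦ indicator_of_notMem (fun h ↦ hv.not_gt h.2) _) habel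
  rw [← restrict_Ioo_eq_restrict_Icc]
  filter_upwards [ae_restrict_of_ae_restrict_of_subset Ioo_subset_Ioi_self hdens,
    ae_restrict_mem measurableSet_Ioo] with s hs hs0
  have hpow : s ^ α * s ^ (-α) = 1 := by rw [← rpow_add hs0.1, add_neg_cancel, rpow_zero]
  have hcancel (χ : ℝ → ℝ) : s ^ α * lambdaDensity T α χ s = χ s := by
    rw [lambdaDensity, indicator_of_mem hs0, ← mul_assoc, hpow, one_mul]
  rw [← hcancel ψ, hs, mul_add, mul_left_comm]
  simp only [indicator_apply, mul_ite, mul_zero, hcancel]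

end memLambda

theorem setLIntegral_Ioi_ofReal_rpow {r c : ℝ} (hr : r < -1) (hc : 0 < c) :
    ∫⁻ v in Ioi c, ENNReal.ofReal (v ^ r) = ENNReal.ofReal (c ^ (r + 1) / -(r + 1)) := by
  rw [← ofReal_integral_eq_lintegral_ofReal (integrableOn_Ioi_rpow_of_lt hr hc)
    ((ae_restrict_mem measurableSet_Ioi).mono fun v hv ↦ rpow_nonneg (hc.trans hv).le r),
    integral_Ioi_rpow_of_lt hr hc, neg_div, div_neg]

theorem eLpNorm_rpow_restrict_Ioi {r q c : ℝ} (hq : 0 < q) (hr : r * q < -1) (hc : 0 < c) :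
    eLpNorm (fun v ↦ v ^ r) (ENNReal.ofReal q) (volume.restrict (Ioi c)) =
      ENNReal.ofReal ((-(r * q + 1)) ^ (-q⁻¹) * c ^ (r + q⁻¹)) := by
  have hden : 0 < -(r * q + 1) := by linarith
  have hpow : ∫⁻ v in Ioi c, ‖v ^ r‖ₑ ^ q = ∫⁻ v in Ioi c, ENNReal.ofReal (v ^ (r * q)) := by
    refine setLIntegral_congr_fun measurableSet_Ioi fun v hv ↦ ?_
    have hv0 : 0 < v := hc.trans hv
    rw [Real.enorm_of_nonneg (by positivity), ENNReal.ofReal_rpow_of_nonneg (by positivity) hq.le,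
      rpow_mul hv0.le]
  rw [eLpNorm_eq_lintegral_rpow_enorm_toReal (by simpa using hq) ENNReal.ofReal_ne_top,
    ENNReal.toReal_ofReal hq.le, hpow, setLIntegral_Ioi_ofReal_rpow hr hc,
    ENNReal.ofReal_rpow_of_nonneg (by positivity) (by positivity), one_div,
    div_rpow (by positivity) hden.le, ← rpow_mul hc.le, rpow_neg hden.le, div_eq_inv_mul]
  congr 3
  field_simp

theorem eLpNorm_sub_rpow_restrict_Ioi {r q s t : ℝ} (hq : 0 < q) (hr : r * q < -1) (hst : s < t) :
    eLpNorm (fun v ↦ (v - s) ^ r) (ENNReal.ofReal q) (volume.restrict (Ioi t)) =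
      ENNReal.ofReal ((-(r * q + 1)) ^ (-q⁻¹) * (t - s) ^ (r + q⁻¹)) := by
  have hshift := (measurePreserving_sub_right volume s).restrict_preimage
    (measurableSet_Ioi (a := t - s))
  rw [preimage_sub_const_Ioi, sub_add_cancel] at hshift
  have hmeas : Measurable fun v : ℝ ↦ v ^ r := measurable_id.pow_const r
  exact (eLpNorm_comp_measurePreserving hmeas.aestronglyMeasurable hshift).trans
    (eLpNorm_rpow_restrict_Ioi hq hr (sub_pos.2 hst))

theorem enorm_truncPow_rpow (r z : ℝ) {q : ℝ} (hq : 0 < q) :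
    ‖truncPow r z‖ₑ ^ q = ENNReal.ofReal (truncPow (r * q) z) := by
  rw [Real.enorm_of_nonneg (truncPow_nonneg r z),
    ENNReal.ofReal_rpow_of_nonneg (truncPow_nonneg r z) hq.le]
  rcases le_or_gt z 0 with hz | hz
  · rw [truncPow_of_nonpos hz, truncPow_of_nonpos hz, zero_rpow hq.ne']
  · rw [truncPow_of_pos hz, truncPow_of_pos hz, rpow_mul hz.le]

theorem integrableOn_truncPow_Iic {r : ℝ} (hr : -1 < r) (b : ℝ) :
    IntegrableOn (truncPow r) (Iic b) := by
  change Integrable ((Ioi 0).indicator (· ^ r)) (volume.restrict (Iic b))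
  rw [integrable_indicator_iff measurableSet_Ioi, IntegrableOn,
    Measure.restrict_restrict measurableSet_Ioi, Ioi_inter_Iic]
  exact (intervalIntegral.intervalIntegrable_rpow' hr).1

theorem eLpNorm_truncPow_restrict_Iic_lt_top {r q : ℝ} (hq : 0 < q) (hr : -1 < r * q) (b : ℝ) :
    eLpNorm (truncPow r) (ENNReal.ofReal q) (volume.restrict (Iic b)) < ⊤ := by
  rw [eLpNorm_lt_top_iff_lintegral_rpow_enorm_lt_top (by simpa using hq) ENNReal.ofReal_ne_top,
    ENNReal.toReal_ofReal hq.le]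
  simp only [enorm_truncPow_rpow _ _ hq]
  exact (integrableOn_truncPow_Iic hr b).lintegral_lt_top

theorem eLpNorm_truncPow_sub_restrict_Icc_le {t T : ℝ} (htT : t ≤ T) (r : ℝ) (q : ENNReal) :
    eLpNorm (fun s ↦ truncPow r (t - s)) q (volume.restrict (Icc 0 T)) ≤
      eLpNorm (truncPow r) q (volume.restrict (Iic T)) := by
  have hreflect := (Measure.measurePreserving_sub_left volume t).restrict_preimage
    (measurableSet_Iic (a := t))
  rw [preimage_const_sub_Iic, sub_self] at hreflect
  calc eLpNorm (fun s ↦ truncPow r (t - s)) q (volume.restrict (Icc 0 T))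
      ≤ eLpNorm (truncPow r ∘ (t - ·)) q (volume.restrict (Ici 0)) :=
        eLpNorm_mono_measure _ (Measure.restrict_mono Icc_subset_Ici_self le_rfl)
    _ = eLpNorm (truncPow r) q (volume.restrict (Iic t)) :=
        eLpNorm_comp_measurePreserving (measurable_truncPow r).aestronglyMeasurable hreflect
    _ ≤ eLpNorm (truncPow r) q (volume.restrict (Iic T)) :=
        eLpNorm_mono_measure _ (Measure.restrict_mono (Iic_subset_Iic.2 htT) le_rfl)

theorem rpow_mul_rpow_neg_mul_cutoffKernel_le {α s t v : ℝ} (hα : 0 ≤ α) (hs : 0 < s)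
    (htv : t < v) :
    s ^ α * v ^ (-α) * cutoffKernel α t s v ≤ truncPow (-α) (t - s) * (v - s) ^ (α - 1) := by
  rcases le_or_gt t s with hts | hst
  · rw [cutoffKernel_eq_zero_of_le_left hts, truncPow_of_nonpos (sub_nonpos.2 hts)]
    simp only [mul_zero, zero_mul, le_refl]
  have hts : 0 < t - s := sub_pos.2 hst
  have hvt : 0 < v - t := sub_pos.2 htv
  have hvs : 0 < v - s := by linarith
  have hv : 0 < v := by linarith
  have hle : (s * (v - t) / v) ^ α ≤ (v - s) ^ α := by
    refine rpow_le_rpow (by positivity) ((div_le_iff₀ hv).2 ?_) hα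
    nlinarith
  calc s ^ α * v ^ (-α) * cutoffKernel α t s v
      = (t - s) ^ (-α) * ((s * (v - t) / v) ^ α * (v - s) ^ (-1 : ℝ)) := by
        rw [cutoffKernel, truncPow_of_pos hts, truncPow_of_pos hvt, truncPow_of_pos hvs,
          div_rpow (by positivity) hv.le, mul_rpow hs.le hvt.le, rpow_neg hv.le]
        ring
    _ ≤ (t - s) ^ (-α) * ((v - s) ^ α * (v - s) ^ (-1 : ℝ)) := by gcongr
    _ = truncPow (-α) (t - s) * (v - s) ^ (α - 1) := by
        rw [← rpow_add hvs, truncPow_of_pos hts, ← sub_eq_add_neg]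

theorem enorm_rpow_mul_cutoffKernel_mul_lambdaDensity_le {T α s : ℝ} (hα : 0 ≤ α) (hs : 0 < s)
    (t : ℝ) (φ : ℝ → ℝ) (v : ℝ) :
    ‖s ^ α * (cutoffKernel α t s v * lambdaDensity T α φ v)‖ₑ ≤
      (Ioi t).indicator (fun v ↦ ENNReal.ofReal (truncPow (-α) (t - s)) *
        ‖(v - s) ^ (α - 1) * (Ioo 0 T).indicator φ v‖ₑ) v := by
  rcases le_or_gt v t with hvt | htv
  · rw [cutoffKernel_eq_zero_of_le_right hvt, zero_mul, mul_zero, enorm_zero]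
    exact zero_le
  rw [indicator_of_mem (mem_Ioi.2 htv)]
  by_cases hv : v ∈ Ioo 0 T
  · have hker : ‖s ^ α * v ^ (-α) * cutoffKernel α t s v‖ₑ ≤
        ENNReal.ofReal (truncPow (-α) (t - s)) * ‖(v - s) ^ (α - 1)‖ₑ := by
      have hle := rpow_mul_rpow_neg_mul_cutoffKernel_le hα hs htv
      have hnonneg : 0 ≤ s ^ α * v ^ (-α) * cutoffKernel α t s v :=
        mul_nonneg (mul_nonneg (rpow_nonneg hs.le _) (rpow_nonneg hv.1.le _))
          (cutoffKernel_nonneg _ _ _ _)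
      rw [← Real.enorm_of_nonneg (truncPow_nonneg _ _), ← enorm_mul,
        Real.enorm_of_nonneg hnonneg, Real.enorm_of_nonneg (hnonneg.trans hle)]
      exact ENNReal.ofReal_le_ofReal hle
    calc ‖s ^ α * (cutoffKernel α t s v * lambdaDensity T α φ v)‖ₑ
        = ‖s ^ α * v ^ (-α) * cutoffKernel α t s v‖ₑ * ‖φ v‖ₑ := by
          rw [lambdaDensity, indicator_of_mem hv, ← enorm_mul]
          ring_nf
      _ ≤ ENNReal.ofReal (truncPow (-α) (t - s)) * ‖(v - s) ^ (α - 1)‖ₑ * ‖φ v‖ₑ := by gcongr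
      _ = _ := by rw [indicator_of_mem hv, enorm_mul, mul_assoc]
  · rw [lambdaDensity, indicator_of_notMem hv, mul_zero, mul_zero, enorm_zero]
    exact zero_le

theorem enorm_rpow_mul_cutoffCorrection_le {T α s t : ℝ} {p q : ENNReal} [p.HolderConjugate q]
    {φ : ℝ → ℝ} (hα : 0 ≤ α) (hs : 0 < s)
    (hφ : AEStronglyMeasurable φ (volume.restrict (Ioo 0 T))) :
    ‖s ^ α * cutoffCorrection α t (lambdaDensity T α φ) s‖ₑ ≤
      ENNReal.ofReal (truncPow (-α) (t - s)) *
        (eLpNorm (fun v ↦ (v - s) ^ (α - 1)) q (volume.restrict (Ioi t)) *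
          eLpNorm φ p (volume.restrict (Ioo 0 T))) := by
  set φ₀ := (Ioo 0 T).indicator φ
  have hφ₀_meas : AEStronglyMeasurable φ₀ volume :=
    (aestronglyMeasurable_indicator_iff measurableSet_Ioo).2 hφ
  have hpow_meas : Measurable fun v : ℝ ↦ (v - s) ^ (α - 1) :=
    (measurable_id.sub_const s).pow_const _
  calc ‖s ^ α * cutoffCorrection α t (lambdaDensity T α φ) s‖ₑ
      ≤ ∫⁻ v, ‖s ^ α * (cutoffKernel α t s v * lambdaDensity T α φ v)‖ₑ := by
        rw [cutoffCorrection, ← integral_const_mul]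
        exact enorm_integral_le_lintegral_enorm _
    _ ≤ ENNReal.ofReal (truncPow (-α) (t - s)) *
          eLpNorm ((fun v ↦ (v - s) ^ (α - 1)) • φ₀) 1 (volume.restrict (Ioi t)) := by
        rw [eLpNorm_one_eq_lintegral_enorm, ← lintegral_const_mul' _ _ ENNReal.ofReal_ne_top,
          ← lintegral_indicator measurableSet_Ioi]
        exact lintegral_mono (enorm_rpow_mul_cutoffKernel_mul_lambdaDensity_le hα hs t φ)
    _ ≤ ENNReal.ofReal (truncPow (-α) (t - s)) *
          (eLpNorm (fun v ↦ (v - s) ^ (α - 1)) q (volume.restrict (Ioi t)) *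
            eLpNorm φ₀ p (volume.restrict (Ioi t))) := by
        gcongr
        exact eLpNorm_smul_le_mul_eLpNorm hφ₀_meas.restrict hpow_meas.aestronglyMeasurable
    _ ≤ ENNReal.ofReal (truncPow (-α) (t - s)) *
          (eLpNorm (fun v ↦ (v - s) ^ (α - 1)) q (volume.restrict (Ioi t)) *
            eLpNorm φ p (volume.restrict (Ioo 0 T))) := by
        gcongr
        rw [← eLpNorm_indicator_eq_eLpNorm_restrict measurableSet_Ioo]
        exact eLpNorm_mono_measure _ Measure.restrict_le_self

theorem sub_one_mul_lt_neg_one {α p q : ℝ} (hpq : p.HolderConjugate q) (hα : α < p⁻¹) :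
    (α - 1) * q < -1 := by
  have hlt : q⁻¹ < 1 - α := by linarith [hpq.inv_add_inv_eq_one]
  linarith [(inv_lt_iff_one_lt_mul₀ hpq.symm.pos).1 hlt]

theorem enorm_rpow_mul_cutoffCorrection_le_truncPow {T α s p q : ℝ} (t : ℝ) {φ : ℝ → ℝ}
    (hpq : p.HolderConjugate q) (hα : α ∈ Ico 0 p⁻¹) (hs : 0 < s)
    (hφ : AEStronglyMeasurable φ (volume.restrict (Ioo 0 T))) :
    ‖s ^ α * cutoffCorrection α t (lambdaDensity T α φ) s‖ₑ ≤
      ENNReal.ofReal ((-((α - 1) * q + 1)) ^ (-q⁻¹) * truncPow (-p⁻¹) (t - s)) *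
        eLpNorm φ (ENNReal.ofReal p) (volume.restrict (Ioo 0 T)) := by
  have := hpq.ennrealOfReal
  have hq : 0 < q := hpq.symm.pos
  have hexp := sub_one_mul_lt_neg_one hpq hα.2
  refine (enorm_rpow_mul_cutoffCorrection_le (p := ENNReal.ofReal p) (q := ENNReal.ofReal q)
    hα.1 hs hφ).trans_eq ?_
  rcases le_or_gt t s with hts | hst
  · simp only [truncPow_of_nonpos (sub_nonpos.2 hts), ENNReal.ofReal_zero, zero_mul, mul_zero]
  have hts : 0 < t - s := sub_pos.2 hst
  rw [eLpNorm_sub_rpow_restrict_Ioi hq hexp hst, ← mul_assoc,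
    ← ENNReal.ofReal_mul (truncPow_nonneg _ _), truncPow_of_pos hts, truncPow_of_pos hts,
    mul_left_comm, ← rpow_add hts]
  congr 4
  linarith [hpq.inv_add_inv_eq_one]

theorem eLpNorm_rpow_mul_cutoffCorrection_le {T α p q t : ℝ} {φ : ℝ → ℝ}
    (hpq : p.HolderConjugate q) (hα : α ∈ Ico 0 p⁻¹) (htT : t ≤ T)
    (hφ : AEStronglyMeasurable φ (volume.restrict (Icc 0 T))) (r : ENNReal) :
    eLpNorm (fun s ↦ s ^ α * cutoffCorrection α t (lambdaDensity T α φ) s) r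
        (volume.restrict (Icc 0 T)) ≤
      ENNReal.ofReal ((-((α - 1) * q + 1)) ^ (-q⁻¹)) *
        eLpNorm (truncPow (-p⁻¹)) r (volume.restrict (Iic T)) *
          eLpNorm φ (ENNReal.ofReal p) (volume.restrict (Icc 0 T)) := by
  have hweight : Measurable fun s ↦ truncPow (-p⁻¹) (t - s) := by fun_prop
  have hden : 0 ≤ -((α - 1) * q + 1) := by linarith [sub_one_mul_lt_neg_one hpq hα.2]
  have hpoint : ∀ᵐ s ∂volume.restrict (Icc 0 T),
      ‖s ^ α * cutoffCorrection α t (lambdaDensity T α φ) s‖ₑ ≤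
        ENNReal.ofReal ((-((α - 1) * q + 1)) ^ (-q⁻¹)) *
          eLpNorm φ (ENNReal.ofReal p) (volume.restrict (Icc 0 T)) *
            ‖truncPow (-p⁻¹) (t - s)‖ₑ := by
    rw [← restrict_Ioo_eq_restrict_Icc] at hφ ⊢
    filter_upwards [ae_restrict_mem measurableSet_Ioo] with s hs
    refine (enorm_rpow_mul_cutoffCorrection_le_truncPow t hpq hα hs.1 hφ).trans_eq ?_
    rw [ENNReal.ofReal_mul (by positivity), Real.enorm_of_nonneg (truncPow_nonneg _ _),
      mul_right_comm]
  calc eLpNorm (fun s ↦ s ^ α * cutoffCorrection α t (lambdaDensity T α φ) s) r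
        (volume.restrict (Icc 0 T))
      ≤ ENNReal.ofReal ((-((α - 1) * q + 1)) ^ (-q⁻¹)) *
          eLpNorm φ (ENNReal.ofReal p) (volume.restrict (Icc 0 T)) *
            eLpNorm (fun s ↦ truncPow (-p⁻¹) (t - s)) r (volume.restrict (Icc 0 T)) :=
        eLpNorm_le_mul_eLpNorm_of_ae_le_mul'' r hweight.aestronglyMeasurable hpoint
    _ ≤ ENNReal.ofReal ((-((α - 1) * q + 1)) ^ (-q⁻¹)) *
          eLpNorm φ (ENNReal.ofReal p) (volume.restrict (Icc 0 T)) *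
            eLpNorm (truncPow (-p⁻¹)) r (volume.restrict (Iic T)) := by
        gcongr
        exact eLpNorm_truncPow_sub_restrict_Icc_le htT _ r
    _ = _ := mul_right_comm _ _ _

theorem memLambda.eLpNorm_indicator_rep_le {T α t : ℝ} {f φ ψ : ℝ → ℝ} (hα : α ∈ Ioo 0 1)
    (htT : t ≤ T) (hf : memLambda T α f φ) (hψ : memLambda T α ((Icc 0 t).indicator f) ψ)
    (r : ENNReal) :
    eLpNorm ψ r (volume.restrict (Icc 0 T)) ≤
      ENNReal.LpAddConst r * (eLpNorm φ r (volume.restrict (Icc 0 T)) +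
        ENNReal.ofReal (ProbabilityTheory.beta (1 - α) α)⁻¹ *
          eLpNorm (fun s ↦ s ^ α * cutoffCorrection α t (lambdaDensity T α φ) s) r
            (volume.restrict (Icc 0 T))) := by
  have hβ := (ProbabilityTheory.beta_pos (sub_pos.2 hα.2) hα.1).le
  have hφt : AEStronglyMeasurable ((Iic t).indicator φ) (volume.restrict (Icc 0 T)) :=
    hf.1.1.indicator measurableSet_Iic
  have hcorr : ψ - (Iic t).indicator φ =ᵐ[volume.restrict (Icc 0 T)]
      (ProbabilityTheory.beta (1 - α) α)⁻¹ •
        fun s ↦ s ^ α * cutoffCorrection α t (lambdaDensity T α φ) s := by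
    filter_upwards [hf.indicator_ae_eq hα htT hψ] with s hs
    simp only [Pi.sub_apply, hs, add_sub_cancel_left, Pi.smul_apply, smul_eq_mul]
  calc eLpNorm ψ r (volume.restrict (Icc 0 T))
      = eLpNorm ((Iic t).indicator φ + (ψ - (Iic t).indicator φ)) r
          (volume.restrict (Icc 0 T)) := by rw [add_sub_cancel]
    _ ≤ _ := eLpNorm_add_le' hφt (hψ.1.1.sub hφt) r
    _ ≤ _ := by
        gcongr
        · exact eLpNorm_indicator_le _
        · rw [eLpNorm_congr_ae hcorr, eLpNorm_const_smul,
            Real.enorm_of_nonneg (inv_nonneg.2 hβ)]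

/-- A constant `K`, finite for `0 < p' < p`, in the estimate
`‖ψ‖_{p'} ≤ K ‖φ‖_p` between the representatives `ψ` of `f · 1_{[0,t]}` and `φ` of `f`. The two
summands come from the restriction of `φ` to `[0, t]` and from the correction term. -/
noncomputable def indicatorRepConst (T α p p' : ℝ) : ENNReal :=
  ENNReal.LpAddConst (ENNReal.ofReal p') *
    (volume.restrict (Icc 0 T) univ ^
        (1 / (ENNReal.ofReal p').toReal - 1 / (ENNReal.ofReal p).toReal) +
      ENNReal.ofReal (ProbabilityTheory.beta (1 - α) α)⁻¹ *
        (ENNReal.ofReal ((-((α - 1) * p.conjExponent + 1)) ^ (-p.conjExponent⁻¹)) *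
          eLpNorm (truncPow (-p⁻¹)) (ENNReal.ofReal p') (volume.restrict (Iic T))))

theorem indicatorRepConst_lt_top (T α : ℝ) {p p' : ℝ} (hp' : p' ∈ Ioo 0 p) :
    indicatorRepConst T α p p' < ⊤ := by
  have hp : 0 < p := hp'.1.trans hp'.2
  have hadd : ENNReal.LpAddConst (ENNReal.ofReal p') < ⊤ := ENNReal.LpAddConst_lt_top _
  have hexp : 0 ≤ 1 / (ENNReal.ofReal p').toReal - 1 / (ENNReal.ofReal p).toReal := by
    rw [ENNReal.toReal_ofReal hp'.1.le, ENNReal.toReal_ofReal hp.le, sub_nonneg]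
    exact one_div_le_one_div_of_le hp'.1 hp'.2.le
  have hweight : eLpNorm (truncPow (-p⁻¹)) (ENNReal.ofReal p') (volume.restrict (Iic T)) < ⊤ := by
    refine eLpNorm_truncPow_restrict_Iic_lt_top hp'.1 ?_ T
    rw [neg_mul, neg_lt_neg_iff, inv_mul_lt_one₀ hp]
    exact hp'.2
  rw [indicatorRepConst]
  finiteness

theorem memLambda.eLpNorm_indicator_rep_le_mul {T α p p' t : ℝ} {f φ ψ : ℝ → ℝ} (hp : 1 < p)
    (hα : α ∈ Ioo 0 p⁻¹) (hp' : p' ≤ p) (htT : t ≤ T) (hf : memLambda T α f φ)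
    (hψ : memLambda T α ((Icc 0 t).indicator f) ψ) :
    eLpNorm ψ (ENNReal.ofReal p') (volume.restrict (Icc 0 T)) ≤
      indicatorRepConst T α p p' * eLpNorm φ (ENNReal.ofReal p) (volume.restrict (Icc 0 T)) := by
  have hα1 : α < 1 := hα.2.trans (inv_lt_one_of_one_lt₀ hp)
  have hφ := eLpNorm_le_eLpNorm_mul_rpow_measure_univ (ENNReal.ofReal_le_ofReal hp') hf.1.1
  have hcorr := eLpNorm_rpow_mul_cutoffCorrection_le (Real.HolderConjugate.conjExponent hp)
    ⟨hα.1.le, hα.2⟩ htT hf.1.1 (ENNReal.ofReal p')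
  refine (hf.eLpNorm_indicator_rep_le ⟨hα.1, hα1⟩ htT hψ _).trans ?_
  grw [hφ, hcorr, indicatorRepConst]
  exact le_of_eq (by ring)

theorem indicator_rep_norm_bound_general (T α p p' : ℝ) (hp : 1 < p) (hα : α ∈ Ioo 0 (1 / p))
    (hp' : p' ∈ Ioo 0 p) :
    ∃ C : ℝ, 0 < C ∧ ∀ t ∈ Icc 0 T, ∀ f φ ψ : ℝ → ℝ,
      memLambda T α f φ →
      memLambda T α (indicator (Icc 0 t) f) ψ →
      eLpNorm ψ (ENNReal.ofReal p') (volume.restrict (Icc 0 T)) ≤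
        ENNReal.ofReal C * eLpNorm φ (ENNReal.ofReal p) (volume.restrict (Icc 0 T)) := by
  rw [one_div] at hα
  obtain ⟨C, -, hKC, -⟩ := ENNReal.lt_iff_exists_real_btwn.1 (indicatorRepConst_lt_top T α hp')
  refine ⟨C, ENNReal.ofReal_pos.1 (pos_of_gt hKC), fun t ht f φ ψ hf hψ ↦ ?_⟩
  grw [hf.eLpNorm_indicator_rep_le_mul hp hα hp'.2.le ht.2 hψ, hKC]

/-- Lemma 2.3 (norm estimate): for `α ∈ (0,1/2)`, `p ∈ (2,1/α)`, `p' ∈ [2,p)` there is a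
constant `C = C(α,p,p',T)` such that for every `t ∈ [0,T]` and every `f ∈ Λ^α_T` with
representative `φ_f ∈ L^p([0,T])`, the representative `ψ` of `f·1_{[0,t]} ∈ Λ^α_T` satisfies
`‖ψ‖_{L^{p'}} ≤ C ‖φ_f‖_{L^p}`. -/
theorem indicator_rep_norm_bound (T α p p' : ℝ) (hT : 0 < T)
    (hα : α ∈ Set.Ioo (0 : ℝ) (1 / 2)) (hp : p ∈ Set.Ioo 2 (1 / α))
    (hp' : p' ∈ Set.Ico 2 p) :
    ∃ C : ℝ, 0 < C ∧ ∀ t ∈ Set.Icc 0 T, ∀ f φ ψ : ℝ → ℝ,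
      memLambda T α f φ →
      MemLp φ (ENNReal.ofReal p) (volume.restrict (Set.Icc 0 T)) →
      memLambda T α (Set.indicator (Set.Icc 0 t) f) ψ →
      eLpNorm ψ (ENNReal.ofReal p') (volume.restrict (Set.Icc 0 T)) ≤
        ENNReal.ofReal C * eLpNorm φ (ENNReal.ofReal p) (volume.restrict (Set.Icc 0 T)) := by
  have hp1 : 1 < p := one_lt_two.trans hp.1
  have hαp : α < 1 / p := (lt_one_div hα.1 (zero_lt_one.trans hp1)).2 hp.2
  obtain ⟨C, hC, hbound⟩ := indicator_rep_norm_bound_general T α p p' hp1 ⟨hα.1, hαp⟩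
    ⟨two_pos.trans_le hp'.1, hp'.2⟩
  exact ⟨C, hC, fun t ht f φ ψ hf _ hψ ↦ hbound t ht f φ ψ hf hψ⟩
end

section
/- Let α ∈ (0,1/2), let f ∈ Λ^α_T, and let g : [0,T] → ℝ be Hölder continuous with exponent β > α. Then the product g·f also belongs to Λ^α_T. -/
open MeasureTheory Real Set

/-!
For `u < w < s`, the integral of `(t - u)^(α-1) (s - v)^(α-1) (v - t)^(-α-1)` over
`u < t < w < v < s` is `C (s - u)^(α-1)`, where `C` depends on `α` only. Integrating this against
`G'(w)` and applying Fubini's theorem gives, for smooth `G`,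
`∫ (t - u)^(α-1) m(t, s) dt = C (s - u)^(α-1) (G u - G s)` with
`m(t, s) = ∫ (s - v)^(α-1) (v - t)^(-α-1) (G t - G v) dv`. Mollification extends it to `β`-Hölder
`G` with `β > α`, for which `|m(t, s)| ≤ c (s - t)^(β-1)`.

Therefore `G · I^α h = I^α (G h + C⁻¹ M h)`, where `M` is the integral operator with kernel `m`.
For `h = s^(-α) φ` this represents `G f` by `ψ t = G t φ t + C⁻¹ t^α (M h) t`. As `t^α s^(-α) ≤ 1`
for `t < s`, the operator `φ ↦ t^α M h` has a kernel bounded by `c (s - t)^(β-1)` on `t < s`, and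
Schur's test shows that it maps `L²` to `L²`.
-/

open scoped ENNReal NNReal Topology Convolution

section SchurTest

variable {X Y : Type*} [MeasurableSpace X] [MeasurableSpace Y] {μ : Measure X} {ν : Measure Y}

theorem integrable_prod_of_lintegral_enorm_le [SFinite ν] {F : X × Y → ℝ} {g : X → ℝ}
    (hF : AEStronglyMeasurable F (μ.prod ν)) (hg : Integrable g μ)
    (h : ∀ᵐ x ∂μ, ∫⁻ y, ‖F (x, y)‖ₑ ∂ν ≤ ‖g x‖ₑ) : Integrable F (μ.prod ν) := by
  refine ⟨hF, ?_⟩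
  rw [hasFiniteIntegral_iff_enorm, lintegral_prod _ hF.enorm]
  exact (lintegral_mono_ae h).trans_lt hg.hasFiniteIntegral

theorem lintegral_mul_rpow_le {k f : Y → ℝ≥0∞} (hk : AEMeasurable k ν) (hf : AEMeasurable f ν)
    {p : ℝ} (hp : 1 ≤ p) :
    (∫⁻ y, k y * f y ∂ν) ^ p ≤ (∫⁻ y, k y ∂ν) ^ (p - 1) * ∫⁻ y, k y * f y ^ p ∂ν := by
  have hp0 : 0 < p := zero_lt_one.trans_le hp
  have hq : 0 ≤ 1 - p⁻¹ := sub_nonneg.2 (inv_le_one_of_one_le₀ hp)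
  have hsplit (y : Y) : k y * f y = k y ^ (1 - p⁻¹) * (k y * f y ^ p) ^ p⁻¹ := by
    rw [ENNReal.mul_rpow_of_nonneg _ _ (inv_nonneg.2 hp0.le), ← ENNReal.rpow_mul,
      mul_inv_cancel₀ hp0.ne', ENNReal.rpow_one, ← mul_assoc,
      ← ENNReal.rpow_add_of_nonneg _ _ hq (inv_nonneg.2 hp0.le), sub_add_cancel, ENNReal.rpow_one]
  calc (∫⁻ y, k y * f y ∂ν) ^ p
      ≤ ((∫⁻ y, k y ∂ν) ^ (1 - p⁻¹) * (∫⁻ y, k y * f y ^ p ∂ν) ^ p⁻¹) ^ p := by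
        simp_rw [hsplit]
        gcongr
        exact ENNReal.lintegral_mul_norm_pow_le hk (hk.mul (hf.pow_const p)) hq
          (inv_nonneg.2 hp0.le) (sub_add_cancel _ _)
    _ = (∫⁻ y, k y ∂ν) ^ (p - 1) * ∫⁻ y, k y * f y ^ p ∂ν := by
        rw [ENNReal.mul_rpow_of_nonneg _ _ hp0.le, ← ENNReal.rpow_mul, ← ENNReal.rpow_mul,
          inv_mul_cancel₀ hp0.ne', ENNReal.rpow_one, sub_mul, one_mul, inv_mul_cancel₀ hp0.ne']

theorem lintegral_rpow_lintegral_mul_le [SFinite μ] [SFinite ν] {K : X × Y → ℝ≥0∞}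
    {f : Y → ℝ≥0∞} {p : ℝ} (hp : 1 ≤ p) {A B : ℝ≥0∞} (hK : AEMeasurable K (μ.prod ν))
    (hKA : ∀ᵐ x ∂μ, ∫⁻ y, K (x, y) ∂ν ≤ A) (hKB : ∀ᵐ y ∂ν, ∫⁻ x, K (x, y) ∂μ ≤ B)
    (hf : AEMeasurable f ν) :
    ∫⁻ x, (∫⁻ y, K (x, y) * f y ∂ν) ^ p ∂μ ≤ A ^ (p - 1) * (B * ∫⁻ y, f y ^ p ∂ν) := by
  have hKf : AEMeasurable (fun z : X × Y => K z * f z.2 ^ p) (μ.prod ν) :=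
    hK.mul (hf.comp_snd.pow_const p)
  have hrow : ∀ᵐ x ∂μ, (∫⁻ y, K (x, y) * f y ∂ν) ^ p
      ≤ A ^ (p - 1) * ∫⁻ y, K (x, y) * f y ^ p ∂ν := by
    filter_upwards [hKA, hK.aestronglyMeasurable.prodMk_left] with x hx hKx
    refine (lintegral_mul_rpow_le hKx.aemeasurable hf hp).trans ?_
    gcongr
  calc ∫⁻ x, (∫⁻ y, K (x, y) * f y ∂ν) ^ p ∂μ
      ≤ ∫⁻ x, A ^ (p - 1) * ∫⁻ y, K (x, y) * f y ^ p ∂ν ∂μ := lintegral_mono_ae hrow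
    _ = A ^ (p - 1) * ∫⁻ y, ∫⁻ x, K (x, y) * f y ^ p ∂μ ∂ν := by
        rw [lintegral_const_mul'' _ hKf.lintegral_prod_right', lintegral_lintegral_swap hKf]
    _ ≤ A ^ (p - 1) * ∫⁻ y, B * f y ^ p ∂ν := by
        gcongr A ^ (p - 1) * ?_
        refine lintegral_mono_ae ?_
        filter_upwards [hKB, hK.aestronglyMeasurable.prod_swap.prodMk_left] with y hy hKy
        exact (lintegral_mul_const'' _ hKy.aemeasurable).trans_le (mul_le_mul_left hy _)
    _ = A ^ (p - 1) * (B * ∫⁻ y, f y ^ p ∂ν) := by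
        rw [lintegral_const_mul'' _ (hf.pow_const p)]

theorem memLp_integral_mul_of_lintegral_enorm_le [SFinite μ] [SFinite ν] {K : X × Y → ℝ}
    {f : Y → ℝ} {p : ℝ≥0∞} (hp : 1 ≤ p) (hp_top : p ≠ ∞) {A B : ℝ≥0∞} (hA : A ≠ ∞) (hB : B ≠ ∞)
    (hK : AEStronglyMeasurable K (μ.prod ν)) (hKA : ∀ᵐ x ∂μ, ∫⁻ y, ‖K (x, y)‖ₑ ∂ν ≤ A)
    (hKB : ∀ᵐ y ∂ν, ∫⁻ x, ‖K (x, y)‖ₑ ∂μ ≤ B) (hf : MemLp f p ν) :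
    MemLp (fun x => ∫ y, K (x, y) * f y ∂ν) p μ := by
  have hp0 : p ≠ 0 := (zero_lt_one.trans_le hp).ne'
  have hp1 : 1 ≤ p.toReal := by simpa using ENNReal.toReal_mono hp_top hp
  refine ⟨(hK.mul hf.1.comp_snd).integral_prod_right', ?_⟩
  rw [eLpNorm_lt_top_iff_lintegral_rpow_enorm_lt_top hp0 hp_top]
  calc ∫⁻ x, ‖∫ y, K (x, y) * f y ∂ν‖ₑ ^ p.toReal ∂μ
      ≤ ∫⁻ x, (∫⁻ y, ‖K (x, y)‖ₑ * ‖f y‖ₑ ∂ν) ^ p.toReal ∂μ := by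
        gcongr with x
        simp_rw [← enorm_mul]
        exact enorm_integral_le_lintegral_enorm _
    _ ≤ A ^ (p.toReal - 1) * (B * ∫⁻ y, ‖f y‖ₑ ^ p.toReal ∂ν) :=
        lintegral_rpow_lintegral_mul_le hp1 hK.enorm hKA hKB hf.1.enorm
    _ < ∞ := by
        have hf_top := lintegral_rpow_enorm_lt_top_of_eLpNorm_lt_top hp0 hp_top hf.2
        have hA_top := ENNReal.rpow_ne_top_of_nonneg (sub_nonneg.2 hp1) hA
        finiteness

end SchurTest

section RiemannLiouvilleKernel

/-- The truncated power `r ↦ r₊^(a-1)`, the kernel of the fractional integral of order `a` up to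
the factor `1 / Γ(a)`. Orders `a ≤ 0` are allowed, and the value at `r ≤ 0` is `0`. -/
noncomputable def rlKernel (a r : ℝ) : ℝ := (Ioi 0).indicator (fun r => r ^ (a - 1)) r

variable {a b r s t : ℝ}

theorem rlKernel_of_pos (hr : 0 < r) : rlKernel a r = r ^ (a - 1) := indicator_of_mem hr _

theorem rlKernel_of_nonpos (hr : r ≤ 0) : rlKernel a r = 0 :=
  indicator_of_notMem (notMem_Ioi.2 hr) _

theorem rlKernel_nonneg (a r : ℝ) : 0 ≤ rlKernel a r :=
  indicator_nonneg (fun _ hr => rpow_nonneg (mem_Ioi.1 hr).le _) r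

@[fun_prop]
theorem measurable_rlKernel (a : ℝ) : Measurable (rlKernel a) :=
  (measurable_id.pow_const (a - 1)).indicator measurableSet_Ioi

theorem rlKernel_mul_abs_rpow (a b r : ℝ) : rlKernel a r * |r| ^ b = rlKernel (a + b) r := by
  rcases le_or_gt r 0 with hr | hr
  · simp only [rlKernel_of_nonpos hr, zero_mul]
  · rw [rlKernel_of_pos hr, rlKernel_of_pos hr, abs_of_pos hr, ← rpow_add hr]
    ring_nf

theorem rlKernel_sub_mul_eq_zero (hst : s ≤ t) (a b v : ℝ) :
    rlKernel a (s - v) * rlKernel b (v - t) = 0 := by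
  rcases le_or_gt s v with hsv | hvs
  · rw [rlKernel_of_nonpos (sub_nonpos.2 hsv), zero_mul]
  · rw [rlKernel_of_nonpos (sub_nonpos.2 (hvs.le.trans hst)), mul_zero]

theorem integrableOn_Iio_rlKernel (ha : 0 < a) (T : ℝ) : IntegrableOn (rlKernel a) (Iio T) := by
  have hrpow : IntegrableOn (fun r : ℝ => r ^ (a - 1)) (Ioi 0 ∩ Iio T) := by
    rw [Ioi_inter_Iio]
    rcases le_or_gt T 0 with hT | hT
    · simp only [Ioo_eq_empty_of_le hT, integrableOn_empty]
    · exact (intervalIntegral.integrableOn_Ioo_rpow_iff hT).2 (by linarith)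
  rwa [IntegrableOn, ← Measure.restrict_restrict measurableSet_Ioi, ← IntegrableOn,
    ← integrable_indicator_iff measurableSet_Ioi] at hrpow

section BetaIntegral

open ProbabilityTheory

theorem betaPDFReal_nonneg (ha : 0 < a) (hb : 0 < b) (x : ℝ) : 0 ≤ betaPDFReal a b x := by
  unfold betaPDFReal
  split_ifs with hx
  · have := beta_pos ha hb
    have := sub_nonneg.2 hx.2.le
    have := hx.1
    positivity
  · rfl

theorem integrable_betaPDFReal (ha : 0 < a) (hb : 0 < b) : Integrable (betaPDFReal a b) := by
  refine ⟨(stronglyMeasurable_betaPDFReal a b).aestronglyMeasurable, ?_⟩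
  rw [hasFiniteIntegral_iff_ofReal (.of_forall (betaPDFReal_nonneg ha hb))]
  exact (lintegral_betaPDF_eq_one ha hb).trans_lt ENNReal.one_lt_top

theorem integral_betaPDFReal (ha : 0 < a) (hb : 0 < b) : ∫ x, betaPDFReal a b x = 1 := by
  rw [integral_eq_lintegral_of_nonneg_ae (.of_forall (betaPDFReal_nonneg ha hb))
    (stronglyMeasurable_betaPDFReal a b).aestronglyMeasurable]
  exact congrArg ENNReal.toReal (lintegral_betaPDF_eq_one ha hb)

theorem rlKernel_sub_mul_eq_betaPDFReal (hts : t < s) (ha : 0 < a) (hb : 0 < b) (v : ℝ) :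
    rlKernel a (s - v) * rlKernel b (v - t) = (s - t) ^ (a + b - 2) *
      (beta b a * betaPDFReal b a ((v - t) / (s - t))) := by
  have hst : 0 < s - t := sub_pos.2 hts
  rcases le_or_gt v t with hvt | htv
  · rw [rlKernel_of_nonpos (sub_nonpos.2 hvt), betaPDFReal, if_neg, mul_zero, mul_zero, mul_zero]
    exact fun h => h.1.not_ge (div_nonpos_of_nonpos_of_nonneg (sub_nonpos.2 hvt) hst.le)
  rcases le_or_gt s v with hsv | hvs
  · rw [rlKernel_of_nonpos (sub_nonpos.2 hsv), betaPDFReal, if_neg, mul_zero, mul_zero, zero_mul]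
    exact fun h => h.2.not_ge ((one_le_div hst).2 (by linarith))
  have hvt : 0 < v - t := sub_pos.2 htv
  have hsv : 0 < s - v := sub_pos.2 hvs
  have hcompl : 1 - (v - t) / (s - t) = (s - v) / (s - t) := by field_simp; ring
  have hsplit : (s - t) ^ (a + b - 2) = (s - t) ^ (a - 1) * (s - t) ^ (b - 1) := by
    rw [← rpow_add hst]; ring_nf
  rw [rlKernel_of_pos hsv, rlKernel_of_pos hvt, betaPDFReal,
    if_pos ⟨div_pos hvt hst, (div_lt_one hst).2 (by linarith)⟩, hcompl, hsplit,
    div_rpow hvt.le hst.le, div_rpow hsv.le hst.le]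
  have hbeta := (beta_pos hb ha).ne'
  field_simp

theorem integrable_rlKernel_sub_mul (ha : 0 < a) (hb : 0 < b) (s t : ℝ) :
    Integrable (fun v => rlKernel a (s - v) * rlKernel b (v - t)) := by
  rcases le_or_gt s t with hst | hts
  · simp only [rlKernel_sub_mul_eq_zero hst]
    exact integrable_zero _ _ _
  · simp only [rlKernel_sub_mul_eq_betaPDFReal hts ha hb]
    exact ((((integrable_betaPDFReal hb ha).comp_div (sub_pos.2 hts).ne').comp_sub_right
      t).const_mul _).const_mul _

theorem integral_rlKernel_sub_mul (ha : 0 < a) (hb : 0 < b) (s t : ℝ) :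
    ∫ v, rlKernel a (s - v) * rlKernel b (v - t) = beta b a * rlKernel (a + b) (s - t) := by
  rcases le_or_gt s t with hst | hts
  · simp only [rlKernel_sub_mul_eq_zero hst, integral_zero, rlKernel_of_nonpos (sub_nonpos.2 hst),
      mul_zero]
  have hst : 0 < s - t := sub_pos.2 hts
  have hscale : ∫ v, betaPDFReal b a ((v - t) / (s - t)) = s - t := by
    rw [integral_sub_right_eq_self (fun x => betaPDFReal b a (x / (s - t))) t,
      Measure.integral_comp_div, integral_betaPDFReal hb ha, smul_eq_mul, mul_one, abs_of_pos hst]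
  have hpow : (s - t) ^ (a + b - 2) * (s - t) = (s - t) ^ (a + b - 1) := by
    rw [← rpow_add_one hst.ne']; ring_nf
  simp only [rlKernel_sub_mul_eq_betaPDFReal hts ha hb, integral_const_mul, hscale,
    rlKernel_of_pos hst, ← hpow]
  ring

end BetaIntegral

end RiemannLiouvilleKernel

section CrossingIntegral

variable {α u t v w s : ℝ}

theorem hasDerivAt_div_rpow (hα : α ≠ 0) (hts : t < s) (htv : t < v) (hvs : v < s) :
    HasDerivAt (fun v => -(1 / (α * (s - t)) * ((s - v) / (v - t)) ^ α))
      ((s - v) ^ (α - 1) * (v - t) ^ (-α - 1)) v := by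
  have hsv : 0 < s - v := sub_pos.2 hvs
  have hvt : 0 < v - t := sub_pos.2 htv
  have hst : s - t ≠ 0 := (sub_pos.2 hts).ne'
  have hquot : HasDerivAt (fun v => (s - v) / (v - t)) (-(s - t) / (v - t) ^ 2) v := by
    refine (((hasDerivAt_id' v).const_sub s).fun_div ((hasDerivAt_id' v).sub_const t)
      hvt.ne').congr_deriv ?_
    ring
  refine ((hquot.rpow_const (p := α) (.inl (div_pos hsv hvt).ne')).const_mul
    (1 / (α * (s - t)))).fun_neg.congr_deriv ?_
  have hpow : (v - t) ^ (-α - 1) = ((v - t) ^ (α - 1))⁻¹ / (v - t) ^ 2 := by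
    rw [← rpow_neg hvt.le, ← rpow_two, ← rpow_sub hvt]
    ring_nf
  rw [div_rpow hsv.le hvt.le, hpow]
  have := (rpow_pos_of_pos hvt (α - 1)).ne'
  field_simp

theorem lintegral_Ioo_rpow_mul_rpow (hα : 0 < α) (htw : t < w) (hws : w < s) :
    ∫⁻ v in Ioo w s, ENNReal.ofReal ((s - v) ^ (α - 1) * (v - t) ^ (-α - 1))
      = ENNReal.ofReal (1 / (α * (s - t)) * ((s - w) / (w - t)) ^ α) := by
  have hcont : ContinuousOn (fun v => -(1 / (α * (s - t)) * ((s - v) / (v - t)) ^ α))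
      (Icc w s) := by
    refine (ContinuousOn.mul continuousOn_const (ContinuousOn.rpow_const
      (ContinuousOn.div (by fun_prop) (by fun_prop) fun v hv => ?_) fun _ _ => .inr hα.le)).neg
    exact (sub_pos.2 (htw.trans_le hv.1)).ne'
  have hderiv (v : ℝ) (hv : v ∈ Ioo w s) :=
    hasDerivAt_div_rpow hα.ne' (htw.trans hws) (htw.trans hv.1) hv.2
  have hnonneg (v : ℝ) (hv : v ∈ Ioo w s) : 0 ≤ (s - v) ^ (α - 1) * (v - t) ^ (-α - 1) :=
    mul_nonneg (rpow_nonneg (sub_nonneg.2 hv.2.le) _)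
      (rpow_nonneg (sub_nonneg.2 (htw.trans hv.1).le) _)
  have hint := intervalIntegral.integrableOn_deriv_of_nonneg hcont hderiv hnonneg
  rw [← ofReal_integral_eq_lintegral_ofReal (hint.mono_set Ioo_subset_Ioc_self)
    (ae_restrict_of_forall_mem measurableSet_Ioo hnonneg), ← integral_Ioc_eq_integral_Ioo,
    ← intervalIntegral.integral_of_le hws.le,
    intervalIntegral.integral_eq_sub_of_hasDerivAt_of_le hws.le hcont hderiv
      ((intervalIntegrable_iff_integrableOn_Ioc_of_le hws.le).2 hint)]
  simp only [sub_self, zero_div, zero_rpow hα.ne', mul_zero, neg_zero, zero_sub, neg_neg]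

theorem bijOn_projective_Ioi_Ioo (huw : u < w) :
    BijOn (fun y => (u + w * y) / (1 + y)) (Ioi 0) (Ioo u w) := by
  refine InvOn.bijOn (f' := fun t => (t - u) / (w - t)) ⟨fun y hy => ?_, fun t ht => ?_⟩
    (fun y hy => ?_) fun t ht => div_pos (sub_pos.2 ht.1) (sub_pos.2 ht.2)
  · have hy' : 0 < 1 + y := add_pos one_pos hy
    have hwu : w - u ≠ 0 := (sub_pos.2 huw).ne'
    beta_reduce
    field_simp
    have hden : w * (1 + y) - (u + w * y) = w - u := by ring
    rw [hden, div_eq_iff hwu]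
    ring
  · have hwt : w - t ≠ 0 := (sub_pos.2 ht.2).ne'
    have hwu : w - u ≠ 0 := (sub_pos.2 huw).ne'
    have hsum : 1 + (t - u) / (w - t) = (w - u) / (w - t) := by field_simp; ring
    simp only [hsum]
    field_simp
    ring
  · have hy' : 0 < 1 + y := add_pos one_pos hy
    simp only [mem_Ioi] at hy
    exact ⟨(lt_div_iff₀ hy').2 (by nlinarith), (div_lt_iff₀ hy').2 (by nlinarith)⟩

theorem lintegral_Ioo_eq_lintegral_Ioi_projective (huw : u < w) (f : ℝ → ℝ≥0∞) :
    ∫⁻ t in Ioo u w, f t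
      = ∫⁻ y in Ioi 0, ENNReal.ofReal ((w - u) / (1 + y) ^ 2) * f ((u + w * y) / (1 + y)) := by
  have hderiv (y : ℝ) (hy : y ∈ Ioi 0) : HasDerivWithinAt (fun y => (u + w * y) / (1 + y))
      ((w - u) / (1 + y) ^ 2) (Ioi 0) y := by
    have hy' : 0 < 1 + y := add_pos one_pos hy
    refine ((((hasDerivAt_id' y).const_mul w).const_add u).fun_div
      ((hasDerivAt_id' y).const_add 1) hy'.ne').hasDerivWithinAt.congr_deriv ?_
    ring
  have hbij := bijOn_projective_Ioi_Ioo huw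
  rw [← hbij.image_eq,
    lintegral_image_eq_lintegral_abs_deriv_mul measurableSet_Ioi hderiv hbij.injOn]
  refine lintegral_congr fun y => ?_
  rw [abs_of_nonneg (div_nonneg (sub_nonneg.2 huw.le) (sq_nonneg _))]

/-- The constant `(1/α) ∫₀^∞ z^(α-1) / (1+z) dz` in the commutation formula of the fractional
integral with a multiplication operator. -/
noncomputable def commConst (α : ℝ) : ℝ := (∫ z in Ioi 0, rpowIntegrand₀₁ α z 1) / α

theorem commConst_pos (hα : α ∈ Ioo 0 1) : 0 < commConst α :=
  div_pos (integral_rpowIntegrand₀₁_one_pos hα) hα.1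

theorem lintegral_Ioi_rpowIntegrand₀₁ (hα : α ∈ Ioo 0 1) {x : ℝ} (hx : 0 ≤ x) :
    ∫⁻ z in Ioi 0, ENNReal.ofReal (rpowIntegrand₀₁ α z x)
      = ENNReal.ofReal (x ^ α * (α * commConst α)) := by
  rw [← ofReal_integral_eq_lintegral_ofReal (integrableOn_rpowIntegrand₀₁_Ioi hα hx)
    (ae_restrict_of_forall_mem measurableSet_Ioi fun z hz =>
      rpowIntegrand₀₁_nonneg hα.1 (mem_Ioi.1 hz).le hx),
    integral_rpowIntegrand₀₁_eq_rpow_mul_const hα hx, commConst, mul_div_cancel₀ _ hα.1.ne']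

theorem projective_jacobian_mul_eq (hα : α ∈ Ioo 0 1) (huw : u < w) (hws : w < s) {y : ℝ}
    (hy : 0 < y) :
    (w - u) / (1 + y) ^ 2 * (((u + w * y) / (1 + y) - u) ^ (α - 1) *
      (1 / (α * (s - (u + w * y) / (1 + y))) * ((s - w) / (w - (u + w * y) / (1 + y))) ^ α))
      = (s - w) ^ α / (α * (s - u)) * rpowIntegrand₀₁ α y ((s - u) / (s - w)) := by
  have hsw : 0 < s - w := sub_pos.2 hws
  have hwu : 0 < w - u := sub_pos.2 huw
  have hsu : 0 < s - u := sub_pos.2 (huw.trans hws)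
  have hy' : 0 < 1 + y := by linarith
  have htu : (u + w * y) / (1 + y) - u = (w - u) * y / (1 + y) := by field_simp; ring
  have hwt : w - (u + w * y) / (1 + y) = (w - u) / (1 + y) := by field_simp; ring
  have hst : s - (u + w * y) / (1 + y) = ((s - u) + (s - w) * y) / (1 + y) := by field_simp; ring
  rw [htu, hwt, hst, rpowIntegrand₀₁_eq_pow_div hα hy.le (div_pos hsu hsw).le, div_div_eq_mul_div,
    div_rpow (by positivity) hy'.le, div_rpow (by positivity) hwu.le, mul_rpow hwu.le hy.le,
    mul_rpow hsw.le hy'.le, rpow_sub_one hwu.ne', rpow_sub_one hy'.ne']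
  have : (w - u) ^ α ≠ 0 := (rpow_pos_of_pos hwu α).ne'
  have : (1 + y) ^ α ≠ 0 := (rpow_pos_of_pos hy' α).ne'
  have : s - u + (s - w) * y ≠ 0 := by positivity
  field_simp
  ring

theorem lintegral_Ioo_rpow_mul_div (hα : α ∈ Ioo 0 1) (huw : u < w) (hws : w < s) :
    ∫⁻ t in Ioo u w, ENNReal.ofReal ((t - u) ^ (α - 1) *
        (1 / (α * (s - t)) * ((s - w) / (w - t)) ^ α))
      = ENNReal.ofReal (commConst α * (s - u) ^ (α - 1)) := by
  have hsw : 0 < s - w := sub_pos.2 hws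
  have hsu : 0 < s - u := sub_pos.2 (huw.trans hws)
  have hcoef : 0 ≤ (s - w) ^ α / (α * (s - u)) :=
    div_nonneg (rpow_nonneg hsw.le _) (mul_pos hα.1 hsu).le
  calc _ = ∫⁻ y in Ioi 0, ENNReal.ofReal ((s - w) ^ α / (α * (s - u))) *
          ENNReal.ofReal (rpowIntegrand₀₁ α y ((s - u) / (s - w))) := by
        rw [lintegral_Ioo_eq_lintegral_Ioi_projective huw]
        refine setLIntegral_congr_fun measurableSet_Ioi fun y hy => ?_
        rw [← ENNReal.ofReal_mul hcoef, ← projective_jacobian_mul_eq hα huw hws hy,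
          ENNReal.ofReal_mul (div_nonneg (sub_nonneg.2 huw.le) (sq_nonneg _))]
    _ = ENNReal.ofReal (commConst α * (s - u) ^ (α - 1)) := by
        rw [lintegral_const_mul' _ _ ENNReal.ofReal_ne_top,
          lintegral_Ioi_rpowIntegrand₀₁ hα (div_pos hsu hsw).le, ← ENNReal.ofReal_mul hcoef,
          div_rpow hsu.le hsw.le, rpow_sub_one hsu.ne']
        have := (rpow_pos_of_pos hsw α).ne'
        have := hα.1.ne'
        congr 1
        field_simp

end CrossingIntegral

section ChainKernel

/-- The kernel `(t - u)₊^(α-1) (s - v)₊^(α-1) (v - t)₊^(-α-1)` in `q = (t, v)`, supported on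
`u < t < v < s`. It composes two fractional integrals of order `α` with the fractional derivative
of order `α`. -/
noncomputable def chainKernel (α u s : ℝ) (q : ℝ × ℝ) : ℝ :=
  rlKernel α (q.1 - u) * (rlKernel α (s - q.2) * rlKernel (-α) (q.2 - q.1))

variable {α u s w : ℝ} {q : ℝ × ℝ}

theorem chainKernel_nonneg (α u s : ℝ) (q : ℝ × ℝ) : 0 ≤ chainKernel α u s q :=
  mul_nonneg (rlKernel_nonneg _ _) (mul_nonneg (rlKernel_nonneg _ _) (rlKernel_nonneg _ _))

@[fun_prop]
theorem measurable_chainKernel (α u s : ℝ) : Measurable (chainKernel α u s) := by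
  unfold chainKernel
  fun_prop

theorem chainKernel_eq_zero (hq : ¬(u < q.1 ∧ q.1 < q.2 ∧ q.2 < s)) : chainKernel α u s q = 0 := by
  simp only [not_and_or, not_lt] at hq
  unfold chainKernel
  rcases hq with h | h | h <;> simp only [rlKernel_of_nonpos (sub_nonpos.2 h), zero_mul, mul_zero]

theorem lintegral_chainKernel_crossing (hα : α ∈ Ioo 0 1) (huw : u < w) (hws : w < s) :
    ∫⁻ q in Ioo u w ×ˢ Ioo w s, ENNReal.ofReal (chainKernel α u s q)
      = ENNReal.ofReal (commConst α * (s - u) ^ (α - 1)) := by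
  rw [Measure.volume_eq_prod, setLIntegral_prod _ (by fun_prop),
    ← lintegral_Ioo_rpow_mul_div hα huw hws]
  refine setLIntegral_congr_fun measurableSet_Ioo fun t ht => ?_
  have htu : 0 ≤ (t - u) ^ (α - 1) := rpow_nonneg (sub_nonneg.2 ht.1.le) _
  rw [ENNReal.ofReal_mul htu, ← lintegral_Ioo_rpow_mul_rpow hα.1 ht.2 hws,
    ← lintegral_const_mul' _ _ ENNReal.ofReal_ne_top]
  refine setLIntegral_congr_fun measurableSet_Ioo fun v hv => ?_
  simp only [chainKernel]
  rw [rlKernel_of_pos (sub_pos.2 ht.1), rlKernel_of_pos (sub_pos.2 hv.2),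
    rlKernel_of_pos (sub_pos.2 (ht.2.trans hv.1)), ENNReal.ofReal_mul htu]

theorem integral_chainKernel_crossing (hα : α ∈ Ioo 0 1) (huw : u < w) (hws : w < s) :
    ∫ q in Ioo u w ×ˢ Ioo w s, chainKernel α u s q = commConst α * (s - u) ^ (α - 1) := by
  rw [integral_eq_lintegral_of_nonneg_ae (.of_forall (chainKernel_nonneg α u s)) (by fun_prop),
    lintegral_chainKernel_crossing hα huw hws, ENNReal.toReal_ofReal]
  exact mul_nonneg (commConst_pos hα).le (rpow_nonneg (sub_pos.2 (huw.trans hws)).le _)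

/-- The triples `(w, (t, v))` with `u < t < w < v < s`. -/
def crossingSet (u s : ℝ) : Set (ℝ × ℝ × ℝ) :=
  {x | (u < x.2.1 ∧ x.2.1 < x.1) ∧ x.1 < x.2.2 ∧ x.2.2 < s}

theorem measurableSet_crossingSet (u s : ℝ) : MeasurableSet (crossingSet u s) := by
  unfold crossingSet
  measurability

theorem integrable_indicator_crossingSet (hα : α ∈ Ioo 0 1) {h : ℝ → ℝ}
    (hh : IntegrableOn h (Ioo u s)) :
    Integrable ((crossingSet u s).indicator fun x => h x.1 * chainKernel α u s x.2)
      ((volume.restrict (Ioo u s)).prod volume) := by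
  have hmeas : AEStronglyMeasurable (fun x : ℝ × ℝ × ℝ => h x.1 * chainKernel α u s x.2)
      ((volume.restrict (Ioo u s)).prod volume) :=
    hh.aestronglyMeasurable.comp_fst.mul
      ((measurable_chainKernel α u s).comp measurable_snd).aestronglyMeasurable
  refine integrable_prod_of_lintegral_enorm_le (hmeas.indicator (measurableSet_crossingSet u s))
    (hh.mul_const (commConst α * (s - u) ^ (α - 1)))
    (ae_restrict_of_forall_mem measurableSet_Ioo fun w hw => ?_)
  have hslice : ∀ q, (crossingSet u s).indicator (fun x => h x.1 * chainKernel α u s x.2) (w, q)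
      = (Ioo u w ×ˢ Ioo w s).indicator (fun q => h w * chainKernel α u s q) q := fun _ => rfl
  have hconst : 0 ≤ commConst α * (s - u) ^ (α - 1) :=
    mul_nonneg (commConst_pos hα).le (rpow_nonneg (sub_pos.2 (hw.1.trans hw.2)).le _)
  simp only [hslice, enorm_indicator_eq_indicator_enorm,
    lintegral_indicator (measurableSet_Ioo.prod measurableSet_Ioo)]
  rw [enorm_mul, Real.enorm_of_nonneg hconst, ← lintegral_chainKernel_crossing hα hw.1 hw.2,
    ← lintegral_const_mul' _ _ enorm_ne_top]
  simp only [enorm_mul, Real.enorm_of_nonneg (chainKernel_nonneg α u s _), le_refl]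

theorem setIntegral_indicator_crossingSet (h : ℝ → ℝ) (q : ℝ × ℝ) :
    ∫ w in Ioo u s, (crossingSet u s).indicator (fun x => h x.1 * chainKernel α u s x.2) (w, q)
      = chainKernel α u s q * ∫ w in Ioo q.1 q.2, h w := by
  by_cases hq : u < q.1 ∧ q.1 < q.2 ∧ q.2 < s
  · have hslice (w : ℝ) : (crossingSet u s).indicator
        (fun x => h x.1 * chainKernel α u s x.2) (w, q)
        = chainKernel α u s q * (Ioo q.1 q.2).indicator h w := by
      have hmem : (w, q) ∈ crossingSet u s ↔ w ∈ Ioo q.1 q.2 :=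
        ⟨fun hw => ⟨hw.1.2, hw.2.1⟩, fun hw => ⟨⟨hq.1, hw.1⟩, hw.2, hq.2.2⟩⟩
      simp only [indicator, hmem, mul_ite, mul_zero, mul_comm]
    simp only [hslice, integral_const_mul]
    rw [setIntegral_indicator measurableSet_Ioo,
      inter_eq_right.2 (Ioo_subset_Ioo hq.1.le hq.2.2.le)]
  · have hslice (w : ℝ) : (crossingSet u s).indicator
        (fun x => h x.1 * chainKernel α u s x.2) (w, q) = 0 :=
      indicator_apply_eq_zero.2 fun _ => by rw [chainKernel_eq_zero hq, mul_zero]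
    simp only [hslice, integral_zero, chainKernel_eq_zero hq, zero_mul]

theorem integral_chainKernel_mul_setIntegral (hα : α ∈ Ioo 0 1) {h : ℝ → ℝ}
    (hh : IntegrableOn h (Ioo u s)) :
    ∫ q, chainKernel α u s q * ∫ w in Ioo q.1 q.2, h w
      = commConst α * (s - u) ^ (α - 1) * ∫ w in Ioo u s, h w := by
  simp only [← setIntegral_indicator_crossingSet]
  rw [← integral_integral_swap (f := fun w q => (crossingSet u s).indicator
    (fun x => h x.1 * chainKernel α u s x.2) (w, q)) (integrable_indicator_crossingSet hα hh),
    ← integral_const_mul]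
  refine setIntegral_congr_fun measurableSet_Ioo fun w hw => ?_
  calc _ = ∫ q in Ioo u w ×ˢ Ioo w s, h w * chainKernel α u s q :=
        integral_indicator (measurableSet_Ioo.prod measurableSet_Ioo)
    _ = commConst α * (s - u) ^ (α - 1) * h w := by
        rw [integral_const_mul, integral_chainKernel_crossing hα hw.1 hw.2, mul_comm]

theorem integral_chainKernel_mul_sub_of_contDiff (hα : α ∈ Ioo 0 1) {H : ℝ → ℝ}
    (hH : ContDiff ℝ 1 H) (u s : ℝ) :
    ∫ q, chainKernel α u s q * (H q.1 - H q.2)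
      = commConst α * rlKernel α (s - u) * (H u - H s) := by
  have hderiv {a b : ℝ} (hab : a ≤ b) : H a - H b = -∫ w in Ioo a b, deriv H w := by
    rw [← integral_Ioc_eq_integral_Ioo, ← intervalIntegral.integral_of_le hab,
      intervalIntegral.integral_deriv_eq_sub (fun x _ => hH.differentiable one_ne_zero x)
        ((hH.continuous_deriv le_rfl).intervalIntegrable a b), neg_sub]
  have hint : ∀ q, chainKernel α u s q * (H q.1 - H q.2)
      = -(chainKernel α u s q * ∫ w in Ioo q.1 q.2, deriv H w) := fun q => by
    by_cases hq : u < q.1 ∧ q.1 < q.2 ∧ q.2 < s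
    · rw [hderiv hq.2.1.le, mul_neg]
    · simp only [chainKernel_eq_zero hq, zero_mul, neg_zero]
  simp only [hint, integral_neg]
  rcases le_or_gt s u with hsu | hus
  · have hzero (q : ℝ × ℝ) : chainKernel α u s q = 0 :=
      chainKernel_eq_zero fun hq => (hq.1.trans (hq.2.1.trans hq.2.2)).not_ge hsu
    simp only [hzero, zero_mul, integral_zero, neg_zero, rlKernel_of_nonpos (sub_nonpos.2 hsu),
      mul_zero]
  · rw [rlKernel_of_pos (sub_pos.2 hus), hderiv hus.le, mul_neg,
      integral_chainKernel_mul_setIntegral hα]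
    exact (hH.continuous_deriv le_rfl).integrableOn_Icc.mono_set Ioo_subset_Icc_self

end ChainKernel

section HolderIdentity

theorem holderOnWith_of_dist_le {X Y : Type*} [PseudoMetricSpace X] [PseudoMetricSpace Y]
    {C r : ℝ≥0} {f : X → Y} {S : Set X}
    (h : ∀ x ∈ S, ∀ y ∈ S, dist (f x) (f y) ≤ C * dist x y ^ (r : ℝ)) : HolderOnWith C r f S := by
  intro x hx y hy
  rw [edist_dist, edist_dist, ENNReal.ofReal_rpow_of_nonneg dist_nonneg r.coe_nonneg,
    ← ENNReal.ofReal_coe_nnreal, ← ENNReal.ofReal_mul C.coe_nonneg]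
  exact ENNReal.ofReal_le_ofReal (h x hx y hy)

variable {α u s : ℝ} {K β : ℝ≥0} {G : ℝ → ℝ}

theorem chainKernel_mul_abs_rpow (α b u s : ℝ) (q : ℝ × ℝ) :
    chainKernel α u s q * |q.1 - q.2| ^ b
      = rlKernel α (q.1 - u) * (rlKernel α (s - q.2) * rlKernel (b - α) (q.2 - q.1)) := by
  rw [chainKernel, abs_sub_comm, sub_eq_neg_add b α, ← rlKernel_mul_abs_rpow]
  ring

theorem integrable_chainKernel_mul_abs_rpow (hα : 0 < α) {b : ℝ} (hb : α < b) (u s : ℝ) :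
    Integrable fun q : ℝ × ℝ => chainKernel α u s q * |q.1 - q.2| ^ b := by
  simp only [chainKernel_mul_abs_rpow]
  have hmeas : Measurable fun q : ℝ × ℝ =>
      rlKernel α (q.1 - u) * (rlKernel α (s - q.2) * rlKernel (b - α) (q.2 - q.1)) := by fun_prop
  rw [Measure.volume_eq_prod, integrable_prod_iff hmeas.aestronglyMeasurable]
  refine ⟨.of_forall fun t => (integrable_rlKernel_sub_mul hα (sub_pos.2 hb) s t).const_mul
    (rlKernel α (t - u)), ?_⟩
  simp only [norm_mul, norm_of_nonneg (rlKernel_nonneg _ _), integral_const_mul,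
    integral_rlKernel_sub_mul hα (sub_pos.2 hb), add_sub_cancel]
  simp only [mul_comm (rlKernel α _), mul_assoc]
  exact (integrable_rlKernel_sub_mul (hα.trans hb) hα s u).const_mul _

theorem norm_chainKernel_mul_sub_le (hG : HolderWith K β G) (α u s : ℝ) (q : ℝ × ℝ) :
    ‖chainKernel α u s q * (G q.1 - G q.2)‖
      ≤ K * (chainKernel α u s q * |q.1 - q.2| ^ (β : ℝ)) := by
  rw [norm_mul, norm_of_nonneg (chainKernel_nonneg α u s q), mul_left_comm]
  exact mul_le_mul_of_nonneg_left (hG.dist_le q.1 q.2) (chainKernel_nonneg α u s q)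

theorem integrable_chainKernel_mul_sub (hα : 0 < α) (hβ : α < β) (hG : HolderWith K β G)
    (u s : ℝ) : Integrable fun q : ℝ × ℝ => chainKernel α u s q * (G q.1 - G q.2) := by
  have hGc : Continuous G := hG.continuous (by exact_mod_cast hα.trans hβ)
  refine ((integrable_chainKernel_mul_abs_rpow hα hβ u s).const_mul K).mono' ?_
    (.of_forall (norm_chainKernel_mul_sub_le hG α u s))
  exact ((measurable_chainKernel α u s).mul (by fun_prop)).aestronglyMeasurable

theorem contDiff_normed_convolution (ρ : ContDiffBump (0 : ℝ)) (hG : Continuous G) :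
    ContDiff ℝ 1 (ρ.normed volume ⋆[ContinuousLinearMap.lsmul ℝ ℝ, volume] G) :=
  ρ.hasCompactSupport_normed.contDiff_convolution_left _ ρ.contDiff_normed hG.locallyIntegrable

theorem holderWith_normed_convolution (ρ : ContDiffBump (0 : ℝ)) (hG : Continuous G)
    (hGβ : HolderWith K β G) :
    HolderWith K β (ρ.normed volume ⋆[ContinuousLinearMap.lsmul ℝ ℝ, volume] G) := by
  have hint (x : ℝ) : Integrable fun t => ρ.normed volume t * G (x - t) :=
    (ρ.continuous_normed.mul (by fun_prop)).integrable_of_hasCompactSupport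
      ρ.hasCompactSupport_normed.mul_right
  refine holderOnWith_univ.1 (holderOnWith_of_dist_le fun x _ y _ => ?_)
  simp only [convolution_def, ContinuousLinearMap.lsmul_apply, smul_eq_mul]
  rw [dist_eq_norm, ← integral_sub (hint x) (hint y)]
  calc _ ≤ ∫ t, ρ.normed volume t * (K * dist x y ^ (β : ℝ)) := by
        refine norm_integral_le_of_norm_le (ρ.integrable_normed.mul_const _)
          (.of_forall fun t => ?_)
        rw [← mul_sub, norm_mul, norm_of_nonneg (ρ.nonneg_normed t), ← dist_sub_right x y t]
        exact mul_le_mul_of_nonneg_left (hGβ.dist_le _ _) (ρ.nonneg_normed t)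
    _ = K * dist x y ^ (β : ℝ) := by rw [integral_mul_const, ρ.integral_normed, one_mul]

theorem integral_chainKernel_mul_sub (hα : α ∈ Ioo 0 1) (hβ : α < β) (hG : HolderWith K β G)
    (u s : ℝ) :
    ∫ q, chainKernel α u s q * (G q.1 - G q.2)
      = commConst α * rlKernel α (s - u) * (G u - G s) := by
  have hGc : Continuous G := hG.continuous (by exact_mod_cast hα.1.trans hβ)
  let ρ (n : ℕ) : ContDiffBump (0 : ℝ) :=
    ⟨1 / (n + 2), 1 / (n + 1), by positivity, by gcongr; norm_num⟩
  let H (n : ℕ) : ℝ → ℝ := (ρ n).normed volume ⋆[ContinuousLinearMap.lsmul ℝ ℝ, volume] G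
  have hH_holder (n : ℕ) : HolderWith K β (H n) := holderWith_normed_convolution (ρ n) hGc hG
  have hH_lim (x : ℝ) : Filter.Tendsto (H · x) Filter.atTop (𝓝 (G x)) :=
    ContDiffBump.convolution_tendsto_right_of_continuous
      tendsto_one_div_add_atTop_nhds_zero_nat hGc x
  have hleft : Filter.Tendsto (fun n => ∫ q, chainKernel α u s q * (H n q.1 - H n q.2))
      Filter.atTop (𝓝 (∫ q, chainKernel α u s q * (G q.1 - G q.2))) :=
    tendsto_integral_of_dominated_convergence _
      (fun n => (integrable_chainKernel_mul_sub hα.1 hβ (hH_holder n) u s).aestronglyMeasurable)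
      ((integrable_chainKernel_mul_abs_rpow hα.1 hβ u s).const_mul K)
      (fun n => .of_forall (norm_chainKernel_mul_sub_le (hH_holder n) α u s))
      (.of_forall fun q => ((hH_lim q.1).sub (hH_lim q.2)).const_mul _)
  have hright : Filter.Tendsto (fun n => ∫ q, chainKernel α u s q * (H n q.1 - H n q.2))
      Filter.atTop (𝓝 (commConst α * rlKernel α (s - u) * (G u - G s))) := by
    simp only [H,
      integral_chainKernel_mul_sub_of_contDiff hα (contDiff_normed_convolution (ρ _) hGc)]
    exact ((hH_lim u).sub (hH_lim s)).const_mul _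
  exact tendsto_nhds_unique hleft hright

end HolderIdentity

section CommutatorKernel

/-- The kernel `m(t, s) = ∫ (s - v)₊^(α-1) (v - t)₊^(-α-1) (G t - G v) dv` of the correction
operator which makes up for the failure of `G` to commute with fractional integration. -/
noncomputable def commKernel (α : ℝ) (G : ℝ → ℝ) (t s : ℝ) : ℝ :=
  ∫ v, rlKernel α (s - v) * rlKernel (-α) (v - t) * (G t - G v)

variable {α t s : ℝ} {K β : ℝ≥0} {G : ℝ → ℝ}

theorem commKernel_of_le (hst : s ≤ t) (α : ℝ) (G : ℝ → ℝ) : commKernel α G t s = 0 := by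
  simp only [commKernel, rlKernel_sub_mul_eq_zero hst, zero_mul, integral_zero]

theorem stronglyMeasurable_commKernel (α : ℝ) (hG : Continuous G) :
    StronglyMeasurable fun x : ℝ × ℝ => commKernel α G x.1 x.2 := by
  have hmeas : Measurable fun x : (ℝ × ℝ) × ℝ =>
      rlKernel α (x.1.2 - x.2) * rlKernel (-α) (x.2 - x.1.1) * (G x.1.1 - G x.2) := by fun_prop
  exact hmeas.stronglyMeasurable.integral_prod_right'

theorem norm_commKernel_le (hα : 0 < α) (hβ : α < β) (hG : HolderWith K β G) (t s : ℝ) :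
    ‖commKernel α G t s‖ ≤ K * ProbabilityTheory.beta (β - α) α * rlKernel β (s - t) := by
  have hbound (v : ℝ) : ‖rlKernel α (s - v) * rlKernel (-α) (v - t) * (G t - G v)‖
      ≤ K * (rlKernel α (s - v) * rlKernel (β - α) (v - t)) := by
    have hker : 0 ≤ rlKernel α (s - v) * rlKernel (-α) (v - t) :=
      mul_nonneg (rlKernel_nonneg _ _) (rlKernel_nonneg _ _)
    calc ‖rlKernel α (s - v) * rlKernel (-α) (v - t) * (G t - G v)‖
        ≤ rlKernel α (s - v) * rlKernel (-α) (v - t) * (K * |t - v| ^ (β : ℝ)) := by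
          rw [norm_mul, norm_of_nonneg hker]
          exact mul_le_mul_of_nonneg_left (hG.dist_le t v) hker
      _ = K * (rlKernel α (s - v) * rlKernel (β - α) (v - t)) := by
          rw [abs_sub_comm, sub_eq_neg_add (β : ℝ) α, ← rlKernel_mul_abs_rpow]
          ring
  have hint := integrable_rlKernel_sub_mul hα (sub_pos.2 hβ) s t
  refine (norm_integral_le_of_norm_le (hint.const_mul K) (.of_forall hbound)).trans_eq ?_
  rw [integral_const_mul, integral_rlKernel_sub_mul hα (sub_pos.2 hβ), add_sub_cancel, mul_assoc]

theorem integral_rlKernel_mul_commKernel (hα : α ∈ Ioo 0 1) (hβ : α < β) (hG : HolderWith K β G)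
    (u s : ℝ) : ∫ t, rlKernel α (t - u) * commKernel α G t s
      = commConst α * rlKernel α (s - u) * (G u - G s) := by
  have hint := integrable_chainKernel_mul_sub hα.1 hβ hG u s
  rw [← integral_chainKernel_mul_sub hα hβ hG, Measure.volume_eq_prod, integral_prod _ hint]
  simp only [commKernel, chainKernel, mul_assoc, integral_const_mul]

theorem lintegral_enorm_rlKernel_mul_commKernel_le (hα : 0 < α) (hβ : α < β)
    (hG : HolderWith K β G) (u s : ℝ) :
    ∫⁻ t, ‖rlKernel α (t - u) * commKernel α G t s‖ₑ
      ≤ ENNReal.ofReal (K * ProbabilityTheory.beta (β - α) α *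
          (ProbabilityTheory.beta α β * rlKernel (α + β) (s - u))) := by
  have hint := (integrable_rlKernel_sub_mul (hα.trans hβ) hα s u).const_mul
    (K * ProbabilityTheory.beta (β - α) α)
  have hbound (t : ℝ) : ‖rlKernel α (t - u) * commKernel α G t s‖
      ≤ K * ProbabilityTheory.beta (β - α) α * (rlKernel β (s - t) * rlKernel α (t - u)) := by
    rw [norm_mul, norm_of_nonneg (rlKernel_nonneg _ _), mul_comm, ← mul_assoc]
    exact mul_le_mul_of_nonneg_right (norm_commKernel_le hα hβ hG t s) (rlKernel_nonneg _ _)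
  rw [add_comm α, ← integral_rlKernel_sub_mul (hα.trans hβ) hα, ← integral_const_mul,
    ofReal_integral_eq_lintegral_ofReal hint
      (.of_forall fun t => (norm_nonneg _).trans (hbound t))]
  exact lintegral_mono fun t => (ofReal_norm _).symm.trans_le (ENNReal.ofReal_le_ofReal (hbound t))

end CommutatorKernel

section KernelMass

variable {a b s t T α : ℝ}

theorem lintegral_Ioo_comp_sub_right_le (hat : a ≤ t) (f : ℝ → ℝ≥0∞) :
    ∫⁻ s in Ioo a b, f (s - t) ≤ ∫⁻ r in Iio (b - a), f r := by
  rw [← lintegral_indicator measurableSet_Ioo, ← lintegral_indicator measurableSet_Iio,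
    ← lintegral_sub_right_eq_self ((Iio (b - a)).indicator f) t]
  refine lintegral_mono <| indicator_le fun s hs => ?_
  rw [indicator_of_mem (mem_Iio.2 (by linarith [hs.2]))]

theorem lintegral_Ioo_comp_sub_left_le (hsb : s ≤ b) (f : ℝ → ℝ≥0∞) :
    ∫⁻ t in Ioo a b, f (s - t) ≤ ∫⁻ r in Iio (b - a), f r := by
  rw [← lintegral_indicator measurableSet_Ioo, ← lintegral_indicator measurableSet_Iio,
    ← lintegral_sub_left_eq_self ((Iio (b - a)).indicator f) s]
  refine lintegral_mono <| indicator_le fun t ht => ?_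
  rw [indicator_of_mem (mem_Iio.2 (by linarith [ht.1]))]

theorem ae_integrableOn_mul_rlKernel (hα : 0 < α) {h : ℝ → ℝ} (hh : IntegrableOn h (Ioo a b)) :
    ∀ᵐ u ∂volume.restrict (Ioo a b),
      IntegrableOn (fun s => h s * rlKernel α (s - u)) (Ioo a b) := by
  have hmeas : Measurable fun x : ℝ × ℝ => rlKernel α (x.1 - x.2) := by fun_prop
  have hmass := integrableOn_Iio_rlKernel hα (b - a)
  have hprod : Integrable (fun x : ℝ × ℝ => h x.1 * rlKernel α (x.1 - x.2))
      ((volume.restrict (Ioo a b)).prod (volume.restrict (Ioo a b))) := by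
    refine integrable_prod_of_lintegral_enorm_le
      (hh.aestronglyMeasurable.comp_fst.mul hmeas.aestronglyMeasurable)
      (hh.mul_const (∫⁻ r in Iio (b - a), ‖rlKernel α r‖ₑ).toReal)
      (ae_restrict_of_forall_mem measurableSet_Ioo fun s hs => ?_)
    simp only [enorm_mul]
    rw [lintegral_const_mul' _ _ enorm_ne_top, Real.enorm_of_nonneg ENNReal.toReal_nonneg,
      ENNReal.ofReal_toReal hmass.hasFiniteIntegral.ne]
    gcongr ‖h s‖ₑ * ?_
    exact lintegral_Ioo_comp_sub_left_le hs.2.le (fun r => ‖rlKernel α r‖ₑ)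
  exact hprod.prod_left_ae

theorem ae_integrableOn_rpow_neg_mul_rlKernel (hα : 0 < α) {γ : ℝ} (hγ : 0 ≤ γ) {φ : ℝ → ℝ}
    (hφ : IntegrableOn φ (Ioo 0 T)) : ∀ᵐ u ∂volume.restrict (Ioo 0 T),
      IntegrableOn (fun s => s ^ (-γ) * φ s * rlKernel α (s - u)) (Ioo u T) := by
  filter_upwards [ae_integrableOn_mul_rlKernel hα hφ, ae_restrict_mem measurableSet_Ioo]
    with u hint hu
  simp only [mul_assoc]
  refine (hint.mono_set (Ioo_subset_Ioo_left hu.1.le)).bdd_mul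
    (by fun_prop) (c := u ^ (-γ)) (ae_restrict_of_forall_mem measurableSet_Ioo fun s hs => ?_)
  rw [norm_of_nonneg (rpow_nonneg (hu.1.trans hs.1).le _)]
  exact rpow_le_rpow_of_nonpos hu.1 hs.1.le (neg_nonpos.2 hγ)

end KernelMass

section CommutationFormula

/-- The correction operator with kernel `commKernel α G` on the interval with right end point `T`:
multiplication by `G` applied to a fractional integral of order `α` is the fractional integral of
`G h + (commConst α)⁻¹ commTerm T α G h`. -/
noncomputable def commTerm (T α : ℝ) (G h : ℝ → ℝ) (t : ℝ) : ℝ :=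
  ∫ s in Ioo t T, h s * commKernel α G t s

variable {T α t u : ℝ} {K β : ℝ≥0} {G h : ℝ → ℝ}

theorem commTerm_eq_setIntegral (T α : ℝ) (G h : ℝ → ℝ) (hut : u ≤ t) :
    commTerm T α G h t = ∫ s in Ioo u T, h s * commKernel α G t s := by
  refine (setIntegral_eq_of_subset_of_forall_sdiff_eq_zero measurableSet_Ioo
    (Ioo_subset_Ioo_left hut) fun s hs => ?_).symm
  rw [commKernel_of_le (not_lt.1 fun hts => hs.2 ⟨hts, hs.1.2⟩), mul_zero]

theorem norm_rpow_mul_rpow_neg_mul_commKernel_le (hα : 0 < α) (hβ : α < β)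
    (hG : HolderWith K β G) {γ s : ℝ} (hγ : 0 ≤ γ) (ht : 0 < t) :
    ‖t ^ γ * s ^ (-γ) * commKernel α G t s‖
      ≤ ‖K * ProbabilityTheory.beta (β - α) α * rlKernel β (s - t)‖ := by
  rcases le_or_gt s t with hst | hts
  · simp only [commKernel_of_le hst, mul_zero, norm_zero, norm_nonneg]
  · have hweight : t ^ γ * s ^ (-γ) ≤ 1 := by
      rw [rpow_neg (ht.trans hts).le]
      exact mul_inv_le_one_of_le₀ (rpow_le_rpow ht.le hts.le hγ) (rpow_nonneg (ht.trans hts).le _)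
    have hnonneg : 0 ≤ t ^ γ * s ^ (-γ) :=
      mul_nonneg (rpow_nonneg ht.le _) (rpow_nonneg (ht.trans hts).le _)
    rw [norm_mul, norm_of_nonneg hnonneg]
    exact (mul_le_of_le_one_left (norm_nonneg _) hweight).trans
      ((norm_commKernel_le hα hβ hG t s).trans (le_norm_self _))

theorem memLp_rpow_mul_commTerm (hα : 0 < α) (hβ : α < β) (hG : HolderWith K β G) {γ : ℝ}
    (hγ : 0 ≤ γ) {p : ℝ≥0∞} (hp : 1 ≤ p) (hp_top : p ≠ ∞) {φ : ℝ → ℝ}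
    (hφ : MemLp φ p (volume.restrict (Ioo 0 T))) :
    MemLp (fun t => t ^ γ * commTerm T α G (fun s => s ^ (-γ) * φ s) t) p
      (volume.restrict (Ioo 0 T)) := by
  have hβ0 : (0 : ℝ) < β := hα.trans hβ
  have hGc : Continuous G := hG.continuous (by exact_mod_cast hβ0)
  have hmass : ∫⁻ r in Iio (T - 0), ‖K * ProbabilityTheory.beta (β - α) α * rlKernel β r‖ₑ ≠ ∞ :=
    ((integrableOn_Iio_rlKernel hβ0 (T - 0)).const_mul _).hasFiniteIntegral.ne
  have hker : Measurable fun x : ℝ × ℝ => x.1 ^ γ * x.2 ^ (-γ) * commKernel α G x.1 x.2 :=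
    ((measurable_fst.pow_const γ).mul (measurable_snd.pow_const (-γ))).mul
      (stronglyMeasurable_commKernel α hGc).measurable
  have hbound {t : ℝ} (ht : 0 < t) (s : ℝ) := enorm_le_iff_norm_le.2
    (norm_rpow_mul_rpow_neg_mul_commKernel_le hα hβ hG (s := s) hγ ht)
  refine (memLp_integral_mul_of_lintegral_enorm_le hp hp_top hmass hmass
    hker.aestronglyMeasurable ?_ ?_ hφ).ae_eq ?_
  · refine ae_restrict_of_forall_mem measurableSet_Ioo fun t ht => ?_
    exact (lintegral_mono (hbound ht.1)).trans (lintegral_Ioo_comp_sub_right_le ht.1.le _)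
  · refine ae_restrict_of_forall_mem measurableSet_Ioo fun s hs => ?_
    exact (setLIntegral_mono' measurableSet_Ioo fun t ht => hbound ht.1 s).trans
      (lintegral_Ioo_comp_sub_left_le hs.2.le _)
  · refine ae_restrict_of_forall_mem measurableSet_Ioo fun t ht => ?_
    simp only [commTerm_eq_setIntegral T α G _ ht.1.le, ← integral_const_mul]
    exact integral_congr_ae (.of_forall fun s => by ring)

theorem fracInt_eq_setIntegral_rlKernel (T α : ℝ) (h : ℝ → ℝ) (u : ℝ) :
    fracInt T α h u = 1 / Gamma α * ∫ s in Ioo u T, h s * rlKernel α (s - u) := by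
  rw [fracInt]
  congr 1
  refine setIntegral_congr_fun measurableSet_Ioo fun s hs => ?_
  rw [rlKernel_of_pos (sub_pos.2 hs.1)]

theorem aestronglyMeasurable_of_integrableOn_mul_rlKernel
    (hh : IntegrableOn (fun s => h s * rlKernel α (s - u)) (Ioo u T)) :
    AEStronglyMeasurable h (volume.restrict (Ioo u T)) := by
  have hker : Measurable fun s => (rlKernel α (s - u))⁻¹ := by fun_prop
  refine (hh.aestronglyMeasurable.mul hker.aestronglyMeasurable).congr
    (ae_restrict_of_forall_mem measurableSet_Ioo fun s hs => mul_inv_cancel_right₀ ?_ _)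
  rw [rlKernel_of_pos (sub_pos.2 hs.1)]
  exact (rpow_pos_of_pos (sub_pos.2 hs.1) _).ne'

theorem integrable_mul_rlKernel_mul_commKernel (hα : 0 < α) (hβ : α < β) (hG : HolderWith K β G)
    (hh : IntegrableOn (fun s => h s * rlKernel α (s - u)) (Ioo u T)) :
    Integrable (fun x : ℝ × ℝ => h x.1 * (rlKernel α (x.2 - u) * commKernel α G x.2 x.1))
      ((volume.restrict (Ioo u T)).prod (volume.restrict (Ioo u T))) := by
  have hβ0 : (0 : ℝ) < β := hα.trans hβ
  have hGc : Continuous G := hG.continuous (by exact_mod_cast hβ0)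
  have hker : Measurable fun x : ℝ × ℝ => rlKernel α (x.2 - u) * commKernel α G x.2 x.1 :=
    ((measurable_rlKernel α).comp (measurable_snd.sub_const u)).mul
      ((stronglyMeasurable_commKernel α hGc).measurable.comp measurable_swap)
  have hbeta₁ := ProbabilityTheory.beta_pos (sub_pos.2 hβ) hα
  have hbeta₂ := ProbabilityTheory.beta_pos hα hβ0
  refine integrable_prod_of_lintegral_enorm_le
    ((aestronglyMeasurable_of_integrableOn_mul_rlKernel hh).comp_fst.mul hker.aestronglyMeasurable)
    (hh.mul_const (K * ProbabilityTheory.beta (β - α) α *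
      (ProbabilityTheory.beta α β * (T - u) ^ (β : ℝ))))
    (ae_restrict_of_forall_mem measurableSet_Ioo fun s hs => ?_)
  have hsu : 0 < s - u := sub_pos.2 hs.1
  have : 0 ≤ T - u := hsu.le.trans (by linarith [hs.2])
  have hdist : |s - u| ^ (β : ℝ) ≤ (T - u) ^ (β : ℝ) := by
    rw [abs_of_pos hsu]
    exact rpow_le_rpow hsu.le (by linarith [hs.2]) hβ0.le
  simp only [enorm_mul (h s)]
  rw [lintegral_const_mul' _ _ enorm_ne_top, mul_assoc, enorm_mul (h s)]
  gcongr ‖h s‖ₑ * ?_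
  refine (setLIntegral_le_lintegral _ _).trans
    ((lintegral_enorm_rlKernel_mul_commKernel_le hα hβ hG u s).trans
      ((ENNReal.ofReal_le_ofReal ?_).trans (Real.ofReal_le_enorm _)))
  rw [← rlKernel_mul_abs_rpow, mul_left_comm (rlKernel α (s - u)),
    mul_left_comm (rlKernel α (s - u))]
  have := rlKernel_nonneg α (s - u)
  gcongr

theorem setIntegral_mul_rlKernel_mul_commKernel (h : ℝ → ℝ) {t : ℝ} (hut : u ≤ t) :
    ∫ s in Ioo u T, h s * (rlKernel α (t - u) * commKernel α G t s)
      = commTerm T α G h t * rlKernel α (t - u) := by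
  rw [commTerm_eq_setIntegral T α G h hut, ← integral_mul_const]
  exact integral_congr_ae (.of_forall fun s => by ring)

theorem integrableOn_commTerm_mul_rlKernel (hα : 0 < α) (hβ : α < β) (hG : HolderWith K β G)
    (hh : IntegrableOn (fun s => h s * rlKernel α (s - u)) (Ioo u T)) :
    IntegrableOn (fun t => commTerm T α G h t * rlKernel α (t - u)) (Ioo u T) :=
  (integrable_mul_rlKernel_mul_commKernel hα hβ hG hh).integral_prod_right.congr
    (ae_restrict_of_forall_mem measurableSet_Ioo fun _ ht =>
      setIntegral_mul_rlKernel_mul_commKernel h ht.1.le)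

theorem setIntegral_commTerm_mul_rlKernel (hα : α ∈ Ioo 0 1) (hβ : α < β) (hG : HolderWith K β G)
    (hh : IntegrableOn (fun s => h s * rlKernel α (s - u)) (Ioo u T)) :
    ∫ t in Ioo u T, commTerm T α G h t * rlKernel α (t - u)
      = commConst α * ∫ s in Ioo u T, (G u - G s) * (h s * rlKernel α (s - u)) := by
  have hinner {s : ℝ} (hs : s ∈ Ioo u T) :
      ∫ t in Ioo u T, h s * (rlKernel α (t - u) * commKernel α G t s)
        = commConst α * ((G u - G s) * (h s * rlKernel α (s - u))) := by
    rw [integral_const_mul, setIntegral_eq_integral_of_forall_compl_eq_zero,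
      integral_rlKernel_mul_commKernel hα hβ hG]
    · ring
    · intro t ht
      rcases le_or_gt t u with htu | hut
      · rw [rlKernel_of_nonpos (sub_nonpos.2 htu), zero_mul]
      · rw [commKernel_of_le (hs.2.le.trans (not_lt.1 fun htT => ht ⟨hut, htT⟩)), mul_zero]
  calc ∫ t in Ioo u T, commTerm T α G h t * rlKernel α (t - u)
      = ∫ t in Ioo u T, ∫ s in Ioo u T, h s * (rlKernel α (t - u) * commKernel α G t s) :=
        setIntegral_congr_fun measurableSet_Ioo fun t ht =>
          (setIntegral_mul_rlKernel_mul_commKernel h ht.1.le).symm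
    _ = ∫ s in Ioo u T, ∫ t in Ioo u T, h s * (rlKernel α (t - u) * commKernel α G t s) :=
        (integral_integral_swap (integrable_mul_rlKernel_mul_commKernel hα.1 hβ hG hh)).symm
    _ = commConst α * ∫ s in Ioo u T, (G u - G s) * (h s * rlKernel α (s - u)) := by
        rw [← integral_const_mul]
        exact setIntegral_congr_fun measurableSet_Ioo fun s hs => hinner hs

theorem mul_fracInt (hα : α ∈ Ioo 0 1) (hβ : α < β) (hG : HolderWith K β G)
    (hh : IntegrableOn (fun s => h s * rlKernel α (s - u)) (Ioo u T)) :
    G u * fracInt T α h u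
      = fracInt T α (fun s => G s * h s + (commConst α)⁻¹ * commTerm T α G h s) u := by
  have hGc : Continuous G := hG.continuous (by exact_mod_cast hα.1.trans hβ)
  have hGh : IntegrableOn (fun s => G s * (h s * rlKernel α (s - u))) (Ioo u T) :=
    .continuousOn_mul_of_subset hGc.continuousOn hh isCompact_Icc measurableSet_Ioo
      Ioo_subset_Icc_self
  have hcomm := integrableOn_commTerm_mul_rlKernel hα.1 hβ hG hh
  rw [fracInt_eq_setIntegral_rlKernel, fracInt_eq_setIntegral_rlKernel, mul_left_comm]
  congr 1
  simp only [add_mul, mul_assoc]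
  rw [integral_add hGh (hcomm.const_mul _), integral_const_mul,
    setIntegral_commTerm_mul_rlKernel hα hβ hG hh, inv_mul_cancel_left₀ (commConst_pos hα).ne']
  simp only [sub_mul]
  rw [integral_sub (hh.const_mul _) hGh, integral_const_mul, add_sub_cancel]

end CommutationFormula

section HolderMultiplier

theorem holderWith_comp_projIcc {X : Type*} [PseudoEMetricSpace X] {a b : ℝ} (hab : a ≤ b)
    {C r : ℝ≥0} {g : ℝ → X} (hg : HolderOnWith C r g (Icc a b)) :
    HolderWith C r fun x => g (projIcc a b hab x) := by
  have hproj : HolderWith 1 1 fun x => (projIcc a b hab x : ℝ) :=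
    holderWith_one.2 (LipschitzWith.projIcc hab)
  simpa only [NNReal.one_rpow, mul_one, Function.comp_def] using
    hg.comp_holderWith hproj fun x => (projIcc a b hab x).2

variable {T α : ℝ} {f φ : ℝ → ℝ}

theorem memLambda_mul_of_holderWith (hα : α ∈ Ioo 0 1) {K β : ℝ≥0} (hβ : α < β) {G : ℝ → ℝ}
    (hG : HolderWith K β G) (hf : memLambda T α f φ) :
    memLambda T α (fun u => G u * f u) fun s => G s * φ s +
      (commConst α)⁻¹ * (s ^ α * commTerm T α G (fun r => r ^ (-α) * φ r) s) := by
  obtain ⟨hφ, hfφ⟩ := hf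
  have hGc : Continuous G := hG.continuous (by exact_mod_cast hα.1.trans hβ)
  obtain ⟨C, hC⟩ := isCompact_Icc.exists_bound_of_continuousOn (s := Icc 0 T) hGc.continuousOn
  have hGφ : MemLp (fun s => G s * φ s) 2 (volume.restrict (Icc 0 T)) :=
    hφ.of_le_mul (hGc.aestronglyMeasurable.mul hφ.1) (c := C)
      (ae_restrict_of_forall_mem measurableSet_Icc fun s hs => by
        rw [norm_mul]
        exact mul_le_mul_of_nonneg_right (hC s hs) (norm_nonneg _))
  rw [← restrict_Ioo_eq_restrict_Icc] at hφ hfφ hGφ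
  rw [memLambda, ← restrict_Ioo_eq_restrict_Icc]
  refine ⟨hGφ.add ((memLp_rpow_mul_commTerm hα.1 hβ hG hα.1.le one_le_two
    ENNReal.ofNat_ne_top hφ).const_mul _), ?_⟩
  filter_upwards [hfφ, ae_restrict_mem measurableSet_Ioo,
    ae_integrableOn_rpow_neg_mul_rlKernel hα.1 hα.1.le (hφ.integrable one_le_two)]
    with u hfu hu hint
  rw [hfu, mul_left_comm, mul_fracInt hα hβ hG hint, fracInt, fracInt]
  congr 2
  refine setIntegral_congr_fun measurableSet_Ioo fun s hs => ?_
  have hs0 : 0 < s := hu.1.trans hs.1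
  have hcancel : s ^ (-α) * s ^ α = 1 := by rw [← rpow_add hs0, neg_add_cancel, rpow_zero]
  linear_combination (-(s - u) ^ (α - 1) * (commConst α)⁻¹ *
    commTerm T α G (fun r => r ^ (-α) * φ r) s) * hcancel

theorem holder_mul_memLambda_general (T α β : ℝ) (hT : 0 < T) (hα : α ∈ Ioo (0 : ℝ) 1)
    (hβ : α < β) (f φ : ℝ → ℝ) (hf : memLambda T α f φ) (g : ℝ → ℝ) (K : ℝ)
    (hg : ∀ s ∈ Icc (0 : ℝ) T, ∀ t ∈ Icc (0 : ℝ) T, |g s - g t| ≤ K * |s - t| ^ β) :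
    ∃ ψ : ℝ → ℝ, memLambda T α (fun u => g u * f u) ψ := by
  have hβ0 : 0 ≤ β := (hα.1.trans hβ).le
  have hgβ : HolderOnWith K.toNNReal β.toNNReal g (Icc 0 T) :=
    holderOnWith_of_dist_le fun s hs t ht => by
      rw [Real.coe_toNNReal β hβ0, Real.dist_eq, Real.dist_eq]
      exact (hg s hs t ht).trans
        (mul_le_mul_of_nonneg_right (Real.le_coe_toNNReal K) (rpow_nonneg (abs_nonneg _) _))
  obtain ⟨hψ, hψ_eq⟩ := memLambda_mul_of_holderWith hα (by rwa [Real.coe_toNNReal β hβ0])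
    (holderWith_comp_projIcc hT.le hgβ) hf
  refine ⟨_, hψ, ?_⟩
  filter_upwards [hψ_eq, ae_restrict_mem measurableSet_Icc] with u hu hu_mem
  rwa [projIcc_of_mem hT.le hu_mem] at hu

end HolderMultiplier

/-- Lemma 2.4: if `f ∈ Λ^α_T` and `g : [0,T] → ℝ` is Hölder continuous with exponent
`β > α`, then `g·f ∈ Λ^α_T`. -/
theorem holder_mul_memLambda (T α β : ℝ) (hT : 0 < T)
    (hα : α ∈ Set.Ioo (0 : ℝ) (1 / 2)) (hβ : α < β)
    (f φ : ℝ → ℝ) (hf : memLambda T α f φ)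
    (g : ℝ → ℝ) (K : ℝ)
    (hg : ∀ s ∈ Set.Icc (0 : ℝ) T, ∀ t ∈ Set.Icc (0 : ℝ) T, |g s - g t| ≤ K * |s - t| ^ β) :
    ∃ ψ : ℝ → ℝ, memLambda T α (fun u => g u * f u) ψ :=
  holder_mul_memLambda_general T α β hT ⟨hα.1, hα.2.trans one_half_lt_one⟩ hβ f φ hf g K hg
end
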